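/- Suppose char(k) = 0 and let Δ be a homology (d−1)-sphere over k having the weak Lefschetz property. If h_{r−1}(Δ) = h_r(Δ) for some r ≤ d/2, then Δ(r−1) is a homology d-ball over k whose boundary complex equals Δ. -/

import Mathlib

open Finset

variable {V : Type*} [DecidableEq V] [Fintype V]

/-- A (possibly empty) simplicial complex on the vertex set `V`,
given as its set of faces: a collection of finite subsets of `V`
closed under taking subsets. -/
def IsComplex (Δ : Set (Finset V)) : Prop :=
  ∀ F ∈ Δ, ∀ G ⊆ F, G ∈ Δ

/-- `skc Δ i` is the complex `Δ(i) = {F ⊆ V : skelᵢ(2^F) ⊆ Δ}`: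
all subsets `F` of `V` all of whose subsets of cardinality at most `i+1`
are faces of `Δ`. -/
def skc (Δ : Set (Finset V)) (i : ℕ) : Set (Finset V) :=
  {F | ∀ G ⊆ F, G.card ≤ i + 1 → G ∈ Δ}

/-- The `k`-skeleton of a complex: faces of cardinality at most `k+1`. -/
def skel (Δ : Set (Finset V)) (k : ℕ) : Set (Finset V) :=
  {F ∈ Δ | F.card ≤ k + 1}

/-- A missing face of `Δ`: a non-face all of whose proper subsets are faces. -/
def IsMissingFace (Δ : Set (Finset V)) (F : Finset V) : Prop :=
  F ∉ Δ ∧ ∀ G ⊂ F, G ∈ Δ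

/-- The link of a face. -/
def link (Δ : Set (Finset V)) (F : Finset V) : Set (Finset V) :=
  {G | Disjoint F G ∧ F ∪ G ∈ Δ}

/-- `numFacesCard Δ j` is `f_{j-1}(Δ)`, the number of faces of `Δ` of
cardinality `j`. -/
noncomputable def numFacesCard (Δ : Set (Finset V)) (j : ℕ) : ℕ :=
  {F : Finset V | F ∈ Δ ∧ F.card = j}.ncard

/-- The `h`-numbers of a `(d-1)`-dimensional complex:
`h_i = ∑_{j=0}^{i} (-1)^{i-j} C(d-j, i-j) f_{j-1}`. -/
noncomputable def hVec (Δ : Set (Finset V)) (d i : ℕ) : ℤ :=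
  ∑ j ∈ Finset.range (i + 1),
    (-1 : ℤ) ^ (i - j) * ((d - j).choose (i - j)) * (numFacesCard Δ j)

/- ### Reduced simplicial homology over a field -/

section Homology

variable (𝕜 : Type*) [Field 𝕜] [LinearOrder V]

/-- Simplicial chains supported on a given set of finite subsets of `V`. -/
def chainsOn (A : Set (Finset V)) : Submodule 𝕜 (Finset V → 𝕜) where
  carrier := {f | ∀ G, f G ≠ 0 → G ∈ A}
  zero_mem' := by intro G hG; simp at hG
  add_mem' := by
    intro f g hf hg G hG
    by_cases h : f G = 0
    · exact hg G (by simpa [h] using hG)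
    · exact hf G h
  smul_mem' := by
    intro c f hf G hG
    exact hf G (by intro h; simp [h] at hG)

/-- The boundary operator of the (augmented) simplicial chain complex on the
full simplex on `V`: `∂(e_F) = ∑_{v ∈ F} (-1)^{pos of v in F} e_{F \ v}`,
written in the dual form `(∂ f) G = ∑_{v ∉ G} (-1)^{#{u ∈ G : u < v}} f (G ∪ {v})`.
The augmentation is included (singletons map onto the empty-set generator),
so the homology computed below is reduced homology. -/
noncomputable def bdryMap : (Finset V → 𝕜) →ₗ[𝕜] (Finset V → 𝕜) where
  toFun f := fun G => ∑ v ∈ Gᶜ,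
    ((-1 : 𝕜) ^ ((G.filter (fun u => u < v)).card)) * f (insert v G)
  map_add' f g := by
    funext G
    simp [mul_add, Finset.sum_add_distrib]
  map_smul' c f := by
    funext G
    simp [Finset.mul_sum]
    congr 1; funext v; ring

/-- Reduced cycles of `Δ` in cardinality `c` (i.e. dimension `c-1`). -/
noncomputable def redCycles (Δ : Set (Finset V)) (c : ℕ) :
    Submodule 𝕜 (Finset V → 𝕜) :=
  (chainsOn 𝕜 {F | F ∈ Δ ∧ F.card = c}) ⊓ LinearMap.ker (bdryMap 𝕜)

/-- Reduced boundaries of `Δ` in cardinality `c`. -/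
noncomputable def redBdries (Δ : Set (Finset V)) (c : ℕ) :
    Submodule 𝕜 (Finset V → 𝕜) :=
  Submodule.map (bdryMap 𝕜) (chainsOn 𝕜 {F | F ∈ Δ ∧ F.card = c + 1})

/-- `redH 𝕜 Δ c` is the reduced simplicial homology `H̃_{c-1}(Δ; 𝕜)`
(indexed by the cardinality `c` of faces rather than the dimension `c-1`). -/
noncomputable def redH (Δ : Set (Finset V)) (c : ℕ) : Type _ :=
  ↥(redCycles 𝕜 Δ c) ⧸
    Submodule.comap (redCycles 𝕜 Δ c).subtype (redBdries 𝕜 Δ c)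

noncomputable instance (Δ : Set (Finset V)) (c : ℕ) :
    AddCommGroup (redH 𝕜 Δ c) := by
  unfold redH; infer_instance

noncomputable instance (Δ : Set (Finset V)) (c : ℕ) :
    Module 𝕜 (redH 𝕜 Δ c) := by
  unfold redH; infer_instance

/-- `Δ` is a homology `n`-sphere over `𝕜`: it is an `n`-dimensional complex
such that for every face `F` (including `∅`) the reduced homology of the
link of `F` is that of a sphere of dimension `n - #F`, i.e.
`H̃_{c-1}(lk F) = 𝕜` if `c = n + 1 - #F` and `0` otherwise. -/
def IsHomologySphere (Δ : Set (Finset V)) (n : ℕ) : Prop :=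
  IsComplex Δ ∧ (∀ F ∈ Δ, F.card ≤ n + 1) ∧ (∃ F ∈ Δ, F.card = n + 1) ∧
  ∀ F ∈ Δ, ∀ c : ℕ,
    Module.finrank 𝕜 (redH 𝕜 (link Δ F) c) =
      if c + F.card = n + 1 then 1 else 0

/-- The boundary faces of a `d`-dimensional homology ball:
those faces `F` whose link has vanishing top reduced homology. -/
def bdryFaces (Δ : Set (Finset V)) (d : ℕ) : Set (Finset V) :=
  {F | F ∈ Δ ∧
    Module.finrank 𝕜 (redH 𝕜 (link Δ F) (d + 1 - F.card)) = 0}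

/-- `Δ` is a homology `d`-ball over `𝕜`: a `d`-dimensional complex all of
whose links have reduced homology vanishing except possibly in the top
dimension `d - #F`, where it is `𝕜` or `0`, and whose boundary complex is
a homology `(d-1)`-sphere. -/
def IsHomologyBall (Δ : Set (Finset V)) (d : ℕ) : Prop :=
  IsComplex Δ ∧ (∀ F ∈ Δ, F.card ≤ d + 1) ∧ (∃ F ∈ Δ, F.card = d + 1) ∧
  (∀ F ∈ Δ, ∀ c : ℕ,
    (c + F.card = d + 1 → Module.finrank 𝕜 (redH 𝕜 (link Δ F) c) ≤ 1) ∧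
    (c + F.card ≠ d + 1 → Module.finrank 𝕜 (redH 𝕜 (link Δ F) c) = 0)) ∧
  IsHomologySphere 𝕜 (bdryFaces 𝕜 Δ d) (d - 1)

/-- A homology `d`-ball is `(r-1)`-stacked if it has no interior faces of
dimension at most `d - r`, i.e. every interior face has cardinality at
least `d - r + 2`. -/
def IsStackedBall (Δ : Set (Finset V)) (d r : ℕ) : Prop :=
  IsHomologyBall 𝕜 Δ d ∧
  ∀ F ∈ Δ, F ∉ bdryFaces 𝕜 Δ d → d - r + 2 ≤ F.card

end Homology

/- ### Graded commutative algebra over polynomial rings, following the paper's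
definitions of l.s.o.p., Krull dimension, regular sequences, Cohen–Macaulayness,
the weak Lefschetz property, Hilbert series and `h`-vectors. -/

section Ring

variable (𝕜 : Type*) [Field 𝕜] {σ : Type*} [Fintype σ] [DecidableEq σ]

open MvPolynomial

/-- The Stanley–Reisner ideal `I_Δ` of a complex `Δ` on the vertex set `σ`:
the ideal generated by the squarefree monomials `x_F` for non-faces `F`. -/
noncomputable def SRideal (Δ : Set (Finset σ)) : Ideal (MvPolynomial σ 𝕜) :=
  Ideal.span {m | ∃ F : Finset σ, F ∉ Δ ∧ m = ∏ v ∈ F, MvPolynomial.X v}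

/-- `idealLE I m` is `I_{≤ m}`, the ideal generated by the elements of `I`
of degree at most `m`. -/
noncomputable def idealLE (I : Ideal (MvPolynomial σ 𝕜)) (m : ℕ) :
    Ideal (MvPolynomial σ 𝕜) :=
  Ideal.span {f | f ∈ I ∧ f.totalDegree ≤ m}

/-- The degree-`i` graded piece of `S/I`: the image of the space of
homogeneous polynomials of degree `i` in the quotient. -/
noncomputable def quotPiece (I : Ideal (MvPolynomial σ 𝕜)) (i : ℕ) :
    Submodule 𝕜 ((MvPolynomial σ 𝕜) ⧸ I) :=
  Submodule.map (Ideal.Quotient.mkₐ 𝕜 I).toLinearMap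
    (MvPolynomial.homogeneousSubmodule σ 𝕜 i)

/-- The Hilbert function of `S/I`. -/
noncomputable def hilb (I : Ideal (MvPolynomial σ 𝕜)) (i : ℕ) : ℕ :=
  Module.finrank 𝕜 (quotPiece 𝕜 I i)

/-- `θ` is a linear system of parameters for `S/I`: a sequence of linear
forms such that `S/(I + (θ))` is a finite dimensional `𝕜`-vector space. -/
def IsLsop (I : Ideal (MvPolynomial σ 𝕜)) {m : ℕ}
    (θ : Fin m → MvPolynomial σ 𝕜) : Prop :=
  (∀ i, θ i ∈ MvPolynomial.homogeneousSubmodule σ 𝕜 1) ∧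
    FiniteDimensional 𝕜
      ((MvPolynomial σ 𝕜) ⧸ (I ⊔ Ideal.span (Set.range θ)))

/-- The Krull dimension of `S/I`, defined (as in the paper) as the minimal
length of a linear system of parameters. -/
noncomputable def ringDim (I : Ideal (MvPolynomial σ 𝕜)) : ℕ :=
  sInf {m | ∃ θ : Fin m → MvPolynomial σ 𝕜, IsLsop 𝕜 I θ}

/-- `θ` is a regular sequence on `S/I`: each `θ i` is a nonzerodivisor on
`S/(I + (θ_0, …, θ_{i-1}))`. -/
def IsRegSeq (I : Ideal (MvPolynomial σ 𝕜)) {m : ℕ}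
    (θ : Fin m → MvPolynomial σ 𝕜) : Prop :=
  ∀ i : Fin m, ∀ g : MvPolynomial σ 𝕜,
    θ i * g ∈ I ⊔ Ideal.span (θ '' {j | j < i}) →
      g ∈ I ⊔ Ideal.span (θ '' {j | j < i})

/-- `S/I` is Cohen–Macaulay of Krull dimension `d`: the dimension is `d`,
and every l.s.o.p. is a regular sequence. -/
def IsCMdim (I : Ideal (MvPolynomial σ 𝕜)) (d : ℕ) : Prop :=
  ringDim 𝕜 I = d ∧
  ∀ θ : Fin d → MvPolynomial σ 𝕜, IsLsop 𝕜 I θ → IsRegSeq 𝕜 I θ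

/-- An Artinian quotient `S/I` has the weak Lefschetz property: there is a
linear form `w` such that multiplication `×w : (S/I)_m → (S/I)_{m+1}` is
injective or surjective for every `m`. -/
def HasWLP0 (I : Ideal (MvPolynomial σ 𝕜)) : Prop :=
  ∃ w : MvPolynomial σ 𝕜, w ∈ MvPolynomial.homogeneousSubmodule σ 𝕜 1 ∧
    ∀ m : ℕ,
      (∀ f ∈ quotPiece 𝕜 I m, Ideal.Quotient.mk I w * f = 0 → f = 0) ∨
      (∀ g ∈ quotPiece 𝕜 I (m+1), ∃ f ∈ quotPiece 𝕜 I m,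
        Ideal.Quotient.mk I w * f = g)

/-- `S/I` has the weak Lefschetz property (in dimension `d`): it is
Cohen–Macaulay of dimension `d` and there is an l.s.o.p. `Θ` such that
`S/(I + (Θ))` has the (Artinian) weak Lefschetz property. -/
def HasWLP (I : Ideal (MvPolynomial σ 𝕜)) (d : ℕ) : Prop :=
  IsCMdim 𝕜 I d ∧
  ∃ θ : Fin d → MvPolynomial σ 𝕜, IsLsop 𝕜 I θ ∧
    HasWLP0 𝕜 (I ⊔ Ideal.span (Set.range θ))

/-- `(h 0, h 1, …)` is the `h`-vector of `S/I` (where `d = dim S/I`), i.e.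
`H(S/I, t)·(1-t)^d = ∑ᵢ hᵢ tⁱ` as formal power series, expressed by
comparing coefficients. -/
def HasHVector (I : Ideal (MvPolynomial σ 𝕜)) (d : ℕ) (h : ℕ → ℤ) : Prop :=
  ∀ m : ℕ, h m = ∑ j ∈ Finset.range (d + 1),
    if j ≤ m then (-1 : ℤ) ^ j * (d.choose j) * (hilb 𝕜 I (m - j)) else 0

/-- `I` is a homogeneous ideal. -/
def IsHomogIdeal (I : Ideal (MvPolynomial σ 𝕜)) : Prop :=
  ∀ f ∈ I, ∀ i : ℕ, MvPolynomial.homogeneousComponent i f ∈ I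

end Ring

/-!
Let `Γ = Δ(r-1)`, and let `J ⊆ I` be the face ideals of `Γ ⊇ Δ`, so that `J` is the part of `I`
generated in degrees at most `r`. Modulo a linear system of parameters `Θ` the Hilbert function of
`𝕜[Δ]` is the `h`-vector, which is symmetric by the Dehn–Sommerville relations. As `h_{r-1} = h_r`,
a Lefschetz element `w` is surjective from degree `r-1` on, so the Hilbert function is constant on
`[r-1, d-r+1]` and `w` is injective in degrees at most `d-r`. Thus the `d+1` linear forms `Θ, w`
act injectively on `𝕜[Δ]` in low degrees and together kill degree `r`.

Induction along these forms, in which characteristic zero enters through Euler's formula, carries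
this information over to `J`: the ideals `I` and `J` agree up to degree `d-r+1`, and the Koszul
complex of `𝕜[Γ]` is exact in polynomial degrees at least `r`. Read in squarefree multidegrees, as
in Hochster's formula, exactness says that `Γ` and its vertex deletions have no homology at faces
of cardinality at least `r`. On faces of cardinality at most `d-r+1` the complexes `Γ` and `Δ`
coincide, and above that the deletion from the sphere `Δ` of the vertices of a face of `Γ` is
acyclic as well. Hence such deletions of the pair `(Γ, Δ)` have no relative homology at all, and
this forces the relative homology of `(Γ, Δ)`, and of all its links, to be that of a ball and its
boundary.
-/

/-! ### Contraction and wedge operators -/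

section Operators

variable {R : Type*} [CommRing R] {U : Type*} [LinearOrder U] {M : Type*} [AddCommGroup M]
  [Module R M]

/-- The incidence sign `(-1) ^ #{u ∈ G | u < v}` of the vertex `v` relative to `G`, as it occurs
in `bdryMap`. -/
def incSign (R : Type*) [CommRing R] (v : U) (G : Finset U) : R :=
  (-1) ^ #{u ∈ G | u < v}

@[simp]
lemma incSign_mul_self (v : U) (G : Finset U) : incSign R v G * incSign R v G = 1 := by
  rw [incSign, ← mul_pow, neg_one_mul, neg_neg, one_pow]

lemma isUnit_incSign (v : U) (G : Finset U) : IsUnit (incSign R v G) :=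
  .of_mul_eq_one _ (incSign_mul_self v G)

lemma incSign_insert {u v : U} {G : Finset U} (hv : v ∉ G) :
    incSign R u (insert v G) = (if v < u then -1 else 1) * incSign R u G := by
  rw [incSign, incSign, filter_insert]
  split_ifs
  · rw [card_insert_of_notMem (by simp [hv]), pow_succ']
  · rw [one_mul]

lemma incSign_mul_incSign_insert {u v : U} {G : Finset U} (huv : u ≠ v) (hu : u ∉ G)
    (hv : v ∉ G) :
    incSign R v G * incSign R u (insert v G) = -(incSign R u G * incSign R v (insert u G)) := by
  rw [incSign_insert hu, incSign_insert hv]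
  rcases huv.lt_or_gt with h | h <;> simp only [h, h.not_gt, if_true, if_false] <;> ring

lemma incSign_insert_mul_incSign_insert {u v : U} {G : Finset U} (huv : u ≠ v) (hu : u ∉ G)
    (hv : v ∉ G) :
    incSign R v (insert u G) * incSign R u (insert v G) = -(incSign R u G * incSign R v G) := by
  rw [incSign_insert hu, incSign_insert hv]
  rcases huv.lt_or_gt with h | h <;> simp only [h, h.not_gt, if_true, if_false] <;> ring

lemma incSign_union {v : U} {G H : Finset U} (hGH : Disjoint G H) :
    incSign R v (G ∪ H) = incSign R v G * incSign R v H := by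
  rw [incSign, filter_union, card_union_of_disjoint (disjoint_filter_filter hGH), pow_add,
    incSign, incSign]

lemma incSign_erase_self (v : U) (G : Finset U) : incSign R v (G.erase v) = incSign R v G := by
  simp only [incSign, filter_erase, lt_irrefl, mem_filter, and_false, not_false_eq_true,
    erase_eq_of_notMem]

/-- Exterior multiplication by `∑ v, b v • e_v` where the coefficients `b v` are operators on `M`;
a function `Finset U → M` is read as an element of the exterior algebra on `U` with coefficients
in `M`. -/
def wedgeBy (b : U → M →ₗ[R] M) : (Finset U → M) →ₗ[R] (Finset U → M) where
  toFun f G := ∑ v ∈ G, incSign R v (G.erase v) • b v (f (G.erase v))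
  map_add' f g := by
    funext G
    simp only [Pi.add_apply, map_add, smul_add, sum_add_distrib]
  map_smul' c f := by
    funext G
    simp only [Pi.smul_apply, map_smul, RingHom.id_apply, smul_sum, smul_comm c]

lemma wedgeBy_apply (b : U → M →ₗ[R] M) (f : Finset U → M) (G : Finset U) :
    wedgeBy b f G = ∑ v ∈ G, incSign R v (G.erase v) • b v (f (G.erase v)) := rfl

variable [Fintype U]

/-- Contraction with the covector `∑ v, a v • e_v⋆`, adjoint to `wedgeBy`. For
`a = 1` this is the simplicial boundary; for `a v` multiplication by a variable it is the Koszul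
differential. -/
def contractBy (a : U → M →ₗ[R] M) : (Finset U → M) →ₗ[R] (Finset U → M) where
  toFun f G := ∑ v ∈ Gᶜ, incSign R v G • a v (f (insert v G))
  map_add' f g := by
    funext G
    simp only [Pi.add_apply, map_add, smul_add, sum_add_distrib]
  map_smul' c f := by
    funext G
    simp only [Pi.smul_apply, map_smul, RingHom.id_apply, smul_sum, smul_comm c]

lemma contractBy_apply (a : U → M →ₗ[R] M) (f : Finset U → M) (G : Finset U) :
    contractBy a f G = ∑ v ∈ Gᶜ, incSign R v G • a v (f (insert v G)) := rfl

lemma contractBy_contractBy_apply (a b : U → M →ₗ[R] M) (f : Finset U → M) (G : Finset U) :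
    contractBy a (contractBy b f) G = ∑ p ∈ Gᶜ.offDiag,
      (incSign R p.1 G * incSign R p.2 (insert p.1 G)) •
        a p.1 (b p.2 (f (insert p.2 (insert p.1 G)))) := by
  have hoff : ∀ p : U × U, p ∈ Gᶜ.offDiag ↔ p.1 ∈ Gᶜ ∧ p.2 ∈ (insert p.1 G)ᶜ := fun p ↦ by
    simp only [mem_offDiag, mem_compl, mem_insert, not_or, ne_comm (a := p.1)]; tauto
  rw [sum_finset_product _ _ (fun u ↦ (insert u G)ᶜ) hoff]
  simp only [contractBy_apply, map_sum, map_smul, smul_sum, smul_smul]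

lemma contractBy_summand_swap {a b : U → M →ₗ[R] M}
    (hab : ∀ u v x, a u (b v x) = b v (a u x)) (f : Finset U → M) {G : Finset U} {p : U × U}
    (hp : p ∈ Gᶜ.offDiag) :
    (incSign R p.1 G * incSign R p.2 (insert p.1 G)) •
        a p.1 (b p.2 (f (insert p.2 (insert p.1 G)))) +
      (incSign R p.2 G * incSign R p.1 (insert p.2 G)) •
        b p.2 (a p.1 (f (insert p.1 (insert p.2 G)))) = 0 := by
  obtain ⟨hu, hv, huv⟩ := mem_offDiag.mp hp
  rw [incSign_mul_incSign_insert huv.symm (mem_compl.mp hv) (mem_compl.mp hu), hab,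
    insert_comm p.2, ← add_smul, neg_add_cancel, zero_smul]

lemma contractBy_anticomm {a b : U → M →ₗ[R] M} (hab : ∀ u v x, a u (b v x) = b v (a u x))
    (f : Finset U → M) : contractBy a (contractBy b f) = -contractBy b (contractBy a f) := by
  rw [eq_neg_iff_add_eq_zero]
  funext G
  have hswap : contractBy b (contractBy a f) G = ∑ p ∈ Gᶜ.offDiag,
      (incSign R p.2 G * incSign R p.1 (insert p.2 G)) •
        b p.2 (a p.1 (f (insert p.1 (insert p.2 G)))) := by
    rw [contractBy_contractBy_apply]
    exact sum_equiv (Equiv.prodComm U U) (fun p ↦ by simp only [mem_offDiag,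
      Equiv.prodComm_apply, Prod.fst_swap, Prod.snd_swap, ne_comm (a := p.1), and_left_comm])
      fun _ _ ↦ rfl
  rw [Pi.add_apply, contractBy_contractBy_apply, hswap, ← sum_add_distrib]
  exact sum_eq_zero fun p hp ↦ contractBy_summand_swap hab f hp

lemma contractBy_contractBy_self {a : U → M →ₗ[R] M} (ha : ∀ u v x, a u (a v x) = a v (a u x))
    (f : Finset U → M) : contractBy a (contractBy a f) = 0 := by
  funext G
  rw [contractBy_contractBy_apply]
  refine sum_involution (fun p _ ↦ p.swap) (fun p hp ↦ contractBy_summand_swap ha f hp)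
    (fun p hp _ h ↦ (mem_offDiag.mp hp).2.2 (congrArg Prod.snd h)) (fun p hp ↦ ?_)
    fun p _ ↦ p.swap_swap
  obtain ⟨hu, hv, huv⟩ := mem_offDiag.mp hp
  exact mem_offDiag.mpr ⟨hv, hu, huv.symm⟩

lemma contractBy_wedgeBy_apply (a b : U → M →ₗ[R] M) (f : Finset U → M) (G : Finset U) :
    contractBy a (wedgeBy b f) G = ∑ v ∈ Gᶜ, a v (b v (f G)) +
      ∑ v ∈ Gᶜ, ∑ u ∈ G, (incSign R v G * incSign R u (insert v (G.erase u))) •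
        a v (b u (f (insert v (G.erase u)))) := by
  rw [← sum_add_distrib, contractBy_apply]
  refine sum_congr rfl fun v hv ↦ ?_
  have hvG : v ∉ G := mem_compl.mp hv
  rw [wedgeBy_apply, sum_insert hvG, erase_insert hvG, map_add, map_smul, smul_add, smul_smul,
    incSign_mul_self, one_smul, map_sum, smul_sum]
  congr 1
  refine sum_congr rfl fun u hu ↦ ?_
  rw [map_smul, smul_smul, erase_insert_of_ne (ne_of_mem_of_not_mem hu hvG).symm]

lemma wedgeBy_contractBy_apply (a b : U → M →ₗ[R] M) (f : Finset U → M) (G : Finset U) :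
    wedgeBy b (contractBy a f) G = ∑ u ∈ G, b u (a u (f G)) +
      ∑ v ∈ Gᶜ, ∑ u ∈ G, (incSign R u (G.erase u) * incSign R v (G.erase u)) •
        b u (a v (f (insert v (G.erase u)))) := by
  rw [sum_comm, ← sum_add_distrib, wedgeBy_apply]
  refine sum_congr rfl fun u hu ↦ ?_
  rw [contractBy_apply, compl_erase, sum_insert (notMem_compl.mpr hu), insert_erase hu, map_add,
    map_smul, smul_add, smul_smul, incSign_mul_self, one_smul, map_sum, smul_sum]
  simp only [map_smul, smul_smul]

lemma contractBy_wedgeBy_add_wedgeBy_contractBy {a b : U → M →ₗ[R] M}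
    (hab : ∀ u v x, u ≠ v → a u (b v x) = b v (a u x)) (f : Finset U → M) (G : Finset U) :
    contractBy a (wedgeBy b f) G + wedgeBy b (contractBy a f) G =
      ∑ v ∈ Gᶜ, a v (b v (f G)) + ∑ v ∈ G, b v (a v (f G)) := by
  rw [contractBy_wedgeBy_apply, wedgeBy_contractBy_apply, add_add_add_comm, add_eq_left,
    ← sum_add_distrib]
  refine sum_eq_zero fun v hv ↦ ?_
  rw [← sum_add_distrib]
  refine sum_eq_zero fun u hu ↦ ?_
  have hvG : v ∉ G := mem_compl.mp hv
  have huv : u ≠ v := ne_of_mem_of_not_mem hu hvG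
  have hsign := incSign_insert_mul_incSign_insert (R := R) huv (notMem_erase u G)
    fun h ↦ hvG (erase_subset u G h)
  rw [insert_erase hu] at hsign
  rw [hab v u _ huv.symm, ← add_smul, hsign, neg_add_cancel, zero_smul]

end Operators

/-! ### Chains, links and deletions -/

section Complexes

variable {U : Type*}

/-- The deletion of a vertex set `T`: the faces of `A` disjoint from `T`. -/
def deletion (A : Set (Finset U)) (T : Finset U) : Set (Finset U) :=
  {F | F ∈ A ∧ Disjoint T F}

lemma deletion_subset (A : Set (Finset U)) (T : Finset U) : deletion A T ⊆ A := fun _ hF ↦ hF.1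

lemma deletion_mono {A B : Set (Finset U)} (hAB : A ⊆ B) (T : Finset U) :
    deletion A T ⊆ deletion B T := fun _ hF ↦ ⟨hAB hF.1, hF.2⟩

lemma IsComplex.deletion {A : Set (Finset U)} (hA : IsComplex A) (T : Finset U) :
    IsComplex (deletion A T) :=
  fun F hF G hG ↦ ⟨hA F hF.1 G hG, hF.2.mono_right hG⟩

@[simp]
lemma deletion_empty (A : Set (Finset U)) : deletion A ∅ = A := by
  ext F; simp [deletion]

variable [DecidableEq U]

lemma deletion_deletion_singleton (A : Set (Finset U)) (T : Finset U) (v : U) :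
    deletion (deletion A T) {v} = deletion A (insert v T) := by
  ext F
  simp only [deletion, Set.mem_ofPred_eq, disjoint_singleton_left, disjoint_insert_left]
  tauto

lemma mem_link_singleton {A : Set (Finset U)} {v : U} {G : Finset U} :
    G ∈ link A {v} ↔ v ∉ G ∧ insert v G ∈ A := by
  rw [link, Set.mem_ofPred_eq, disjoint_singleton_left, insert_eq]

lemma empty_mem_link {A : Set (Finset U)} {F : Finset U} : ∅ ∈ link A F ↔ F ∈ A := by
  simp [link]

lemma link_mono {A B : Set (Finset U)} (hAB : A ⊆ B) (F : Finset U) : link A F ⊆ link B F :=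
  fun _ hG ↦ ⟨hG.1, hAB hG.2⟩

lemma link_singleton_subset_deletion {A : Set (Finset U)} (hA : IsComplex A) (v : U) :
    link A {v} ⊆ deletion A {v} :=
  fun _ hF ↦ ⟨hA _ hF.2 _ subset_union_right, hF.1⟩

lemma IsComplex.link {A : Set (Finset U)} (hA : IsComplex A) (T : Finset U) :
    IsComplex (link A T) :=
  fun _ hF _ hG ↦ ⟨hF.1.mono_right hG, hA _ hF.2 _ (union_subset_union_right hG)⟩

@[simp]
lemma link_empty (A : Set (Finset U)) : link A ∅ = A := by
  ext F; simp [link]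

lemma link_eq_empty {A : Set (Finset U)} (hA : IsComplex A) {F : Finset U} (hF : F ∉ A) :
    link A F = ∅ :=
  Set.eq_empty_of_forall_notMem fun _ hG ↦ hF (hA _ hG.2 _ subset_union_left)

lemma link_deletion_singleton (A : Set (Finset U)) (T : Finset U) {v : U} (hv : v ∉ T) :
    link (deletion A T) {v} = deletion (link A {v}) T := by
  ext F
  simp only [deletion, link, Set.mem_ofPred_eq, disjoint_singleton_left, disjoint_union_right,
    disjoint_singleton_right]
  tauto

lemma link_link {A : Set (Finset U)} {F G : Finset U} (hFG : Disjoint F G) :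
    link (link A F) G = link A (F ∪ G) := by
  ext H
  simp only [link, Set.mem_ofPred_eq, disjoint_union_left, disjoint_union_right, union_assoc]
  tauto

lemma card_le_of_mem_link {A : Set (Finset U)} {e : ℕ} (hA : ∀ F ∈ A, #F ≤ e)
    {F G : Finset U} (hG : G ∈ link A F) : #G ≤ e - #F := by
  have := hA _ hG.2
  rw [card_union_of_disjoint hG.1] at this
  lia

end Complexes

section Chains

variable {𝕜 : Type*} [Field 𝕜] {U : Type*}

lemma chainsOn_mono {A B : Set (Finset U)} (hAB : A ⊆ B) : chainsOn 𝕜 A ≤ chainsOn 𝕜 B :=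
  fun _ hf G hG ↦ hAB (hf G hG)

lemma eq_zero_of_mem_chainsOn_empty {f : Finset U → 𝕜} (hf : f ∈ chainsOn 𝕜 ∅) : f = 0 :=
  funext fun G ↦ by_contra (hf G)

/-- The chains supported on the faces of `A` of cardinality `c`. -/
abbrev faceChains (𝕜 : Type*) [Field 𝕜] (A : Set (Finset U)) (c : ℕ) :
    Submodule 𝕜 (Finset U → 𝕜) :=
  chainsOn 𝕜 {F | F ∈ A ∧ #F = c}

lemma faceChains_mono {A B : Set (Finset U)} (hAB : A ⊆ B) (c : ℕ) :
    faceChains 𝕜 A c ≤ faceChains 𝕜 B c :=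
  chainsOn_mono fun _ hF ↦ ⟨hAB hF.1, hF.2⟩

lemma faceChains_le_chainsOn (A : Set (Finset U)) (c : ℕ) : faceChains 𝕜 A c ≤ chainsOn 𝕜 A :=
  chainsOn_mono fun _ hF ↦ hF.1

lemma mem_faceChains_of_mem_chainsOn {A B : Set (Finset U)} {c : ℕ} {f : Finset U → 𝕜}
    (hf : f ∈ faceChains 𝕜 B c) (hfA : f ∈ chainsOn 𝕜 A) : f ∈ faceChains 𝕜 A c :=
  fun G hG ↦ ⟨hfA G hG, (hf G hG).2⟩

lemma eq_zero_of_mem_faceChains_of_card_lt {A : Set (Finset U)} {c e : ℕ}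
    (hA : ∀ F ∈ A, #F ≤ e) (hc : e < c) {f : Finset U → 𝕜} (hf : f ∈ faceChains 𝕜 A c) :
    f = 0 :=
  funext fun G ↦ by_contra fun hG ↦ ((hA G (hf G hG).1).trans_lt hc).ne (hf G hG).2

variable [LinearOrder U]

lemma single_id_apply (v u : U) (x : 𝕜) :
    (Pi.single v LinearMap.id : U → 𝕜 →ₗ[𝕜] 𝕜) u x = if u = v then x else 0 := by
  rcases eq_or_ne u v with rfl | huv
  · rw [Pi.single_eq_same, if_pos rfl, LinearMap.id_apply]
  · rw [Pi.single_eq_of_ne huv, if_neg huv, LinearMap.zero_apply]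

/-- The cone with apex `v` over a chain. -/
def coneChain (𝕜 : Type*) [Field 𝕜] (v : U) : (Finset U → 𝕜) →ₗ[𝕜] (Finset U → 𝕜) :=
  wedgeBy (Pi.single v LinearMap.id)

lemma coneChain_apply (v : U) (f : Finset U → 𝕜) (G : Finset U) :
    coneChain 𝕜 v f G = if v ∈ G then incSign 𝕜 v (G.erase v) * f (G.erase v) else 0 := by
  simp only [coneChain, wedgeBy_apply, single_id_apply, smul_eq_mul, mul_ite, mul_zero,
    sum_ite_eq']

lemma coneChain_mem_chainsOn {B C : Set (Finset U)} {v : U} {f : Finset U → 𝕜}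
    (h : ∀ G, v ∈ G → G.erase v ∈ B → G ∈ C) (hf : f ∈ chainsOn 𝕜 B) :
    coneChain 𝕜 v f ∈ chainsOn 𝕜 C := fun G hG ↦ by
  rw [coneChain_apply, ite_ne_right_iff] at hG
  exact h G hG.1 (hf _ (right_ne_zero_of_mul hG.2))

lemma coneChain_mem_chainsOn_of_link {A : Set (Finset U)} {f : Finset U → 𝕜} {v : U}
    (hf : f ∈ chainsOn 𝕜 (link A {v})) : coneChain 𝕜 v f ∈ chainsOn 𝕜 A :=
  coneChain_mem_chainsOn (fun G hv hG ↦ by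
    simpa only [insert_erase hv] using (mem_link_singleton.mp hG).2) hf

lemma coneChain_mem_faceChains {A : Set (Finset U)} {c : ℕ} {f : Finset U → 𝕜} {v : U}
    (hf : f ∈ faceChains 𝕜 (link A {v}) c) : coneChain 𝕜 v f ∈ faceChains 𝕜 A (c + 1) :=
  coneChain_mem_chainsOn (fun G hv hG ↦ by
    refine ⟨by simpa only [insert_erase hv] using (mem_link_singleton.mp hG.1).2, ?_⟩
    rw [← hG.2, card_erase_add_one hv]) hf

variable [Fintype U]

lemma bdryMap_eq_contractBy :
    bdryMap 𝕜 = contractBy fun _ : U ↦ (LinearMap.id : 𝕜 →ₗ[𝕜] 𝕜) := rfl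

lemma bdryMap_apply (f : Finset U → 𝕜) (G : Finset U) :
    bdryMap 𝕜 f G = ∑ v ∈ Gᶜ, incSign 𝕜 v G * f (insert v G) := rfl

/-- The part of a chain carried by the faces containing `v`, with `v` removed: the map from
chains of a complex to chains of the link of `v`. -/
def linkChain (𝕜 : Type*) [Field 𝕜] (v : U) : (Finset U → 𝕜) →ₗ[𝕜] (Finset U → 𝕜) :=
  contractBy (Pi.single v LinearMap.id)

lemma linkChain_apply (v : U) (f : Finset U → 𝕜) (G : Finset U) :
    linkChain 𝕜 v f G = if v ∈ G then 0 else incSign 𝕜 v G * f (insert v G) := by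
  simp only [linkChain, contractBy_apply, single_id_apply, smul_eq_mul, mul_ite, mul_zero,
    sum_ite_eq', mem_compl, ite_not]

lemma bdryMap_bdryMap (f : Finset U → 𝕜) : bdryMap 𝕜 (bdryMap 𝕜 f) = 0 :=
  contractBy_contractBy_self (a := fun _ ↦ .id) (fun _ _ _ ↦ rfl) f

lemma bdryMap_linkChain (v : U) (f : Finset U → 𝕜) :
    bdryMap 𝕜 (linkChain 𝕜 v f) = -linkChain 𝕜 v (bdryMap 𝕜 f) :=
  contractBy_anticomm (a := fun _ ↦ .id) (b := Pi.single v .id) (fun _ _ _ ↦ rfl) f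

lemma bdryMap_coneChain_add (v : U) (f : Finset U → 𝕜) :
    bdryMap 𝕜 (coneChain 𝕜 v f) + coneChain 𝕜 v (bdryMap 𝕜 f) = f := by
  funext G
  rw [bdryMap_eq_contractBy, coneChain, Pi.add_apply,
    contractBy_wedgeBy_add_wedgeBy_contractBy (a := fun _ ↦ .id)
      (b := Pi.single v .id) fun _ _ _ _ ↦ rfl]
  by_cases hv : v ∈ G <;> simp [single_id_apply, hv]

lemma linkChain_coneChain_add (v : U) (f : Finset U → 𝕜) :
    linkChain 𝕜 v (coneChain 𝕜 v f) + coneChain 𝕜 v (linkChain 𝕜 v f) = f := by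
  funext G
  have hcomm : ∀ u w (x : 𝕜), u ≠ w → (Pi.single v LinearMap.id : U → 𝕜 →ₗ[𝕜] 𝕜) u
      ((Pi.single v LinearMap.id : U → 𝕜 →ₗ[𝕜] 𝕜) w x) =
      (Pi.single v LinearMap.id : U → 𝕜 →ₗ[𝕜] 𝕜) w
        ((Pi.single v LinearMap.id : U → 𝕜 →ₗ[𝕜] 𝕜) u x) := fun u w x _ ↦ by
    simp only [single_id_apply, ← ite_and, and_comm]
  rw [coneChain, linkChain, Pi.add_apply, contractBy_wedgeBy_add_wedgeBy_contractBy hcomm]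
  by_cases hv : v ∈ G <;> simp [single_id_apply, hv]

lemma linkChain_eq_zero_iff {v : U} {f : Finset U → 𝕜} :
    linkChain 𝕜 v f = 0 ↔ ∀ G, v ∈ G → f G = 0 := by
  refine ⟨fun h G hv ↦ ?_, fun h ↦ funext fun G ↦ ?_⟩
  · have hG := congrFun h (G.erase v)
    rw [linkChain_apply, if_neg (notMem_erase v G), insert_erase hv] at hG
    exact (isUnit_incSign v _).mul_right_eq_zero.mp hG
  · rw [linkChain_apply, h _ (mem_insert_self v G), mul_zero, ite_self, Pi.zero_apply]

lemma linkChain_ne_zero_iff {v : U} {f : Finset U → 𝕜} :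
    linkChain 𝕜 v f ≠ 0 ↔ ∃ G, v ∈ G ∧ f G ≠ 0 := by
  simp only [ne_eq, linkChain_eq_zero_iff, not_forall, exists_prop]

lemma bdryMap_mem_chainsOn {B C : Set (Finset U)} {f : Finset U → 𝕜}
    (h : ∀ G, ∀ v ∉ G, insert v G ∈ B → G ∈ C) (hf : f ∈ chainsOn 𝕜 B) :
    bdryMap 𝕜 f ∈ chainsOn 𝕜 C := fun G hG ↦ by
  rw [bdryMap_apply] at hG
  obtain ⟨v, hv, hne⟩ := exists_ne_zero_of_sum_ne_zero hG
  exact h G v (mem_compl.mp hv) (hf _ (right_ne_zero_of_mul hne))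

lemma linkChain_mem_chainsOn {B C : Set (Finset U)} {v : U} {f : Finset U → 𝕜}
    (h : ∀ G, v ∉ G → insert v G ∈ B → G ∈ C) (hf : f ∈ chainsOn 𝕜 B) :
    linkChain 𝕜 v f ∈ chainsOn 𝕜 C := fun G hG ↦ by
  rw [linkChain_apply, ite_ne_left_iff] at hG
  exact h G hG.1 (hf _ (right_ne_zero_of_mul hG.2.symm))

lemma IsComplex.bdryMap_mem_chainsOn {A : Set (Finset U)} (hA : IsComplex A)
    {f : Finset U → 𝕜} (hf : f ∈ chainsOn 𝕜 A) : bdryMap 𝕜 f ∈ chainsOn 𝕜 A :=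
  _root_.bdryMap_mem_chainsOn (fun G v _ hG ↦ hA _ hG _ (subset_insert v G)) hf

lemma IsComplex.bdryMap_mem_faceChains {A : Set (Finset U)} (hA : IsComplex A) {c : ℕ}
    {f : Finset U → 𝕜} (hf : f ∈ faceChains 𝕜 A (c + 1)) : bdryMap 𝕜 f ∈ faceChains 𝕜 A c :=
  _root_.bdryMap_mem_chainsOn (fun G v hv hG ↦ ⟨hA _ hG.1 _ (subset_insert v G),
    Nat.succ_injective ((card_insert_of_notMem hv).symm.trans hG.2)⟩) hf

lemma linkChain_mem_chainsOn_link {A : Set (Finset U)} {f : Finset U → 𝕜} (v : U)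
    (hf : f ∈ chainsOn 𝕜 A) : linkChain 𝕜 v f ∈ chainsOn 𝕜 (link A {v}) :=
  linkChain_mem_chainsOn (fun _ hv hG ↦ mem_link_singleton.mpr ⟨hv, hG⟩) hf

lemma linkChain_mem_faceChains {A : Set (Finset U)} {c : ℕ} {f : Finset U → 𝕜} (v : U)
    (hf : f ∈ faceChains 𝕜 A (c + 1)) : linkChain 𝕜 v f ∈ faceChains 𝕜 (link A {v}) c :=
  linkChain_mem_chainsOn (fun _ hv hG ↦ ⟨mem_link_singleton.mpr ⟨hv, hG.1⟩,
    Nat.succ_injective ((card_insert_of_notMem hv).symm.trans hG.2)⟩) hf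

lemma mem_chainsOn_deletion_iff {A : Set (Finset U)} {f : Finset U → 𝕜} {v : U} :
    f ∈ chainsOn 𝕜 (deletion A {v}) ↔ f ∈ chainsOn 𝕜 A ∧ linkChain 𝕜 v f = 0 := by
  simp only [linkChain_eq_zero_iff]
  refine ⟨fun hf ↦ ⟨chainsOn_mono (deletion_subset A _) hf, fun G hv ↦ by_contra fun hG ↦
    disjoint_singleton_left.mp (hf G hG).2 hv⟩, fun hf G hG ↦ ⟨hf.1 G hG, ?_⟩⟩
  exact disjoint_singleton_left.mpr fun hv ↦ hG (hf.2 G hv)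

lemma mem_faceChains_deletion_iff {A : Set (Finset U)} {c : ℕ} {f : Finset U → 𝕜} {v : U} :
    f ∈ faceChains 𝕜 (deletion A {v}) c ↔ f ∈ faceChains 𝕜 A c ∧ linkChain 𝕜 v f = 0 := by
  rw [← mem_chainsOn_deletion_iff]
  simp only [faceChains, deletion, Set.mem_ofPred_eq, and_right_comm]

lemma linkChain_coneChain_of_link {A : Set (Finset U)} {f : Finset U → 𝕜} {v : U}
    (hf : f ∈ chainsOn 𝕜 (link A {v})) : linkChain 𝕜 v (coneChain 𝕜 v f) = f := by
  have hzero : linkChain 𝕜 v f = 0 := linkChain_eq_zero_iff.mpr fun G hv ↦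
    by_contra fun hG ↦ (mem_link_singleton.mp (hf G hG)).1 hv
  simpa only [hzero, map_zero, add_zero] using linkChain_coneChain_add v f

end Chains

/-! ### Homology spheres and exactness of deletions -/

section ChainSpheres

variable {𝕜 : Type*} [Field 𝕜] {U : Type*} [LinearOrder U]

lemma single_mem_chainsOn {A : Set (Finset U)} {F : Finset U} (hF : F ∈ A) :
    Pi.single F 1 ∈ chainsOn 𝕜 A := fun G hG ↦ by
  have hGF : G = F := by
    by_contra h
    exact hG (Pi.single_eq_of_ne h _)
  rwa [hGF]

lemma coneChain_single_empty (v : U) :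
    coneChain 𝕜 v (Pi.single ∅ 1) = Pi.single {v} 1 := by
  funext G
  rw [coneChain_apply, Pi.single_apply, Pi.single_apply]
  by_cases hG : G = {v}
  · simp [hG, incSign]
  · rw [if_neg hG]
    split_ifs with hv he
    · exact absurd ((erase_eq_empty_iff _ _).mp he) (by simp [hG, ne_empty_of_mem hv])
    · rw [mul_zero]
    · rfl

lemma single_sub_single_mem_faceChains {A : Set (Finset U)} {u v : U} (hu : {u} ∈ A)
    (hv : {v} ∈ A) : (Pi.single {u} 1 - Pi.single {v} 1 : Finset U → 𝕜) ∈ faceChains 𝕜 A 1 :=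
  sub_mem (single_mem_chainsOn ⟨hu, card_singleton u⟩)
    (single_mem_chainsOn ⟨hv, card_singleton v⟩)

variable [Fintype U]

/-- Vanishing of the reduced homology of `A` at faces of cardinality `c`, on the level of
chains. -/
def ExactAt (𝕜 : Type*) [Field 𝕜] (A : Set (Finset U)) (c : ℕ) : Prop :=
  ∀ z ∈ faceChains 𝕜 A c, bdryMap 𝕜 z = 0 → ∃ y ∈ faceChains 𝕜 A (c + 1), bdryMap 𝕜 y = z

/-- `g` spans the cycles of `A` carried by faces of cardinality `e`; for a sphere with facets of
cardinality `e` this is its fundamental cycle. -/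
structure IsFundamentalCycle (𝕜 : Type*) [Field 𝕜] (A : Set (Finset U)) (e : ℕ)
    (g : Finset U → 𝕜) : Prop where
  mem : g ∈ faceChains 𝕜 A e
  bdryMap_eq_zero : bdryMap 𝕜 g = 0
  ne_zero : g ≠ 0
  exists_smul : ∀ z ∈ faceChains 𝕜 A e, bdryMap 𝕜 z = 0 → ∃ t : 𝕜, z = t • g

/-- A homology sphere described by chains instead of homology groups. In contrast to
`IsHomologySphere` the index `e` is the cardinality of the facets, so `e = 0` is the sphere `{∅}`
and links of vertices lower `e` by one without truncation. -/
structure IsChainSphere (𝕜 : Type*) [Field 𝕜] (A : Set (Finset U)) (e : ℕ) : Prop where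
  isComplex : IsComplex A
  empty_mem : ∅ ∈ A
  card_le : ∀ F ∈ A, #F ≤ e
  exactAt_link : ∀ F ∈ A, ∀ c, c + #F ≠ e → ExactAt 𝕜 (link A F) c
  exists_isFundamentalCycle_link : ∀ F ∈ A, ∃ g, IsFundamentalCycle 𝕜 (link A F) (e - #F) g

lemma bdryMap_eq_zero_of_mem_faceChains_zero {A : Set (Finset U)} {f : Finset U → 𝕜}
    (hf : f ∈ faceChains 𝕜 A 0) : bdryMap 𝕜 f = 0 := by
  refine eq_zero_of_mem_chainsOn_empty (bdryMap_mem_chainsOn (fun G v _ hG ↦ ?_) hf)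
  exact absurd hG.2 (card_ne_zero_of_mem (mem_insert_self v G))

lemma bdryMap_single_singleton (v : U) :
    bdryMap 𝕜 (Pi.single {v} 1) = (Pi.single ∅ 1 : Finset U → 𝕜) := by
  have hempty : bdryMap 𝕜 (Pi.single (∅ : Finset U) (1 : 𝕜)) = 0 :=
    bdryMap_eq_zero_of_mem_faceChains_zero (A := Set.univ)
      (single_mem_chainsOn ⟨Set.mem_univ _, card_empty⟩)
  simpa only [hempty, map_zero, add_zero, coneChain_single_empty] using
    bdryMap_coneChain_add v (Pi.single (∅ : Finset U) (1 : 𝕜))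

lemma exactAt_of_card_lt {A : Set (Finset U)} {e c : ℕ} (hA : ∀ F ∈ A, #F ≤ e) (hc : e < c) :
    ExactAt 𝕜 A c := fun z hz _ ↦
  ⟨0, zero_mem _, by rw [map_zero, eq_zero_of_mem_faceChains_of_card_lt hA hc hz]⟩

lemma bdryMap_single_sub_single (u v : U) :
    bdryMap 𝕜 (Pi.single {u} 1 - Pi.single {v} 1 : Finset U → 𝕜) = 0 := by
  rw [map_sub, bdryMap_single_singleton, bdryMap_single_singleton, sub_self]

open scoped Classical in
/- Write `{u} - {v} = ∂ y`. The part of `y` on edges with both ends in `p` has boundary `{u}`,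
which is not a cycle. -/
lemma ExactAt.of_edges {A : Set (Finset U)} (hA : ExactAt 𝕜 A 1) {p : U → Prop}
    (hp : ∀ a b, a ≠ b → {a, b} ∈ A → p a → p b) {u v : U} (hu : {u} ∈ A) (hv : {v} ∈ A)
    (hpu : p u) : p v := by
  by_contra hpv
  obtain ⟨y, hy, hyz⟩ := hA _ (single_sub_single_mem_faceChains hu hv)
    (bdryMap_single_sub_single u v)
  have hvertex (w : U) :
      bdryMap 𝕜 (fun G ↦ if ∀ x ∈ G, p x then y G else 0) {w} = if w = u then (1 : 𝕜) else 0 := by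
    have hval : bdryMap 𝕜 y {w} = if p w ∧ w = u then 1 else if w = v then -1 else 0 := by
      rw [hyz, Pi.sub_apply, Pi.single_apply, Pi.single_apply]
      grind
    by_cases hw : p w
    · have hwv : w ≠ v := fun h ↦ hpv (by rwa [← h])
      simp only [hw, true_and, hwv, if_false] at hval
      rw [← hval, bdryMap_apply, bdryMap_apply]
      refine sum_congr rfl fun x hx ↦ congrArg _ (ite_eq_left_iff.mpr fun hn ↦ ?_)
      by_contra hne
      have hxw : w ≠ x := fun h ↦ mem_compl.mp hx (mem_singleton.mpr h.symm)
      have hpx := hp w x hxw (pair_comm x w ▸ (hy _ (Ne.symm hne)).1) hw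
      exact hn (by simp only [mem_insert, mem_singleton, forall_eq_or_imp, forall_eq]
                   exact ⟨hpx, hw⟩)
    · rw [if_neg (fun h ↦ hw (by rwa [h])), bdryMap_apply]
      refine sum_eq_zero fun x _ ↦ ?_
      rw [if_neg fun h ↦ hw (h w (mem_insert_of_mem (mem_singleton_self w))), mul_zero]
  have hcycle := congrFun (bdryMap_bdryMap fun G ↦ if ∀ x ∈ G, p x then y G else 0) ∅
  rw [bdryMap_apply] at hcycle
  simp [hvertex, incSign] at hcycle

namespace IsFundamentalCycle

variable {A : Set (Finset U)} {e : ℕ} {g : Finset U → 𝕜}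

lemma of_ne_zero (hg : IsFundamentalCycle 𝕜 A e g) {f : Finset U → 𝕜}
    (hf : f ∈ faceChains 𝕜 A e) (hf0 : bdryMap 𝕜 f = 0) (hne : f ≠ 0) :
    IsFundamentalCycle 𝕜 A e f := by
  refine ⟨hf, hf0, hne, fun z hz hz0 ↦ ?_⟩
  obtain ⟨s, rfl⟩ := hg.exists_smul f hf hf0
  obtain ⟨t, rfl⟩ := hg.exists_smul z hz hz0
  have hs : s ≠ 0 := fun h ↦ hne (by rw [h, zero_smul])
  exact ⟨t / s, by rw [smul_smul, div_mul_cancel₀ _ hs]⟩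

lemma exists_vertex (hg : IsFundamentalCycle 𝕜 A (e + 1) g) (hA : IsComplex A) :
    ∃ u, {u} ∈ A ∧ linkChain 𝕜 u g ≠ 0 := by
  obtain ⟨G, hG⟩ := Function.ne_iff.mp hg.ne_zero
  obtain ⟨hGA, hcard⟩ := hg.mem G hG
  obtain ⟨u, hu⟩ : G.Nonempty := card_pos.mp (hcard ▸ e.succ_pos)
  exact ⟨u, hA G hGA _ (singleton_subset_iff.mpr hu), linkChain_ne_zero_iff.mpr ⟨G, hu, hG⟩⟩

end IsFundamentalCycle

namespace IsChainSphere

variable {A : Set (Finset U)} {e : ℕ}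

lemma exactAt (hA : IsChainSphere 𝕜 A e) {c : ℕ} (hc : c ≠ e) : ExactAt 𝕜 A c := by
  simpa only [link_empty] using hA.exactAt_link ∅ hA.empty_mem c (by rwa [card_empty])

lemma exists_isFundamentalCycle (hA : IsChainSphere 𝕜 A e) :
    ∃ g, IsFundamentalCycle 𝕜 A e g := by
  simpa only [link_empty, card_empty, Nat.sub_zero] using
    hA.exists_isFundamentalCycle_link ∅ hA.empty_mem

lemma isFundamentalCycle_of_ne_zero (hA : IsChainSphere 𝕜 A e) {f : Finset U → 𝕜}
    (hf : f ∈ faceChains 𝕜 A e) (hf0 : bdryMap 𝕜 f = 0) (hne : f ≠ 0) :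
    IsFundamentalCycle 𝕜 A e f :=
  have ⟨_, hg⟩ := hA.exists_isFundamentalCycle
  hg.of_ne_zero hf hf0 hne

protected lemma link_singleton (hA : IsChainSphere 𝕜 A (e + 1)) {v : U} (hv : {v} ∈ A) :
    IsChainSphere 𝕜 (link A {v}) e := by
  have hlink : ∀ F ∈ link A {v},
      insert v F ∈ A ∧ #(insert v F) = #F + 1 ∧ link (link A {v}) F = link A (insert v F) :=
    fun F hF ↦ by
      rw [link_link hF.1, ← insert_eq]
      exact ⟨(mem_link_singleton.mp hF).2, card_insert_of_notMem (mem_link_singleton.mp hF).1, rfl⟩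
  refine ⟨hA.isComplex.link _, empty_mem_link.mpr hv, fun F hF ↦ ?_, fun F hF c hc ↦ ?_,
    fun F hF ↦ ?_⟩ <;> obtain ⟨hFA, hcard, hFl⟩ := hlink F hF
  · have := hA.card_le _ hFA
    lia
  · rw [hFl]
    exact hA.exactAt_link _ hFA c (by lia)
  · have := hA.exists_isFundamentalCycle_link _ hFA
    rwa [hFl, ← Nat.add_sub_add_right e 1, ← hcard]

/- Along an edge `{a, b}` the cycle `linkChain 𝕜 a g` of the link of `a` involves `b` by
induction, so the vertices involved in `g` are closed under adjacency and hence all vertices. -/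
lemma linkChain_ne_zero (hA : IsChainSphere 𝕜 A e) {g : Finset U → 𝕜}
    (hg : IsFundamentalCycle 𝕜 A e g) {v : U} (hv : {v} ∈ A) : linkChain 𝕜 v g ≠ 0 := by
  induction e generalizing A g v with
  | zero => exact absurd (hA.card_le _ hv) (by simp)
  | succ e ih =>
    obtain ⟨u, hu, hgu⟩ := hg.exists_vertex hA.isComplex
    rcases Nat.eq_zero_or_pos e with rfl | he
    · intro hgv
      have huv : u ≠ v := fun h ↦ hgu (h ▸ hgv)
      obtain ⟨t, ht⟩ := hg.exists_smul _ (single_sub_single_mem_faceChains hu hv)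
        (bdryMap_single_sub_single u v)
      have htv := congrFun ht {v}
      rw [Pi.smul_apply, linkChain_eq_zero_iff.mp hgv {v} (mem_singleton_self v)] at htv
      simp [huv.symm] at htv
    refine (hA.exactAt (c := 1) (by lia)).of_edges (p := fun w ↦ linkChain 𝕜 w g ≠ 0)
      (fun a b hab hedge ha ↦ ?_) hu hv hgu
    have hsphere := hA.link_singleton (v := a) (hA.isComplex _ hedge _ (by simp))
    have hcycle := hsphere.isFundamentalCycle_of_ne_zero (linkChain_mem_faceChains a hg.mem)
      (by rw [bdryMap_linkChain, hg.bdryMap_eq_zero, map_zero, neg_zero]) ha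
    obtain ⟨G, hbG, hG⟩ := linkChain_ne_zero_iff.mp
      (ih hsphere hcycle (v := b) (mem_link_singleton.mpr ⟨by simpa using hab, hedge⟩))
    rw [linkChain_apply, ite_ne_left_iff] at hG
    exact linkChain_ne_zero_iff.mpr
      ⟨insert a G, mem_insert_of_mem hbG, right_ne_zero_of_mul hG.2.symm⟩

lemma isFundamentalCycle_linkChain (hA : IsChainSphere 𝕜 A (e + 1)) {g : Finset U → 𝕜}
    (hg : IsFundamentalCycle 𝕜 A (e + 1) g) {v : U} (hv : {v} ∈ A) :
    IsFundamentalCycle 𝕜 (link A {v}) e (linkChain 𝕜 v g) :=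
  (hA.link_singleton hv).isFundamentalCycle_of_ne_zero (linkChain_mem_faceChains v hg.mem)
    (by rw [bdryMap_linkChain, hg.bdryMap_eq_zero, map_zero, neg_zero])
    (hA.linkChain_ne_zero hg hv)

end IsChainSphere

lemma bdryMap_linkChain_eq_zero_of_mem_deletion {A : Set (Finset U)} {v : U} {c : ℕ}
    {η : Finset U → 𝕜} (h : bdryMap 𝕜 η ∈ faceChains 𝕜 (deletion A {v}) c) :
    bdryMap 𝕜 (linkChain 𝕜 v η) = 0 := by
  rw [bdryMap_linkChain, (mem_faceChains_deletion_iff.mp h).2, neg_zero]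

lemma ExactAt.deletion_singleton {A : Set (Finset U)} (hcomplex : IsComplex A) {v : U} {c : ℕ}
    (hA : ExactAt 𝕜 A c) (hlink : ExactAt 𝕜 (link A {v}) c) :
    ExactAt 𝕜 (deletion A {v}) c := by
  intro z hz hz0
  obtain ⟨η, hη, rfl⟩ := hA z (faceChains_mono (deletion_subset A _) c hz) hz0
  obtain ⟨ξ, hξ, hξη⟩ := hlink _ (linkChain_mem_faceChains v hη)
    (bdryMap_linkChain_eq_zero_of_mem_deletion hz)
  have hcone : linkChain 𝕜 v (bdryMap 𝕜 (coneChain 𝕜 v ξ)) = -linkChain 𝕜 v η := by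
    rw [← hξη, ← neg_eq_iff_eq_neg, ← bdryMap_linkChain,
      linkChain_coneChain_of_link (faceChains_le_chainsOn _ _ hξ)]
  refine ⟨η + bdryMap 𝕜 (coneChain 𝕜 v ξ), mem_faceChains_deletion_iff.mpr ⟨?_, ?_⟩, ?_⟩
  · exact add_mem hη (hcomplex.bdryMap_mem_faceChains (coneChain_mem_faceChains hξ))
  · rw [map_add, hcone, add_neg_cancel]
  · rw [map_add, bdryMap_bdryMap, add_zero]

namespace IsChainSphere

variable {A : Set (Finset U)} {e : ℕ}

lemma exactAt_deletion_singleton (hA : IsChainSphere 𝕜 A e) {v : U} (hv : {v} ∈ A) (c : ℕ) :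
    ExactAt 𝕜 (deletion A {v}) c := by
  obtain ⟨e, rfl⟩ : ∃ e', e = e' + 1 :=
    Nat.exists_eq_add_of_le' (by simpa only [card_singleton] using hA.card_le _ hv)
  obtain ⟨g, hg⟩ := hA.exists_isFundamentalCycle
  rcases eq_or_ne c (e + 1) with rfl | hc
  · intro z hz hz0
    obtain ⟨hzA, hzv⟩ := mem_faceChains_deletion_iff.mp hz
    obtain ⟨t, rfl⟩ := hg.exists_smul z hzA hz0
    rw [map_smul] at hzv
    have ht : t = 0 := (smul_eq_zero.mp hzv).resolve_right (hA.linkChain_ne_zero hg hv)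
    exact ⟨0, zero_mem _, by rw [map_zero, ht, zero_smul]⟩
  rcases eq_or_ne c e with rfl | hce
  · intro z hz hz0
    obtain ⟨η, hη, rfl⟩ := hA.exactAt hc z (faceChains_mono (deletion_subset A _) _ hz) hz0
    obtain ⟨t, ht⟩ := (hA.isFundamentalCycle_linkChain hg hv).exists_smul _
      (linkChain_mem_faceChains v hη) (bdryMap_linkChain_eq_zero_of_mem_deletion hz)
    refine ⟨η - t • g, mem_faceChains_deletion_iff.mpr
      ⟨sub_mem hη (Submodule.smul_mem _ t hg.mem), ?_⟩, ?_⟩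
    · rw [map_sub, map_smul, ht, sub_self]
    · rw [map_sub, map_smul, hg.bdryMap_eq_zero, smul_zero, sub_zero]
  · exact (hA.exactAt hc).deletion_singleton hA.isComplex ((hA.link_singleton hv).exactAt hce)

lemma exactAt_deletion (hA : IsChainSphere 𝕜 A e) {T : Finset U} (hT : T.Nonempty) {q c : ℕ}
    (hTA : ∀ F ⊆ T, #F ≤ q → F ∈ A) (hc : e + 1 ≤ c + q) : ExactAt 𝕜 (deletion A T) c := by
  induction hT using Nonempty.cons_induction generalizing A e q with
  | singleton v =>
    rcases Nat.eq_zero_or_pos q with rfl | hq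
    · exact exactAt_of_card_lt (fun F hF ↦ hA.card_le F hF.1) (by lia)
    · exact hA.exactAt_deletion_singleton (hTA _ subset_rfl (by rwa [card_singleton])) c
  | cons v T hv _ ih =>
    rw [cons_eq_insert] at hTA ⊢
    rcases Nat.eq_zero_or_pos q with rfl | hq
    · exact exactAt_of_card_lt (fun F hF ↦ hA.card_le F hF.1) (by lia)
    have hvA : {v} ∈ A := hTA _ (by simp) (by rwa [card_singleton])
    obtain ⟨e, rfl⟩ : ∃ e', e = e' + 1 :=
      Nat.exists_eq_add_of_le' (by simpa only [card_singleton] using hA.card_le _ hvA)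
    rw [← deletion_deletion_singleton]
    refine (ih hA (fun F hF ↦ hTA F (hF.trans (subset_insert v T))) hc).deletion_singleton
      (hA.isComplex.deletion T) ?_
    rw [link_deletion_singleton A T hv]
    refine ih (hA.link_singleton hvA) (q := q - 1) (fun F hF hcard ↦ ?_) (by lia)
    have hvF : v ∉ F := fun h ↦ hv (hF h)
    refine mem_link_singleton.mpr ⟨hvF, hTA _ (insert_subset_insert v hF) ?_⟩
    rw [card_insert_of_notMem hvF]
    lia

end IsChainSphere

end ChainSpheres

/-! ### Relative homology of ball pairs -/

section BallPairs

variable {𝕜 : Type*} [Field 𝕜] {U : Type*} [Fintype U] [LinearOrder U]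

/-- Vanishing of the relative homology of the pair `(Γ, Δ)` at faces of cardinality `c`, on the
level of chains. -/
def RelExactAt (𝕜 : Type*) [Field 𝕜] (Γ Δ : Set (Finset U)) (c : ℕ) : Prop :=
  ∀ z ∈ faceChains 𝕜 Γ c, bdryMap 𝕜 z ∈ chainsOn 𝕜 Δ →
    ∃ y ∈ faceChains 𝕜 Γ (c + 1), z - bdryMap 𝕜 y ∈ chainsOn 𝕜 Δ

/-- The relative homology of `(Γ, Δ)` at faces of cardinality `D` is one-dimensional, spanned by
the class of `z`. -/
structure IsRelGenerator (𝕜 : Type*) [Field 𝕜] (Γ Δ : Set (Finset U)) (D : ℕ)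
    (z : Finset U → 𝕜) : Prop where
  mem : z ∈ faceChains 𝕜 Γ D
  bdryMap_mem : bdryMap 𝕜 z ∈ chainsOn 𝕜 Δ
  sub_bdryMap_notMem : ∀ y ∈ faceChains 𝕜 Γ (D + 1), z - bdryMap 𝕜 y ∉ chainsOn 𝕜 Δ
  exists_smul : ∀ x ∈ faceChains 𝕜 Γ D, bdryMap 𝕜 x ∈ chainsOn 𝕜 Δ →
    ∃ t : 𝕜, ∃ y ∈ faceChains 𝕜 Γ (D + 1), x - t • z - bdryMap 𝕜 y ∈ chainsOn 𝕜 Δ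

/-- A pair `(Γ, Δ)` that looks homologically like a ball with facets of cardinality `D` and its
boundary sphere. Allowing `Δ = ∅` (then `Γ` looks like a sphere) and asking for deletions to be
relatively acyclic makes the notion pass to links of faces. -/
structure IsBallPair (𝕜 : Type*) [Field 𝕜] (Γ Δ : Set (Finset U)) (D : ℕ) : Prop where
  isComplex : IsComplex Γ
  isComplex_boundary : IsComplex Δ
  subset : Δ ⊆ Γ
  relExactAt_deletion : ∀ T ∈ Γ, T.Nonempty → ∀ c,
    RelExactAt 𝕜 (deletion Γ T) (deletion Δ T) c
  relExactAt : ∀ c, c ≠ D → RelExactAt 𝕜 Γ Δ c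
  exists_isRelGenerator : ∃ z, IsRelGenerator 𝕜 Γ Δ D z ∧
    (Δ.Nonempty → ∃ e, D = e + 1 ∧ IsChainSphere 𝕜 Δ e ∧ bdryMap 𝕜 z ≠ 0)

lemma relExactAt_empty_iff {Γ : Set (Finset U)} {c : ℕ} :
    RelExactAt 𝕜 Γ ∅ c ↔ ExactAt 𝕜 Γ c := by
  have hzero : ∀ f : Finset U → 𝕜, f ∈ chainsOn 𝕜 ∅ ↔ f = 0 := fun f ↦
    ⟨eq_zero_of_mem_chainsOn_empty, fun hf ↦ hf ▸ zero_mem _⟩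
  simp only [RelExactAt, ExactAt, hzero, sub_eq_zero]
  simp only [eq_comm]

section Link

variable {Γ Δ : Set (Finset U)} {v : U} {c : ℕ}

lemma RelExactAt.exists_linkChain_eq (hΓ : IsComplex Γ) (hΔ : IsComplex Δ)
    (h : RelExactAt 𝕜 (deletion Γ {v}) (deletion Δ {v}) c) {z : Finset U → 𝕜}
    (hz : z ∈ faceChains 𝕜 (link Γ {v}) c) (hz0 : bdryMap 𝕜 z ∈ chainsOn 𝕜 (link Δ {v})) :
    ∃ x ∈ faceChains 𝕜 Γ (c + 1), bdryMap 𝕜 x ∈ chainsOn 𝕜 Δ ∧ linkChain 𝕜 v x = z := by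
  obtain ⟨y, hy, hzy⟩ := h z (faceChains_mono (link_singleton_subset_deletion hΓ v) c hz)
    (chainsOn_mono (link_singleton_subset_deletion hΔ v) hz0)
  obtain ⟨hyΓ, hyv⟩ := mem_faceChains_deletion_iff.mp hy
  refine ⟨coneChain 𝕜 v z - y, sub_mem (coneChain_mem_faceChains hz) hyΓ, ?_, ?_⟩
  · have hbdry : bdryMap 𝕜 (coneChain 𝕜 v z - y) =
        (z - bdryMap 𝕜 y) - coneChain 𝕜 v (bdryMap 𝕜 z) := by
      rw [map_sub, eq_sub_of_add_eq (bdryMap_coneChain_add v z)]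
      abel
    rw [hbdry]
    exact sub_mem (chainsOn_mono (deletion_subset Δ _) hzy) (coneChain_mem_chainsOn_of_link hz0)
  · rw [map_sub, hyv, sub_zero, linkChain_coneChain_of_link (faceChains_le_chainsOn _ _ hz)]

lemma sub_bdryMap_neg_linkChain_mem {x y : Finset U → 𝕜} (h : x - bdryMap 𝕜 y ∈ chainsOn 𝕜 Δ) :
    linkChain 𝕜 v x - bdryMap 𝕜 (-linkChain 𝕜 v y) ∈ chainsOn 𝕜 (link Δ {v}) := by
  rw [map_neg, bdryMap_linkChain, neg_neg, ← map_sub]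
  exact linkChain_mem_chainsOn_link v h

lemma RelExactAt.link_singleton (hΓ : IsComplex Γ) (hΔ : IsComplex Δ)
    (hdel : RelExactAt 𝕜 (deletion Γ {v}) (deletion Δ {v}) c) (h : RelExactAt 𝕜 Γ Δ (c + 1)) :
    RelExactAt 𝕜 (link Γ {v}) (link Δ {v}) c := by
  intro z hz hz0
  obtain ⟨x, hx, hx0, rfl⟩ := hdel.exists_linkChain_eq hΓ hΔ hz hz0
  obtain ⟨y, hy, hxy⟩ := h x hx hx0
  exact ⟨-linkChain 𝕜 v y, neg_mem (linkChain_mem_faceChains v hy),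
    sub_bdryMap_neg_linkChain_mem hxy⟩

/- If the link part of `z` bounds relative to `link Δ {v}`, then subtracting cones over the
witnesses moves `z` into the deletion of `v`, where it bounds relative to `deletion Δ {v}`. -/
lemma RelExactAt.exists_sub_bdryMap_mem (hΓ : IsComplex Γ) (hΔ : IsComplex Δ)
    (hdel : RelExactAt 𝕜 (deletion Γ {v}) (deletion Δ {v}) (c + 1)) {z y : Finset U → 𝕜}
    (hz : z ∈ faceChains 𝕜 Γ (c + 1)) (hz0 : bdryMap 𝕜 z ∈ chainsOn 𝕜 Δ)
    (hy : y ∈ faceChains 𝕜 (link Γ {v}) (c + 1))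
    (hzy : linkChain 𝕜 v z - bdryMap 𝕜 y ∈ chainsOn 𝕜 (link Δ {v})) :
    ∃ y' ∈ faceChains 𝕜 Γ (c + 1 + 1), z - bdryMap 𝕜 y' ∈ chainsOn 𝕜 Δ := by
  set w := linkChain 𝕜 v z - bdryMap 𝕜 y with hw
  have hwΓ : w ∈ faceChains 𝕜 (link Γ {v}) c :=
    sub_mem (linkChain_mem_faceChains v hz) ((hΓ.link _).bdryMap_mem_faceChains hy)
  have hcw : coneChain 𝕜 v w ∈ chainsOn 𝕜 Δ := coneChain_mem_chainsOn_of_link hzy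
  set x := z + bdryMap 𝕜 (coneChain 𝕜 v y) - coneChain 𝕜 v w with hx
  have hxv : linkChain 𝕜 v x = 0 := by
    have hlink : linkChain 𝕜 v (bdryMap 𝕜 (coneChain 𝕜 v y)) = -bdryMap 𝕜 y := by
      rw [← linkChain_coneChain_of_link (faceChains_le_chainsOn _ _ hy), bdryMap_linkChain,
        neg_neg, linkChain_coneChain_of_link (faceChains_le_chainsOn _ _ hy)]
    rw [hx, map_sub, map_add, hlink,
      linkChain_coneChain_of_link (faceChains_le_chainsOn _ _ hwΓ), hw]
    abel
  have hxΓ : x ∈ faceChains 𝕜 Γ (c + 1) :=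
    sub_mem (add_mem hz (hΓ.bdryMap_mem_faceChains (coneChain_mem_faceChains hy)))
      (coneChain_mem_faceChains hwΓ)
  have hbx : bdryMap 𝕜 x ∈ chainsOn 𝕜 (deletion Δ {v}) := by
    refine mem_chainsOn_deletion_iff.mpr ⟨?_, ?_⟩
    · rw [hx, map_sub, map_add, bdryMap_bdryMap, add_zero]
      exact sub_mem hz0 (hΔ.bdryMap_mem_chainsOn hcw)
    · rw [← neg_eq_zero, ← bdryMap_linkChain, hxv, map_zero]
  obtain ⟨y', hy', hxy'⟩ := hdel x (mem_faceChains_deletion_iff.mpr ⟨hxΓ, hxv⟩) hbx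
  refine ⟨y' - coneChain 𝕜 v y,
    sub_mem (mem_faceChains_deletion_iff.mp hy').1 (coneChain_mem_faceChains hy), ?_⟩
  have hsplit : z - bdryMap 𝕜 (y' - coneChain 𝕜 v y) = (x - bdryMap 𝕜 y') + coneChain 𝕜 v w := by
    rw [map_sub, hx]
    abel
  rw [hsplit]
  exact add_mem (mem_chainsOn_deletion_iff.mp hxy').1 hcw

lemma IsRelGenerator.link_singleton (hΓ : IsComplex Γ) (hΔ : IsComplex Δ) {D : ℕ}
    (hdel : ∀ c, RelExactAt 𝕜 (deletion Γ {v}) (deletion Δ {v}) c) {z : Finset U → 𝕜}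
    (hz : IsRelGenerator 𝕜 Γ Δ (D + 1) z) :
    IsRelGenerator 𝕜 (link Γ {v}) (link Δ {v}) D (linkChain 𝕜 v z) where
  mem := linkChain_mem_faceChains v hz.mem
  bdryMap_mem := by
    rw [bdryMap_linkChain]
    exact neg_mem (linkChain_mem_chainsOn_link v hz.bdryMap_mem)
  sub_bdryMap_notMem y hy hzy :=
    have ⟨y', hy', hzy'⟩ :=
      (hdel (D + 1)).exists_sub_bdryMap_mem hΓ hΔ hz.mem hz.bdryMap_mem hy hzy
    hz.sub_bdryMap_notMem y' hy' hzy'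
  exists_smul x' hx' hx'0 := by
    obtain ⟨x, hx, hx0, rfl⟩ := (hdel D).exists_linkChain_eq hΓ hΔ hx' hx'0
    obtain ⟨t, y, hy, hxy⟩ := hz.exists_smul x hx hx0
    refine ⟨t, -linkChain 𝕜 v y, neg_mem (linkChain_mem_faceChains v hy), ?_⟩
    rw [← map_smul, ← map_sub]
    exact sub_bdryMap_neg_linkChain_mem hxy

end Link

namespace IsBallPair

variable {Γ Δ : Set (Finset U)} {D : ℕ}

lemma pos (h : IsBallPair 𝕜 Γ Δ D) {v : U} (hv : {v} ∈ Γ) : 0 < D := by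
  rcases Nat.eq_zero_or_pos D with rfl | hD
  · obtain ⟨z, hz, -⟩ := h.exists_isRelGenerator
    have hzlink : z ∈ faceChains 𝕜 (_root_.link Γ {v}) 0 :=
      mem_faceChains_of_mem_chainsOn hz.mem fun G hG ↦ by
        rw [card_eq_zero.mp (hz.mem G hG).2]
        exact empty_mem_link.mpr hv
    refine absurd ?_ (hz.sub_bdryMap_notMem _ (coneChain_mem_faceChains hzlink))
    have hcone := bdryMap_coneChain_add v z
    rw [bdryMap_eq_zero_of_mem_faceChains_zero hz.mem, map_zero, add_zero] at hcone
    rw [hcone, sub_self]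
    exact zero_mem _
  · exact hD

protected lemma link_singleton (h : IsBallPair 𝕜 Γ Δ (D + 1)) {v : U} (hv : {v} ∈ Γ) :
    IsBallPair 𝕜 (link Γ {v}) (link Δ {v}) D where
  isComplex := h.isComplex.link _
  isComplex_boundary := h.isComplex_boundary.link _
  subset := link_mono h.subset _
  relExactAt_deletion T hT hTne c := by
    obtain ⟨hvT, hins⟩ := mem_link_singleton.mp hT
    rw [← link_deletion_singleton _ _ hvT, ← link_deletion_singleton _ _ hvT]
    refine RelExactAt.link_singleton (h.isComplex.deletion T) (h.isComplex_boundary.deletion T)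
      ?_ (h.relExactAt_deletion T (h.isComplex _ hins _ (subset_insert v T)) hTne _)
    rw [deletion_deletion_singleton, deletion_deletion_singleton]
    exact h.relExactAt_deletion _ hins (insert_nonempty v T) c
  relExactAt c hc := RelExactAt.link_singleton h.isComplex h.isComplex_boundary
    (h.relExactAt_deletion _ hv (singleton_nonempty v) c) (h.relExactAt _ (by lia))
  exists_isRelGenerator := by
    obtain ⟨z, hz, hsphere⟩ := h.exists_isRelGenerator
    refine ⟨linkChain 𝕜 v z, hz.link_singleton h.isComplex h.isComplex_boundary
      (h.relExactAt_deletion _ hv (singleton_nonempty v)), fun ⟨G, hG⟩ ↦ ?_⟩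
    have hvΔ : {v} ∈ Δ := h.isComplex_boundary _ hG.2 _ subset_union_left
    obtain ⟨e, he, hΔ, hz0⟩ := hsphere ⟨_, hvΔ⟩
    obtain rfl : D = e := Nat.succ_injective he
    obtain ⟨e, rfl⟩ : ∃ e, D = e + 1 :=
      Nat.exists_eq_add_of_le' (by simpa only [card_singleton] using hΔ.card_le _ hvΔ)
    refine ⟨e, rfl, hΔ.link_singleton hvΔ, ?_⟩
    have hcycle := hΔ.isFundamentalCycle_of_ne_zero (mem_faceChains_of_mem_chainsOn
      (h.isComplex.bdryMap_mem_faceChains hz.mem) hz.bdryMap_mem) (bdryMap_bdryMap z) hz0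
    rw [bdryMap_linkChain, neg_ne_zero]
    exact hΔ.linkChain_ne_zero hcycle hvΔ

protected lemma link (h : IsBallPair 𝕜 Γ Δ D) {F : Finset U} (hF : F ∈ Γ) :
    ∃ e, D = e + #F ∧ IsBallPair 𝕜 (link Γ F) (link Δ F) e := by
  induction F using Finset.induction_on with
  | empty => exact ⟨D, by rw [card_empty, add_zero], by rwa [link_empty, link_empty]⟩
  | insert v F hv ih =>
    obtain ⟨e, rfl, hlink⟩ := ih (h.isComplex _ hF _ (subset_insert v F))
    have hdisj : Disjoint F {v} := disjoint_singleton_right.mpr hv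
    have hvΓ : {v} ∈ _root_.link Γ F := ⟨hdisj, by rwa [union_comm, ← insert_eq]⟩
    obtain ⟨e, rfl⟩ := Nat.exists_eq_add_of_le' (hlink.pos hvΓ)
    refine ⟨e, by rw [card_insert_of_notMem hv]; ring, ?_⟩
    rw [insert_eq, union_comm, ← link_link hdisj, ← link_link hdisj]
    exact hlink.link_singleton hvΓ

lemma exactAt_of_nonempty (h : IsBallPair 𝕜 Γ Δ D) (hne : Δ.Nonempty) (c : ℕ) :
    ExactAt 𝕜 Γ c := by
  obtain ⟨z, hz, hsphere⟩ := h.exists_isRelGenerator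
  obtain ⟨e, rfl, hΔ, hz0⟩ := hsphere hne
  intro x hx hx0
  have hxΔ : bdryMap 𝕜 x ∈ chainsOn 𝕜 Δ := hx0 ▸ zero_mem _
  rcases eq_or_ne c (e + 1) with rfl | hc
  · obtain ⟨t, y, hy, hxy⟩ := hz.exists_smul x hx hxΔ
    have hzero : x - t • z - bdryMap 𝕜 y = 0 :=
      eq_zero_of_mem_faceChains_of_card_lt hΔ.card_le e.lt_succ_self
        (mem_faceChains_of_mem_chainsOn (sub_mem (sub_mem hx (Submodule.smul_mem _ t hz.mem))
          (h.isComplex.bdryMap_mem_faceChains hy)) hxy)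
    have ht : t • bdryMap 𝕜 z = 0 := by
      simpa only [map_sub, map_smul, bdryMap_bdryMap, hx0, map_zero, sub_zero, zero_sub,
        neg_eq_zero] using congrArg (bdryMap 𝕜) hzero
    rw [(smul_eq_zero.mp ht).resolve_right hz0, zero_smul, sub_zero] at hzero
    exact ⟨y, hy, (sub_eq_zero.mp hzero).symm⟩
  obtain ⟨y, hy, hxy⟩ := h.relExactAt c hc x hx hxΔ
  have hxyΔ : x - bdryMap 𝕜 y ∈ faceChains 𝕜 Δ c := mem_faceChains_of_mem_chainsOn
    (sub_mem hx (h.isComplex.bdryMap_mem_faceChains hy)) hxy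
  have hcycle : bdryMap 𝕜 (x - bdryMap 𝕜 y) = 0 := by
    rw [map_sub, bdryMap_bdryMap, hx0, sub_zero]
  suffices ∃ w ∈ faceChains 𝕜 Γ (c + 1), bdryMap 𝕜 w = x - bdryMap 𝕜 y by
    obtain ⟨w, hw, hwx⟩ := this
    exact ⟨w + y, add_mem hw hy, by rw [map_add, hwx, sub_add_cancel]⟩
  rcases eq_or_ne c e with rfl | hce
  · have hfund := hΔ.isFundamentalCycle_of_ne_zero (mem_faceChains_of_mem_chainsOn
      (h.isComplex.bdryMap_mem_faceChains hz.mem) hz.bdryMap_mem) (bdryMap_bdryMap z) hz0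
    obtain ⟨t, ht⟩ := hfund.exists_smul _ hxyΔ hcycle
    exact ⟨t • z, Submodule.smul_mem _ t hz.mem, by rw [map_smul, ht]⟩
  · obtain ⟨w, hw, hwx⟩ := hΔ.exactAt hce _ hxyΔ hcycle
    exact ⟨w, faceChains_mono h.subset _ hw, hwx⟩

end IsBallPair

section OfSphere

variable {Γ Δ : Set (Finset U)} {d r : ℕ}

lemma relExactAt_of_exactAt (hΓ : IsComplex Γ) (hΔΓ : Δ ⊆ Γ) {q c : ℕ}
    (hΓΔ : ∀ F ∈ Γ, #F ≤ q → F ∈ Δ) (hexΓ : q < c → ExactAt 𝕜 Γ c)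
    (hexΔ : q < c → ExactAt 𝕜 Δ (c - 1)) : RelExactAt 𝕜 Γ Δ c := by
  intro z hz hz0
  rcases Nat.lt_or_ge q c with hc | hc
  · obtain ⟨c, rfl⟩ : ∃ c', c = c' + 1 := Nat.exists_eq_add_of_le' (Nat.zero_lt_of_lt hc)
    obtain ⟨x, hx, hxz⟩ := hexΔ hc _
      (mem_faceChains_of_mem_chainsOn (hΓ.bdryMap_mem_faceChains hz) hz0) (bdryMap_bdryMap z)
    obtain ⟨y, hy, hyz⟩ := hexΓ hc (z - x) (sub_mem hz (faceChains_mono hΔΓ _ hx))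
      (by rw [map_sub, hxz, sub_self])
    exact ⟨y, hy, by rw [hyz, sub_sub_cancel]; exact faceChains_le_chainsOn _ _ hx⟩
  · refine ⟨0, zero_mem _, fun G hG ↦ ?_⟩
    rw [map_zero, sub_zero] at hG
    exact hΓΔ G (hz G hG).1 ((hz G hG).2.trans_le hc)

lemma IsChainSphere.isRelGenerator (hΔ : IsChainSphere 𝕜 Δ d) (hΓ : IsComplex Γ)
    (hexΓ : ExactAt 𝕜 Γ (d + 1)) {z : Finset U → 𝕜} (hz : z ∈ faceChains 𝕜 Γ (d + 1))
    (hg : IsFundamentalCycle 𝕜 Δ d (bdryMap 𝕜 z)) : IsRelGenerator 𝕜 Γ Δ (d + 1) z where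
  mem := hz
  bdryMap_mem := faceChains_le_chainsOn _ _ hg.mem
  sub_bdryMap_notMem y hy hzy := by
    have hzero : z - bdryMap 𝕜 y = 0 :=
      eq_zero_of_mem_faceChains_of_card_lt hΔ.card_le d.lt_succ_self
        (mem_faceChains_of_mem_chainsOn (sub_mem hz (hΓ.bdryMap_mem_faceChains hy)) hzy)
    exact hg.ne_zero (by rw [sub_eq_zero.mp hzero, bdryMap_bdryMap])
  exists_smul x hx hx0 := by
    obtain ⟨t, ht⟩ := hg.exists_smul _
      (mem_faceChains_of_mem_chainsOn (hΓ.bdryMap_mem_faceChains hx) hx0) (bdryMap_bdryMap x)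
    obtain ⟨y, hy, hyx⟩ := hexΓ (x - t • z) (sub_mem hx (Submodule.smul_mem _ t hz))
      (by rw [map_sub, map_smul, ht, sub_self])
    exact ⟨t, y, hy, by rw [hyx, sub_self]; exact zero_mem _⟩

lemma IsChainSphere.isBallPair (hΔ : IsChainSphere 𝕜 Δ d) (hΓ : IsComplex Γ) (hΔΓ : Δ ⊆ Γ)
    (hr : 2 * r ≤ d + 1) (hL : ∀ T c, r ≤ c → ExactAt 𝕜 (deletion Γ T) c)
    (hΓΔ : ∀ F ∈ Γ, #F ≤ d - r + 1 → F ∈ Δ) : IsBallPair 𝕜 Γ Δ (d + 1) := by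
  have hexΓ : ∀ c, r ≤ c → ExactAt 𝕜 Γ c := fun c hc ↦ by simpa using hL ∅ c hc
  obtain ⟨g, hg⟩ := hΔ.exists_isFundamentalCycle
  obtain ⟨z, hz, rfl⟩ := hexΓ d (by lia) g (faceChains_mono hΔΓ _ hg.mem) hg.bdryMap_eq_zero
  refine ⟨hΓ, hΔ.isComplex, hΔΓ, fun T hT hTne c ↦ ?_, fun c hc ↦ ?_, z,
    hΔ.isRelGenerator hΓ (hexΓ _ (by lia)) hz hg, fun _ ↦ ⟨d, rfl, hΔ, hg.ne_zero⟩⟩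
  · exact relExactAt_of_exactAt (hΓ.deletion T) (deletion_mono hΔΓ T)
      (fun F hF hcard ↦ ⟨hΓΔ F hF.1 hcard, hF.2⟩) (fun hc ↦ hL T c (by lia)) fun hc ↦
      hΔ.exactAt_deletion hTne (fun F hF ↦ hΓΔ F (hΓ T hT F hF)) (by lia)
  · exact relExactAt_of_exactAt hΓ hΔΓ hΓΔ (fun hc ↦ hexΓ c (by lia))
      fun hc ↦ hΔ.exactAt (by lia)

end OfSphere

end BallPairs

/-! ### From chains to homology spheres and balls -/

section ReducedHomology

variable {𝕜 : Type*} [Field 𝕜] {U : Type*} [Fintype U] [LinearOrder U]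

lemma finrank_redH_eq_zero_iff {A : Set (Finset U)} {c : ℕ} :
    Module.finrank 𝕜 (redH 𝕜 A c) = 0 ↔ ExactAt 𝕜 A c := by
  have hquot : Module.finrank 𝕜 (redH 𝕜 A c) = Module.finrank 𝕜 (↥(redCycles 𝕜 A c) ⧸
      (redBdries 𝕜 A c).comap (redCycles 𝕜 A c).subtype) := rfl
  rw [hquot, Module.finrank_zero_iff, Submodule.Quotient.subsingleton_iff,
    Submodule.eq_top_iff']
  exact ⟨fun h z hz hz0 ↦ h ⟨z, hz, hz0⟩, fun h ⟨z, hz, hz0⟩ ↦ h z hz hz0⟩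

lemma IsRelGenerator.finrank_redH_eq_one {A : Set (Finset U)} {c : ℕ} {z : Finset U → 𝕜}
    (hz : IsRelGenerator 𝕜 A ∅ c z) : Module.finrank 𝕜 (redH 𝕜 A c) = 1 := by
  have hz0 : bdryMap 𝕜 z = 0 := eq_zero_of_mem_chainsOn_empty hz.bdryMap_mem
  refine finrank_eq_one (Submodule.Quotient.mk
    (⟨z, hz.mem, hz0⟩ : redCycles 𝕜 A c) : redH 𝕜 A c) (fun h ↦ ?_) fun w ↦ ?_
  · obtain ⟨y, hy, hyz⟩ := (Submodule.Quotient.mk_eq_zero _).mp h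
    refine hz.sub_bdryMap_notMem y hy ?_
    rw [show bdryMap 𝕜 y = z from hyz, sub_self]
    exact zero_mem _
  · obtain ⟨⟨x, hx, hx0⟩, rfl⟩ := Submodule.Quotient.mk_surjective _ w
    obtain ⟨t, y, hy, hxy⟩ := hz.exists_smul x hx ((show bdryMap 𝕜 x = 0 from hx0) ▸ zero_mem _)
    have hxt : x - t • z = bdryMap 𝕜 y := sub_eq_zero.mp (eq_zero_of_mem_chainsOn_empty hxy)
    exact ⟨t, Eq.symm <| (Submodule.Quotient.eq
      ((redBdries 𝕜 A c).comap (redCycles 𝕜 A c).subtype)).mpr ⟨y, hy, hxt.symm⟩⟩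

lemma exists_isFundamentalCycle_of_finrank_redH_eq_one {A : Set (Finset U)} {c : ℕ}
    (hA : ∀ F ∈ A, #F ≤ c) (h : Module.finrank 𝕜 (redH 𝕜 A c) = 1) :
    ∃ g, IsFundamentalCycle 𝕜 A c g := by
  obtain ⟨w, hw, hspan⟩ := finrank_eq_one_iff'.mp h
  obtain ⟨⟨g, hg, hg0⟩, rfl⟩ := Submodule.Quotient.mk_surjective _ w
  refine ⟨g, hg, hg0, ?_, fun z hz hz0 ↦ ?_⟩
  · rintro rfl
    exact hw ((Submodule.Quotient.mk_eq_zero _).mpr (zero_mem _))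
  · obtain ⟨t, ht⟩ := hspan (Submodule.Quotient.mk (⟨z, hz, hz0⟩ : redCycles 𝕜 A c))
    obtain ⟨y, hy, hyz⟩ := (Submodule.Quotient.eq _).mp ht.symm
    rw [eq_zero_of_mem_faceChains_of_card_lt hA c.lt_succ_self hy, map_zero] at hyz
    exact ⟨t, sub_eq_zero.mp hyz.symm⟩

lemma IsHomologySphere.isChainSphere {Δ : Set (Finset U)} {n : ℕ}
    (h : IsHomologySphere 𝕜 Δ n) : IsChainSphere 𝕜 Δ (n + 1) := by
  obtain ⟨hΔ, hcard, ⟨F₀, hF₀, -⟩, hlink⟩ := h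
  refine ⟨hΔ, hΔ F₀ hF₀ _ (empty_subset _), hcard, fun F hF c hc ↦ ?_, fun F hF ↦ ?_⟩
  · rw [← finrank_redH_eq_zero_iff, hlink F hF, if_neg hc]
  · refine exists_isFundamentalCycle_of_finrank_redH_eq_one
      (fun G hG ↦ card_le_of_mem_link hcard hG) ?_
    rw [hlink F hF, if_pos (Nat.sub_add_cancel (hcard F hF))]

namespace IsBallPair

variable {Γ Δ : Set (Finset U)} {d : ℕ}

lemma finrank_redH_link_of_mem (h : IsBallPair 𝕜 Γ Δ (d + 1)) {F : Finset U} (hF : F ∈ Δ)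
    (c : ℕ) : Module.finrank 𝕜 (redH 𝕜 (_root_.link Γ F) c) = 0 := by
  obtain ⟨e, -, hlink⟩ := h.link (h.subset hF)
  exact finrank_redH_eq_zero_iff.mpr (hlink.exactAt_of_nonempty ⟨∅, empty_mem_link.mpr hF⟩ c)

lemma finrank_redH_link_of_notMem (h : IsBallPair 𝕜 Γ Δ (d + 1)) {F : Finset U} (hF : F ∈ Γ)
    (hFΔ : F ∉ Δ) (c : ℕ) : Module.finrank 𝕜 (redH 𝕜 (_root_.link Γ F) c) =
      if c + #F = d + 1 then 1 else 0 := by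
  obtain ⟨e, he, hlink⟩ := h.link hF
  rw [link_eq_empty h.isComplex_boundary hFΔ] at hlink
  split_ifs with hc
  · obtain rfl : c = e := by lia
    obtain ⟨z, hz, -⟩ := hlink.exists_isRelGenerator
    exact hz.finrank_redH_eq_one
  · exact finrank_redH_eq_zero_iff.mpr (relExactAt_empty_iff.mp (hlink.relExactAt c (by lia)))

lemma bdryFaces_eq (h : IsBallPair 𝕜 Γ Δ (d + 1)) : bdryFaces 𝕜 Γ d = Δ := by
  ext F
  refine ⟨fun ⟨hF, hfin⟩ ↦ by_contra fun hFΔ ↦ ?_, fun hF ↦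
    ⟨h.subset hF, h.finrank_redH_link_of_mem hF _⟩⟩
  obtain ⟨e, he, -⟩ := h.link hF
  rw [h.finrank_redH_link_of_notMem hF hFΔ, if_pos (by lia)] at hfin
  exact one_ne_zero hfin

lemma isHomologyBall (h : IsBallPair 𝕜 Γ Δ (d + 1)) (hΔ : IsHomologySphere 𝕜 Δ (d - 1)) :
    IsHomologyBall 𝕜 Γ d := by
  refine ⟨h.isComplex, fun F hF ↦ ?_, ?_, fun F hF c ↦ ?_, by rwa [h.bdryFaces_eq]⟩
  · obtain ⟨e, he, -⟩ := h.link hF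
    lia
  · obtain ⟨z, hz, -⟩ := h.exists_isRelGenerator
    have hz0 : z ≠ 0 := by
      rintro rfl
      refine hz.sub_bdryMap_notMem 0 (zero_mem _) ?_
      rw [map_zero, sub_zero]
      exact zero_mem _
    obtain ⟨G, hG⟩ := Function.ne_iff.mp hz0
    exact ⟨G, hz.mem G hG⟩
  · by_cases hFΔ : F ∈ Δ
    · simp only [h.finrank_redH_link_of_mem hFΔ, zero_le, implies_true, and_self]
    · rw [h.finrank_redH_link_of_notMem hF hFΔ]
      split_ifs with hc <;> simp [hc]

end IsBallPair

end ReducedHomology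

/-! ### Homogeneous ideals of the polynomial ring -/

section HomogeneousIdeals

open MvPolynomial

attribute [local instance] MvPolynomial.gradedAlgebra

section CommRing

variable {R : Type*} [CommRing R] {U : Type*}

lemma homogeneousComponent_add_mul {s : MvPolynomial U R} {k : ℕ} (hs : s.IsHomogeneous k)
    (a : MvPolynomial U R) (n : ℕ) :
    homogeneousComponent (n + k) (a * s) = homogeneousComponent n a * s := by
  rw [← decomposition.decompose'_apply, ← decomposition.decompose'_apply]
  exact DirectSum.coe_decompose_mul_add_of_right_mem (homogeneousSubmodule U R) hs

lemma homogeneousComponent_mul_of_lt {s : MvPolynomial U R} {k n : ℕ} (hs : s.IsHomogeneous k)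
    (a : MvPolynomial U R) (hn : n < k) : homogeneousComponent n (a * s) = 0 := by
  rw [← decomposition.decompose'_apply]
  exact DirectSum.coe_decompose_mul_of_right_mem_of_not_le (homogeneousSubmodule U R) hs hn.not_ge

/-- The ideal `K` is generated by forms of degree at most `r`. -/
def IsGeneratedByFormsLE (r : ℕ) (K : Ideal (MvPolynomial U R)) : Prop :=
  ∃ S : Set (MvPolynomial U R), K = Ideal.span S ∧ ∀ s ∈ S, ∃ k ≤ r, s.IsHomogeneous k

lemma IsGeneratedByFormsLE.isHomogeneous {r : ℕ} {K : Ideal (MvPolynomial U R)}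
    (hK : IsGeneratedByFormsLE r K) : K.IsHomogeneous (homogeneousSubmodule U R) := by
  obtain ⟨S, rfl, hS⟩ := hK
  exact Ideal.homogeneous_span _ S fun s hs ↦ (hS s hs).imp fun _ h ↦ h.2

lemma IsGeneratedByFormsLE.sup_span_singleton {r : ℕ} {K : Ideal (MvPolynomial U R)}
    (hK : IsGeneratedByFormsLE r K) (hr : 1 ≤ r) {u : MvPolynomial U R}
    (hu : u.IsHomogeneous 1) : IsGeneratedByFormsLE r (K ⊔ Ideal.span {u}) := by
  obtain ⟨S, rfl, hS⟩ := hK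
  refine ⟨S ∪ {u}, (Ideal.span_union _ _).symm, ?_⟩
  rintro s (hs | rfl)
  exacts [hS s hs, ⟨1, hr, hu⟩]

lemma exists_sub_mul_mem_of_mem_sup_span {K : Ideal (MvPolynomial U R)}
    (hK : K.IsHomogeneous (homogeneousSubmodule U R)) {u x : MvPolynomial U R} {e : ℕ}
    (hu : u.IsHomogeneous 1) (hx : x ∈ K ⊔ Ideal.span {u}) (hxe : x.IsHomogeneous (e + 1)) :
    ∃ ξ : MvPolynomial U R, ξ.IsHomogeneous e ∧ x - u * ξ ∈ K := by
  obtain ⟨y, hy, z, hz, rfl⟩ := Submodule.mem_sup.mp hx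
  obtain ⟨c, rfl⟩ := Ideal.mem_span_singleton'.mp hz
  refine ⟨homogeneousComponent e c, homogeneousComponent_isHomogeneous _ _, ?_⟩
  rw [← homogeneousComponent_eq_self hxe, map_add, homogeneousComponent_add_mul hu, mul_comm u,
    add_sub_cancel_right]
  exact homogeneousComponent_mem_of_mem hK hy _

lemma mem_of_mem_sup_span_of_isHomogeneous_zero {K : Ideal (MvPolynomial U R)}
    (hK : K.IsHomogeneous (homogeneousSubmodule U R)) {u x : MvPolynomial U R}
    (hu : u.IsHomogeneous 1) (hx : x ∈ K ⊔ Ideal.span {u}) (hx0 : x.IsHomogeneous 0) :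
    x ∈ K := by
  obtain ⟨y, hy, z, hz, rfl⟩ := Submodule.mem_sup.mp hx
  obtain ⟨c, rfl⟩ := Ideal.mem_span_singleton'.mp hz
  rw [← homogeneousComponent_eq_self hx0, map_add, homogeneousComponent_mul_of_lt hu c one_pos,
    add_zero]
  exact homogeneousComponent_mem_of_mem hK hy _

lemma smul_isHomogeneous {b : MvPolynomial U R} {n : ℕ} (hb : b.IsHomogeneous n) (c : R) :
    (c • b).IsHomogeneous n := (homogeneousSubmodule U R n).smul_mem c hb

lemma pderiv_isHomogeneous {b : MvPolynomial U R} {n : ℕ} (hb : b.IsHomogeneous (n + 1))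
    (v : U) : (pderiv v b).IsHomogeneous n := hb.pderiv

lemma exists_eq_sum_smul_X_of_isHomogeneous_one [Fintype U] {u : MvPolynomial U R}
    (hu : u.IsHomogeneous 1) : ∃ a : U → R, ∑ v, a v • X v = u := by
  rwa [← mem_homogeneousSubmodule, homogeneousSubmodule_one_eq_span_X,
    Submodule.mem_span_range_iff_exists_fun] at hu

end CommRing

variable {𝕜 : Type*} [Field 𝕜] [CharZero 𝕜] {U : Type*} [Fintype U]

lemma sum_X_mul_inv_smul_pderiv {b : MvPolynomial U 𝕜} {n : ℕ} (hb : b.IsHomogeneous (n + 1)) :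
    ∑ v, X v * (((n + 1 : ℕ) : 𝕜)⁻¹ • pderiv v b) = b := by
  simp only [mul_smul_comm, ← smul_sum]
  rw [hb.sum_X_mul_pderiv, ← Nat.cast_smul_eq_nsmul 𝕜, smul_smul,
    inv_mul_cancel₀ (Nat.cast_ne_zero.mpr n.succ_ne_zero), one_smul]

lemma IsGeneratedByFormsLE.exists_eq_sum_X_mul {r e : ℕ} {K : Ideal (MvPolynomial U 𝕜)}
    (hK : IsGeneratedByFormsLE r K) (he : r ≤ e) {f : MvPolynomial U 𝕜} (hf : f ∈ K)
    (hfe : f.IsHomogeneous (e + 1)) :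
    ∃ g : U → MvPolynomial U 𝕜, (∀ v, g v ∈ K) ∧ (∀ v, (g v).IsHomogeneous e) ∧
      f = ∑ v, X v * g v := by
  obtain ⟨S, rfl, hS⟩ := hK
  rw [← homogeneousComponent_eq_self hfe]
  clear hfe
  induction hf using Submodule.closure_induction with
  | zero => exact ⟨0, fun _ ↦ zero_mem _, fun _ ↦ isHomogeneous_zero _ _ _, by simp⟩
  | add x y _ _ ihx ihy =>
    obtain ⟨g, hgK, hge, hg⟩ := ihx
    obtain ⟨g', hgK', hge', hg'⟩ := ihy
    refine ⟨g + g', fun v ↦ add_mem (hgK v) (hgK' v), fun v ↦ (hge v).add (hge' v), ?_⟩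
    simp only [map_add, hg, hg', Pi.add_apply, mul_add, sum_add_distrib]
  | smul_mem a s hs =>
    obtain ⟨k, hkr, hk⟩ := hS s hs
    obtain ⟨n, rfl⟩ := Nat.exists_eq_add_of_le' (hkr.trans he)
    have hb := homogeneousComponent_isHomogeneous (n + 1) a
    refine ⟨fun v ↦ (((n + 1 : ℕ) : 𝕜)⁻¹ • pderiv v (homogeneousComponent (n + 1) a)) * s,
      fun v ↦ Ideal.mul_mem_left _ _ (Ideal.subset_span hs),
      fun v ↦ (smul_isHomogeneous (pderiv_isHomogeneous hb v) _).mul hk, ?_⟩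
    rw [smul_eq_mul, add_right_comm, homogeneousComponent_add_mul hk]
    simp only [← mul_assoc]
    rw [← sum_mul, sum_X_mul_inv_smul_pderiv hb]

end HomogeneousIdeals

/-! ### The Koszul complex -/

section Koszul

open MvPolynomial

attribute [local instance] MvPolynomial.gradedAlgebra

variable {R : Type*} [CommRing R] {U : Type*}

/-- The Koszul chains (`Finset U → MvPolynomial U R`, read as elements of the exterior algebra on
`U` over the polynomial ring) all of whose coefficients are forms of degree `e`. -/
noncomputable def formChains (R : Type*) [CommRing R] {U : Type*} (e : ℕ) :
    Submodule R (Finset U → MvPolynomial U R) :=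
  Submodule.pi Set.univ fun _ ↦ homogeneousSubmodule U R e

/-- The Koszul chains all of whose coefficients lie in the ideal `K`. -/
noncomputable def chainsIn (K : Ideal (MvPolynomial U R)) :
    Submodule (MvPolynomial U R) (Finset U → MvPolynomial U R) :=
  Submodule.pi Set.univ fun _ ↦ K

lemma mem_formChains {f : Finset U → MvPolynomial U R} {e : ℕ} :
    f ∈ formChains R e ↔ ∀ G, (f G).IsHomogeneous e := by
  simp only [formChains, Submodule.mem_pi, Set.mem_univ, true_imp_iff, mem_homogeneousSubmodule]

lemma mem_chainsIn {K : Ideal (MvPolynomial U R)} {f : Finset U → MvPolynomial U R} :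
    f ∈ chainsIn K ↔ ∀ G, f G ∈ K := by
  simp only [chainsIn, Submodule.mem_pi, Set.mem_univ, true_imp_iff]

lemma chainsIn_mono {K L : Ideal (MvPolynomial U R)} (hKL : K ≤ L) : chainsIn K ≤ chainsIn L :=
  Submodule.pi_mono fun _ _ ↦ hKL

lemma exists_sub_smul_mem_chainsIn {K : Ideal (MvPolynomial U R)}
    (hK : K.IsHomogeneous (homogeneousSubmodule U R)) {u : MvPolynomial U R}
    (hu : u.IsHomogeneous 1) {e : ℕ} {f : Finset U → MvPolynomial U R}
    (hf : f ∈ formChains R (e + 1)) (hfK : f ∈ chainsIn (K ⊔ Ideal.span {u})) :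
    ∃ ξ ∈ formChains R e, f - u • ξ ∈ chainsIn K := by
  choose ξ hξ hfξ using fun G ↦ exists_sub_mul_mem_of_mem_sup_span hK hu
    (mem_chainsIn.mp hfK G) (mem_formChains.mp hf G)
  exact ⟨ξ, mem_formChains.mpr hξ, mem_chainsIn.mpr hfξ⟩

variable [LinearOrder U]

/-- The wedge product with the linear form `∑ v, a v • e_v`. -/
noncomputable def wedgeForm (a : U → R) :
    (Finset U → MvPolynomial U R) →ₗ[R] (Finset U → MvPolynomial U R) :=
  wedgeBy fun v ↦ a v • LinearMap.id

/-- The algebraic de Rham differential `∑ v, e_v ∧ ∂/∂X_v`. -/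
noncomputable def deRhamDiff (R : Type*) [CommRing R] {U : Type*} [LinearOrder U] :
    (Finset U → MvPolynomial U R) →ₗ[R] (Finset U → MvPolynomial U R) :=
  wedgeBy fun v ↦ (pderiv v).toLinearMap

lemma wedgeForm_apply (a : U → R) (f : Finset U → MvPolynomial U R) (G : Finset U) :
    wedgeForm a f G = ∑ v ∈ G, incSign R v (G.erase v) • (a v • f (G.erase v)) := rfl

lemma wedgeForm_mem_formChains {f : Finset U → MvPolynomial U R} {e : ℕ}
    (hf : f ∈ formChains R e) (a : U → R) : wedgeForm a f ∈ formChains R e :=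
  mem_formChains.mpr fun _ ↦ .sum _ _ _ fun v _ ↦
    smul_isHomogeneous (smul_isHomogeneous (mem_formChains.mp hf _) (a v)) _

lemma deRhamDiff_mem_formChains {f : Finset U → MvPolynomial U R} {e : ℕ}
    (hf : f ∈ formChains R (e + 1)) : deRhamDiff R f ∈ formChains R e :=
  mem_formChains.mpr fun _ ↦ .sum _ _ _ fun v _ ↦
    smul_isHomogeneous (pderiv_isHomogeneous (mem_formChains.mp hf _) v) _

lemma wedgeForm_mem_chainsIn {K : Ideal (MvPolynomial U R)} {f : Finset U → MvPolynomial U R}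
    (hf : f ∈ chainsIn K) (a : U → R) : wedgeForm a f ∈ chainsIn K :=
  mem_chainsIn.mpr fun _ ↦ sum_mem fun v _ ↦
    K.smul_of_tower_mem _ (K.smul_of_tower_mem (a v) (mem_chainsIn.mp hf _))

variable [Fintype U]

/-- The Koszul differential of the variables: contraction with `∑ v, X_v • e_v⋆`. -/
noncomputable def koszulDiff (R : Type*) [CommRing R] {U : Type*} [Fintype U] [LinearOrder U] :
    (Finset U → MvPolynomial U R) →ₗ[R] (Finset U → MvPolynomial U R) :=
  contractBy fun v ↦ LinearMap.mulLeft R (X v)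

lemma koszulDiff_apply (f : Finset U → MvPolynomial U R) (G : Finset U) :
    koszulDiff R f G = ∑ v ∈ Gᶜ, incSign R v G • (X v * f (insert v G)) := rfl

lemma koszulDiff_mem_formChains {f : Finset U → MvPolynomial U R} {e : ℕ}
    (hf : f ∈ formChains R e) : koszulDiff R f ∈ formChains R (e + 1) :=
  mem_formChains.mpr fun _ ↦ .sum _ _ _ fun v _ ↦ smul_isHomogeneous
    (add_comm 1 e ▸ (isHomogeneous_X R v).mul (mem_formChains.mp hf _)) _

lemma koszulDiff_mem_chainsIn {K : Ideal (MvPolynomial U R)} {f : Finset U → MvPolynomial U R}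
    (hf : f ∈ chainsIn K) : koszulDiff R f ∈ chainsIn K :=
  mem_chainsIn.mpr fun _ ↦ sum_mem fun _ _ ↦
    K.smul_of_tower_mem _ (K.mul_mem_left _ (mem_chainsIn.mp hf _))

lemma koszulDiff_smul (u : MvPolynomial U R) (f : Finset U → MvPolynomial U R) :
    koszulDiff R (u • f) = u • koszulDiff R f := by
  funext G
  simp only [koszulDiff_apply, Pi.smul_apply, smul_eq_mul, mul_sum, mul_smul_comm,
    mul_left_comm u]

lemma koszulDiff_koszulDiff (f : Finset U → MvPolynomial U R) :
    koszulDiff R (koszulDiff R f) = 0 :=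
  contractBy_contractBy_self (fun u v ↦ mul_left_comm (X u : MvPolynomial U R) (X v)) f

lemma koszulDiff_wedgeForm (a : U → R) (f : Finset U → MvPolynomial U R) :
    koszulDiff R (wedgeForm a f) =
      (∑ v, a v • X v : MvPolynomial U R) • f - wedgeForm a (koszulDiff R f) := by
  rw [eq_sub_iff_add_eq]
  funext G
  rw [koszulDiff, wedgeForm, Pi.add_apply,
    contractBy_wedgeBy_add_wedgeBy_contractBy fun u v x _ ↦
      map_smul (LinearMap.mulLeft R (X u)) (a v) x]
  simp only [LinearMap.smul_apply, LinearMap.id_apply, map_smul, LinearMap.mulLeft_apply]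
  rw [add_comm, sum_add_sum_compl, Pi.smul_apply, smul_eq_mul, sum_mul]
  simp only [smul_mul_assoc]

lemma koszulDiff_deRhamDiff_add {n : ℕ} {f : Finset U → MvPolynomial U R}
    (hf : f ∈ formChains R n) (G : Finset U) :
    koszulDiff R (deRhamDiff R f) G + deRhamDiff R (koszulDiff R f) G = (n + #G) • f G := by
  rw [koszulDiff, deRhamDiff, contractBy_wedgeBy_add_wedgeBy_contractBy fun u v x huv ↦ by
    simp [pderiv_X_of_ne huv]]
  simp only [Derivation.coeFn_coe, LinearMap.mulLeft_apply, Derivation.leibniz, smul_eq_mul,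
    pderiv_X_self, mul_one, sum_add_distrib, sum_const]
  rw [← add_assoc, add_comm (∑ v ∈ Gᶜ, _), sum_add_sum_compl,
    (mem_formChains.mp hf G).sum_X_mul_pderiv, add_smul]

end Koszul

/-! ### Exactness of Koszul complexes modulo linear forms -/

section KoszulExact

open MvPolynomial

attribute [local instance] MvPolynomial.gradedAlgebra

section OneChain

variable {R : Type*} [CommRing R] {U : Type*}

/-- The Koszul `1`-chain `∑ v, g v • e_v`. -/
noncomputable def oneChain (g : U → MvPolynomial U R) : Finset U → MvPolynomial U R :=
  fun G ↦ if #G = 1 then ∑ v ∈ G, g v else 0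

lemma oneChain_singleton (g : U → MvPolynomial U R) (v : U) : oneChain g {v} = g v := by
  simp [oneChain]

lemma oneChain_of_card_ne (g : U → MvPolynomial U R) {G : Finset U} (hG : #G ≠ 1) :
    oneChain g G = 0 := if_neg hG

lemma oneChain_mem_formChains {g : U → MvPolynomial U R} {e : ℕ}
    (hg : ∀ v, (g v).IsHomogeneous e) : oneChain g ∈ formChains R e := by
  refine mem_formChains.mpr fun G ↦ ?_
  rw [oneChain]
  split_ifs
  exacts [.sum _ _ _ fun v _ ↦ hg v, isHomogeneous_zero _ _ _]

lemma oneChain_mem_chainsIn {K : Ideal (MvPolynomial U R)} {g : U → MvPolynomial U R}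
    (hg : ∀ v, g v ∈ K) : oneChain g ∈ chainsIn K := by
  refine mem_chainsIn.mpr fun G ↦ ?_
  rw [oneChain]
  split_ifs
  exacts [sum_mem fun v _ ↦ hg v, zero_mem _]

variable [LinearOrder U]

lemma wedgeForm_single_empty (a : U → R) (m : MvPolynomial U R) :
    wedgeForm a (Pi.single ∅ m) = oneChain fun v ↦ a v • m := by
  funext G
  rw [wedgeForm_apply]
  by_cases hG : #G = 1
  · obtain ⟨v, rfl⟩ := card_eq_one.mp hG
    simp [oneChain_singleton, incSign]
  · rw [oneChain_of_card_ne _ hG]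
    refine sum_eq_zero fun v hv ↦ ?_
    have hne : G.erase v ≠ ∅ := fun h ↦ hG <| by
      rw [← card_erase_add_one hv, h, card_empty]
    rw [Pi.single_eq_of_ne hne, smul_zero, smul_zero]

variable [Fintype U]

lemma koszulDiff_oneChain (g : U → MvPolynomial U R) :
    koszulDiff R (oneChain g) = Pi.single ∅ (∑ v, X v * g v) := by
  funext G
  rw [koszulDiff_apply]
  rcases eq_or_ne G ∅ with rfl | hG
  · simp [incSign, oneChain_singleton]
  · rw [Pi.single_eq_of_ne hG]
    refine sum_eq_zero fun v hv ↦ ?_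
    have hcard : #(insert v G) ≠ 1 := by
      rw [card_insert_of_notMem (mem_compl.mp hv)]
      exact fun h ↦ hG (card_eq_zero.mp (Nat.succ_injective h))
    rw [oneChain_of_card_ne g hcard, mul_zero, smul_zero]

end OneChain

section Exactness

variable {R : Type*} [CommRing R] {U : Type*}

/-- Multiplication by `u` on the quotient of the polynomial ring by `K` is injective in degree
`n`. -/
def IsMulInjectiveAt (K : Ideal (MvPolynomial U R)) (u : MvPolynomial U R) (n : ℕ) : Prop :=
  ∀ m : MvPolynomial U R, m.IsHomogeneous n → u * m ∈ K → m ∈ K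

/-- The Koszul complex of the variables on the quotient of the polynomial ring by `K` is exact at
the chains with coefficients of degree at least `r`; the degree is `e + 1` because in degree `0` a
cycle need not be a boundary. -/
def KoszulExactFrom [Fintype U] [LinearOrder U] (r : ℕ) (K : Ideal (MvPolynomial U R)) : Prop :=
  ∀ e, r ≤ e + 1 → ∀ f ∈ formChains R (e + 1), koszulDiff R f ∈ chainsIn K →
    ∃ g ∈ formChains R e, f - koszulDiff R g ∈ chainsIn K

variable [Fintype U] [LinearOrder U]

lemma koszulExactFrom_of_forall_mem {r : ℕ} {K : Ideal (MvPolynomial U R)}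
    (hK : ∀ e, r ≤ e → ∀ f : MvPolynomial U R, f.IsHomogeneous e → f ∈ K) :
    KoszulExactFrom r K := fun e he f hf _ ↦
  ⟨0, zero_mem _, mem_chainsIn.mpr fun G ↦ by
    rw [map_zero, sub_zero]; exact hK _ he _ (mem_formChains.mp hf G)⟩

lemma KoszulExactFrom.of_sup_span {r : ℕ} {K : Ideal (MvPolynomial U R)}
    (hK : K.IsHomogeneous (homogeneousSubmodule U R)) {u : MvPolynomial U R}
    (hu : u.IsHomogeneous 1) (hE : KoszulExactFrom r (K ⊔ Ideal.span {u}))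
    (hinj : ∀ n, IsMulInjectiveAt K u n) : KoszulExactFrom r K := by
  intro e he f hf hfK
  obtain ⟨η, hη, hfη⟩ := hE e he f hf (chainsIn_mono le_sup_left hfK)
  obtain ⟨ξ, hξ, hfξ⟩ := exists_sub_smul_mem_chainsIn hK hu
    (sub_mem hf (koszulDiff_mem_formChains hη)) hfη
  have hξK : koszulDiff R ξ ∈ chainsIn K := by
    have huξ := sub_mem hfK (koszulDiff_mem_chainsIn hfξ)
    rw [map_sub, map_sub, koszulDiff_koszulDiff, sub_zero, koszulDiff_smul, sub_sub_cancel] at huξ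
    exact mem_chainsIn.mpr fun G ↦ hinj (e + 1) _
      (mem_formChains.mp (koszulDiff_mem_formChains hξ) G) (mem_chainsIn.mp huξ G)
  obtain ⟨a, rfl⟩ := exists_eq_sum_smul_X_of_isHomogeneous_one hu
  refine ⟨η + wedgeForm a ξ, add_mem hη (wedgeForm_mem_formChains hξ a), ?_⟩
  have hsplit : f - koszulDiff R (η + wedgeForm a ξ) =
      (f - koszulDiff R η - (∑ v, a v • X v : MvPolynomial U R) • ξ) +
        wedgeForm a (koszulDiff R ξ) := by
    rw [map_add, koszulDiff_wedgeForm]; abel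
  rw [hsplit]
  exact add_mem hfξ (wedgeForm_mem_chainsIn hξK a)

end Exactness

variable {𝕜 : Type*} [Field 𝕜] [CharZero 𝕜] {U : Type*} [Fintype U] [LinearOrder U]

lemma exists_koszulDiff_eq_oneChain {e : ℕ} {g : U → MvPolynomial U 𝕜}
    (hg : ∀ v, (g v).IsHomogeneous (e + 1)) (hg0 : ∑ v, X v * g v = 0) :
    ∃ τ ∈ formChains 𝕜 e, koszulDiff 𝕜 τ = oneChain g := by
  have hgc := oneChain_mem_formChains hg
  refine ⟨((e + 2 : ℕ) : 𝕜)⁻¹ • deRhamDiff 𝕜 (oneChain g),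
    Submodule.smul_mem _ _ (deRhamDiff_mem_formChains hgc), ?_⟩
  funext G
  have hG := koszulDiff_deRhamDiff_add hgc G
  rw [koszulDiff_oneChain, hg0, Pi.single_zero, map_zero, Pi.zero_apply, add_zero] at hG
  rw [map_smul, Pi.smul_apply, hG]
  by_cases hcard : #G = 1
  · rw [hcard, ← Nat.cast_smul_eq_nsmul 𝕜, smul_smul,
      inv_mul_cancel₀ (Nat.cast_ne_zero.mpr (e + 1).succ_ne_zero), one_smul]
  · rw [oneChain_of_card_ne _ hcard, smul_zero, smul_zero]

lemma IsGeneratedByFormsLE.exists_oneChain_sub_koszulDiff_mem {r e : ℕ}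
    {K : Ideal (MvPolynomial U 𝕜)} (hK : IsGeneratedByFormsLE r K) (he : r ≤ e + 1)
    {g : U → MvPolynomial U 𝕜} (hg : ∀ v, (g v).IsHomogeneous (e + 1))
    (hgK : ∑ v, X v * g v ∈ K) :
    ∃ τ ∈ formChains 𝕜 e, oneChain g - koszulDiff 𝕜 τ ∈ chainsIn K := by
  obtain ⟨g', hgK', hge', hsum⟩ := hK.exists_eq_sum_X_mul he hgK
    (.sum _ _ _ fun v _ ↦ add_comm 1 (e + 1) ▸ (isHomogeneous_X 𝕜 v).mul (hg v))
  obtain ⟨τ, hτ, hτg⟩ := exists_koszulDiff_eq_oneChain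
    (g := g - g') (fun v ↦ (hg v).sub (hge' v)) (by
      simp only [Pi.sub_apply, mul_sub, sum_sub_distrib, hsum, sub_self])
  refine ⟨τ, hτ, ?_⟩
  have hsub : oneChain g - koszulDiff 𝕜 τ = oneChain g' := by
    funext G
    rw [hτg, Pi.sub_apply]
    simp only [oneChain, Pi.sub_apply, sum_sub_distrib]
    split_ifs
    exacts [sub_sub_cancel _ _, sub_zero _]
  rw [hsub]
  exact oneChain_mem_chainsIn hgK'

/-- If `u * m ∈ K` then `u ∧ m` is a Koszul cycle modulo `K`, hence `∂ τ` modulo `K`. Writing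
`m = ∂ μ` for a `1`-chain `μ`, this makes `u ∧ μ + τ` a cycle modulo `K + (u)`, so it equals
`∂ ρ + u σ` modulo `K`. Applying `∂` gives `u (μ - ∂ σ) = 0` modulo `K`, and injectivity in the
degree of `μ` yields `m = ∂ (μ - ∂ σ) ∈ K`. -/
lemma IsMulInjectiveAt.succ {r q : ℕ} (hr : 1 ≤ r) (hq : r ≤ q) {K : Ideal (MvPolynomial U 𝕜)}
    (hK : IsGeneratedByFormsLE r K) {u : MvPolynomial U 𝕜} (hu : u.IsHomogeneous 1)
    (hE : KoszulExactFrom r (K ⊔ Ideal.span {u})) (hinj : IsMulInjectiveAt K u q) :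
    IsMulInjectiveAt K u (q + 1) := by
  intro m hm hum
  obtain ⟨p, rfl⟩ := Nat.exists_eq_add_of_le' (hr.trans hq)
  obtain ⟨a, ha⟩ := exists_eq_sum_smul_X_of_isHomogeneous_one hu
  set μ := oneChain fun v ↦ ((p + 1 + 1 : ℕ) : 𝕜)⁻¹ • pderiv v m
  have hμ : μ ∈ formChains 𝕜 (p + 1) :=
    oneChain_mem_formChains fun v ↦ smul_isHomogeneous (pderiv_isHomogeneous hm v) _
  have hμm : koszulDiff 𝕜 μ = Pi.single ∅ m := by
    rw [koszulDiff_oneChain, sum_X_mul_inv_smul_pderiv hm]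
  obtain ⟨τ, hτ, hτK⟩ := hK.exists_oneChain_sub_koszulDiff_mem (Nat.le_succ_of_le hq)
    (fun v ↦ smul_isHomogeneous hm (a v)) (by
      rwa [← ha, sum_mul, sum_congr rfl fun v _ ↦ smul_mul_assoc _ _ _,
        sum_congr rfl fun v _ ↦ (mul_smul_comm (a v) (X v) m).symm] at hum)
  have hcycle : koszulDiff 𝕜 (wedgeForm a μ + τ) =
      u • μ - (oneChain (fun v ↦ a v • m) - koszulDiff 𝕜 τ) := by
    rw [map_add, koszulDiff_wedgeForm, hμm, wedgeForm_single_empty, ha]; abel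
  have hchain := add_mem (wedgeForm_mem_formChains hμ a) hτ
  obtain ⟨ρ, hρ, hρK⟩ := hE p hq _ hchain <| by
    rw [hcycle]
    refine sub_mem (mem_chainsIn.mpr fun G ↦ ?_) (chainsIn_mono le_sup_left hτK)
    exact Ideal.mul_mem_right _ _ (Ideal.mem_sup_right (Ideal.mem_span_singleton_self u))
  obtain ⟨σ, hσ, hσK⟩ := exists_sub_smul_mem_chainsIn hK.isHomogeneous hu
    (sub_mem hchain (koszulDiff_mem_formChains hρ)) hρK
  have huμ : u • (μ - koszulDiff 𝕜 σ) ∈ chainsIn K := by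
    have hd := add_mem (koszulDiff_mem_chainsIn hσK) hτK
    rwa [map_sub, map_sub, koszulDiff_koszulDiff, sub_zero, hcycle, koszulDiff_smul,
      sub_right_comm, sub_add_cancel, ← smul_sub] at hd
  have hμσ : μ - koszulDiff 𝕜 σ ∈ chainsIn K := mem_chainsIn.mpr fun G ↦
    hinj _ (mem_formChains.mp (sub_mem hμ (koszulDiff_mem_formChains hσ)) G)
      (mem_chainsIn.mp huμ G)
  have hmK := mem_chainsIn.mp (koszulDiff_mem_chainsIn hμσ) ∅
  rwa [map_sub, koszulDiff_koszulDiff, sub_zero, hμm, Pi.single_eq_same] at hmK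

lemma KoszulExactFrom.of_sup_span_of_le {r : ℕ} (hr : 1 ≤ r) {K : Ideal (MvPolynomial U 𝕜)}
    (hK : IsGeneratedByFormsLE r K) {u : MvPolynomial U 𝕜} (hu : u.IsHomogeneous 1)
    (hE : KoszulExactFrom r (K ⊔ Ideal.span {u})) (hinj : ∀ n ≤ r, IsMulInjectiveAt K u n) :
    KoszulExactFrom r K := by
  refine hE.of_sup_span hK.isHomogeneous hu fun n ↦ ?_
  rcases le_total n r with hn | hn
  · exact hinj n hn
  · induction n, hn using Nat.le_induction with
    | base => exact hinj r le_rfl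
    | succ n hn ih => exact ih.succ hr hn hK hu hE

theorem koszulExactFrom_of_isMulInjectiveAt {r N : ℕ} (hr : 1 ≤ r)
    {K : ℕ → Ideal (MvPolynomial U 𝕜)} {u : ℕ → MvPolynomial U 𝕜}
    (hu : ∀ s < N, (u s).IsHomogeneous 1) (h0 : IsGeneratedByFormsLE r (K 0))
    (hK : ∀ s < N, K (s + 1) = K s ⊔ Ideal.span {u s})
    (hinj : ∀ s < N, ∀ n ≤ r, IsMulInjectiveAt (K s) (u s) n)
    (hN : ∀ e, r ≤ e → ∀ f : MvPolynomial U 𝕜, f.IsHomogeneous e → f ∈ K N) :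
    KoszulExactFrom r (K 0) := by
  have hgen : ∀ s ≤ N, IsGeneratedByFormsLE r (K s) := by
    intro s hs
    induction s with
    | zero => exact h0
    | succ s ih => exact hK s hs ▸ (ih (Nat.le_of_succ_le hs)).sup_span_singleton hr (hu s hs)
  refine Nat.decreasingInduction (motive := fun s _ ↦ KoszulExactFrom r (K s))
    (fun s hs ih ↦ ?_) (koszulExactFrom_of_forall_mem hN) (Nat.zero_le N)
  exact .of_sup_span_of_le hr (hgen s hs.le) (hu s hs) (hK s hs ▸ ih) (hinj s hs)

end KoszulExact

/-! ### From Koszul exactness to simplicial acyclicity -/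

section StanleyReisner

open MvPolynomial

section SquarefreeExponent

variable {U : Type*}

/-- The exponent vector of the squarefree monomial supported on `F`. -/
noncomputable def sqfreeExp (F : Finset U) : U →₀ ℕ := ∑ v ∈ F, Finsupp.single v 1

lemma prod_X_eq_monomial {R : Type*} [CommRing R] (F : Finset U) :
    ∏ v ∈ F, (X v : MvPolynomial U R) = monomial (sqfreeExp F) 1 :=
  (monomial_sum_one F _).symm

lemma degree_sqfreeExp (F : Finset U) : (sqfreeExp F).degree = #F := by
  simp [sqfreeExp, map_sum]

lemma sqfreeExp_apply [DecidableEq U] (F : Finset U) (v : U) :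
    sqfreeExp F v = if v ∈ F then 1 else 0 := by
  simp [sqfreeExp, Finsupp.finsetSum_apply, Finsupp.single_apply]

lemma support_sqfreeExp (F : Finset U) : (sqfreeExp F).support = F := by
  classical
  ext v; simp [sqfreeExp_apply]

lemma sqfreeExp_le_iff {F : Finset U} {m : U →₀ ℕ} : sqfreeExp F ≤ m ↔ F ⊆ m.support := by
  classical
  refine forall_congr' fun v ↦ ?_
  rw [sqfreeExp_apply, Finsupp.mem_support_iff]
  split_ifs with hv <;> simp [hv, Nat.one_le_iff_ne_zero]

lemma single_add_sqfreeExp_erase [DecidableEq U] {F : Finset U} {v : U} (hv : v ∈ F) :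
    Finsupp.single v 1 + sqfreeExp (F.erase v) = sqfreeExp F :=
  add_sum_erase F _ hv

end SquarefreeExponent

section FaceIdeal

variable {𝕜 : Type*} [Field 𝕜] {U : Type*}

lemma IsComplex.mem_SRideal_iff {Γ : Set (Finset U)} (hΓ : IsComplex Γ)
    {f : MvPolynomial U 𝕜} : f ∈ SRideal 𝕜 Γ ↔ ∀ m, coeff m f ≠ 0 → m.support ∉ Γ := by
  have hgen : {m : MvPolynomial U 𝕜 | ∃ F : Finset U, F ∉ Γ ∧ m = ∏ v ∈ F, X v} =
      (fun s ↦ monomial s (1 : 𝕜)) '' (sqfreeExp '' Γᶜ) := by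
    ext p
    simp only [Set.mem_ofPred_eq, Set.mem_image, Set.mem_compl_iff, exists_exists_and_eq_and,
      prod_X_eq_monomial, eq_comm (a := p)]
  rw [SRideal, hgen, mem_ideal_span_monomial_image]
  constructor
  · intro h m hm hmΓ
    obtain ⟨_, ⟨F, hF, rfl⟩, hle⟩ := h m (mem_support_iff.mpr hm)
    exact hF (hΓ _ hmΓ _ (sqfreeExp_le_iff.mp hle))
  · exact fun h m hm ↦
      ⟨_, ⟨m.support, h m (mem_support_iff.mp hm), rfl⟩, sqfreeExp_le_iff.mpr le_rfl⟩

lemma IsComplex.coeff_sqfreeExp_eq_zero {Γ : Set (Finset U)}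
    (hΓ : IsComplex Γ) {f : MvPolynomial U 𝕜} (hf : f ∈ SRideal 𝕜 Γ) {F : Finset U}
    (hF : F ∈ Γ) : coeff (sqfreeExp F) f = 0 :=
  by_contra fun h ↦ hΓ.mem_SRideal_iff.mp hf _ h (by rwa [support_sqfreeExp])

lemma IsComplex.monomial_sqfreeExp_mem_SRideal {Γ : Set (Finset U)}
    (hΓ : IsComplex Γ) {F : Finset U} (hF : F ∉ Γ) (c : 𝕜) :
    monomial (sqfreeExp F) c ∈ SRideal 𝕜 Γ :=
  hΓ.mem_SRideal_iff.mpr fun m hm hmΓ ↦ by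
    classical
    obtain ⟨rfl, -⟩ := ite_ne_right_iff.mp (coeff_monomial m (sqfreeExp F) c ▸ hm)
    exact hF (support_sqfreeExp F ▸ hmΓ)

end FaceIdeal

section Twist

variable {R : Type*} [CommRing R] {U : Type*} [LinearOrder U]

/-- The simplicial coboundary, adjoint to `bdryMap`. -/
def coboundary (R : Type*) [CommRing R] {U : Type*} [LinearOrder U] :
    (Finset U → R) →ₗ[R] (Finset U → R) :=
  wedgeBy fun _ ↦ LinearMap.id

lemma coboundary_apply (φ : Finset U → R) (H : Finset U) :
    coboundary R φ H = ∑ v ∈ H, incSign R v (H.erase v) * φ (H.erase v) := rfl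

/-- The sign relating the `F`-cochains of a simplex on `W` to Koszul chains indexed by
`W \ F`. -/
def signTwist (R : Type*) [CommRing R] {U : Type*} [LinearOrder U] (W F : Finset U) : R :=
  ∏ v ∈ F, incSign R v W

lemma signTwist_mul_self (W F : Finset U) : signTwist R W F * signTwist R W F = 1 := by
  simp only [signTwist, ← prod_mul_distrib, incSign_mul_self, prod_const_one]

lemma signTwist_erase (W : Finset U) {F : Finset U} {v : U} (hv : v ∈ F) :
    signTwist R W (F.erase v) = incSign R v W * signTwist R W F := by
  rw [signTwist, signTwist, ← mul_prod_erase F _ hv, ← mul_assoc, incSign_mul_self, one_mul]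

lemma incSign_sdiff {H W : Finset U} (hHW : H ⊆ W) (v : U) :
    incSign R v (W \ H) = incSign R v W * incSign R v (H.erase v) := by
  conv_rhs => rw [← sdiff_union_of_subset hHW]
  rw [incSign_union sdiff_disjoint, incSign_erase_self, mul_assoc, incSign_mul_self, mul_one]

lemma incSign_sdiff_mul_signTwist_erase {H W : Finset U} (hHW : H ⊆ W) {v : U} (hv : v ∈ H) :
    incSign R v (W \ H) * signTwist R W (H.erase v) =
      signTwist R W H * incSign R v (H.erase v) := by
  rw [incSign_sdiff hHW, signTwist_erase W hv, mul_mul_mul_comm, incSign_mul_self,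
    mul_comm (incSign R v _), ← mul_assoc, one_mul]

/-- The cochain `φ` of the simplex on `W` as a Koszul chain: its value on `F ⊆ W`
becomes the coefficient of the squarefree monomial on `F` at the index `W \ F`. -/
noncomputable def toKoszul (W : Finset U) (φ : Finset U → R) : Finset U → MvPolynomial U R :=
  fun G ↦ if G ⊆ W then
    monomial (sqfreeExp (W \ G)) (signTwist R W (W \ G) * φ (W \ G)) else 0

/-- The part of a Koszul chain in the multidegree of the squarefree monomial on `W`, as a cochain
of the simplex on `W`. -/
noncomputable def ofKoszul (W : Finset U) (g : Finset U → MvPolynomial U R) : Finset U → R :=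
  fun F ↦ signTwist R W F * coeff (sqfreeExp F) (g (W \ F))

lemma ofKoszul_toKoszul {F W : Finset U} (hFW : F ⊆ W) (φ : Finset U → R) :
    ofKoszul W (toKoszul W φ) F = φ F := by
  rw [ofKoszul, toKoszul, if_pos sdiff_subset, Finset.sdiff_sdiff_eq_self hFW, coeff_monomial,
    if_pos rfl, ← mul_assoc, signTwist_mul_self, one_mul]

lemma toKoszul_mem_formChains {W : Finset U} {φ : Finset U → R} {c : ℕ}
    (hφ : ∀ F, φ F ≠ 0 → #F = c) : toKoszul W φ ∈ formChains R c := by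
  refine mem_formChains.mpr fun G ↦ ?_
  rw [toKoszul]
  split_ifs
  · by_cases h0 : φ (W \ G) = 0
    · rw [h0, mul_zero, monomial_zero]
      exact isHomogeneous_zero _ _ _
    · exact isHomogeneous_monomial _ (by rw [degree_sqfreeExp, hφ _ h0])
  · exact isHomogeneous_zero _ _ _

variable [Fintype U]

lemma koszulDiff_toKoszul (W : Finset U) (φ : Finset U → R) :
    koszulDiff R (toKoszul W φ) = toKoszul W (coboundary R φ) := by
  funext G
  rw [koszulDiff_apply]
  by_cases hG : G ⊆ W
  · have hWG : W \ (W \ G) = G := Finset.sdiff_sdiff_eq_self hG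
    rw [toKoszul, if_pos hG, coboundary_apply, mul_sum, map_sum]
    refine (sum_subset (fun v hv ↦ mem_compl.mpr (mem_sdiff.mp hv).2) fun v hv hvW ↦ ?_).symm.trans
      (sum_congr rfl fun v hv ↦ ?_)
    · have hvW' : ¬ insert v G ⊆ W := fun h ↦
        hvW (mem_sdiff.mpr ⟨h (mem_insert_self v G), mem_compl.mp hv⟩)
      rw [toKoszul, if_neg hvW', mul_zero, smul_zero]
    · rw [toKoszul, if_pos (insert_subset (mem_sdiff.mp hv).1 hG), sdiff_insert, X, monomial_mul,
        smul_monomial, single_add_sqfreeExp_erase hv, one_mul, smul_eq_mul]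
      have hsign := incSign_sdiff_mul_signTwist_erase (R := R) (sdiff_subset (t := G)) hv
      rw [hWG] at hsign
      rw [← mul_assoc, hsign, mul_assoc]
  · rw [toKoszul, if_neg hG]
    refine sum_eq_zero fun v _ ↦ ?_
    rw [toKoszul, if_neg fun h ↦ hG ((subset_insert v G).trans h), mul_zero, smul_zero]

lemma ofKoszul_koszulDiff {F W : Finset U} (hFW : F ⊆ W) (g : Finset U → MvPolynomial U R) :
    ofKoszul W (koszulDiff R g) F = coboundary R (ofKoszul W g) F := by
  rw [ofKoszul, koszulDiff_apply, coeff_sum, coboundary_apply, mul_sum]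
  refine (sum_subset (fun v hv ↦ by simp [hv]) fun v _ hv ↦ ?_).symm.trans
    (sum_congr rfl fun v hv ↦ ?_)
  · rw [coeff_smul, coeff_X_mul', if_neg (by rwa [support_sqfreeExp]), smul_zero, mul_zero]
  · have hins : insert v (W \ F) = W \ F.erase v := (sdiff_erase (hFW hv)).symm
    rw [ofKoszul, coeff_smul, ← single_add_sqfreeExp_erase hv, coeff_X_mul, hins, smul_eq_mul,
      incSign_sdiff hFW, signTwist_erase W hv]
    ring

lemma sum_mul_coboundary (ζ ψ : Finset U → R) :
    ∑ F, ζ F * coboundary R ψ F =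
      ∑ G, (∑ v ∈ Gᶜ, incSign R v G * ζ (insert v G)) * ψ G := by
  simp only [coboundary_apply, mul_sum, sum_mul, sum_sigma']
  refine sum_bij' (fun x _ ↦ ⟨x.1.erase x.2, x.2⟩) (fun x _ ↦ ⟨insert x.2 x.1, x.2⟩)
    (by simp) (by simp) ?_ ?_ ?_ <;> rintro ⟨F, v⟩ h
  · simp [insert_erase (mem_sigma.mp h).2]
  · simp [erase_insert (mem_compl.mp (mem_sigma.mp h).2)]
  · rw [insert_erase (mem_sigma.mp h).2]
    ring

end Twist

section Duality

variable {𝕜 : Type*} [Field 𝕜] {U : Type*} [LinearOrder U] {Γ : Set (Finset U)} {r e : ℕ}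

lemma toKoszul_mem_chainsIn_SRideal (hΓ : IsComplex Γ) {W : Finset U} {φ : Finset U → 𝕜}
    (hφ : ∀ F ∈ Γ, F ⊆ W → φ F = 0) : toKoszul W φ ∈ chainsIn (SRideal 𝕜 Γ) := by
  refine mem_chainsIn.mpr fun G ↦ ?_
  rw [toKoszul]
  split_ifs
  · by_cases hF : W \ G ∈ Γ
    · rw [hφ _ hF sdiff_subset, mul_zero, monomial_zero]
      exact zero_mem _
    · exact hΓ.monomial_sqfreeExp_mem_SRideal hF _
  · exact zero_mem _

variable [Fintype U]

lemma KoszulExactFrom.exists_eq_coboundary (hP : KoszulExactFrom r (SRideal 𝕜 Γ))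
    (hΓ : IsComplex Γ) (hr : r ≤ e + 1) {W : Finset U} {φ : Finset U → 𝕜}
    (hφ : ∀ H ∈ Γ, H ⊆ W → #H = e + 2 → coboundary 𝕜 φ H = 0) :
    ∃ ψ, ∀ F ∈ Γ, F ⊆ W → #F = e + 1 → φ F = coboundary 𝕜 ψ F := by
  set φ' : Finset U → 𝕜 := fun F ↦ if #F = e + 1 then φ F else 0
  have hcocycle : ∀ H ∈ Γ, H ⊆ W → coboundary 𝕜 φ' H = 0 := fun H hH hHW ↦ by
    by_cases hc : #H = e + 2
    · rw [← hφ H hH hHW hc, coboundary_apply, coboundary_apply]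
      exact sum_congr rfl fun v hv ↦ congrArg _ (if_pos (by rw [card_erase_of_mem hv, hc]; rfl))
    · refine sum_eq_zero fun v hv ↦ ?_
      have hcard : #(H.erase v) ≠ e + 1 := fun h ↦ hc (by rw [← card_erase_add_one hv, h])
      exact (congrArg _ (if_neg hcard)).trans (mul_zero _)
  obtain ⟨g, -, hg⟩ := hP e hr (toKoszul W φ')
    (toKoszul_mem_formChains fun F hF ↦ (ite_ne_right_iff.mp hF).1)
    (koszulDiff_toKoszul W φ' ▸ toKoszul_mem_chainsIn_SRideal hΓ hcocycle)
  refine ⟨ofKoszul W g, fun F hF hFW hFc ↦ ?_⟩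
  have hcoeff := hΓ.coeff_sqfreeExp_eq_zero (mem_chainsIn.mp hg (W \ F)) hF
  rw [Pi.sub_apply, coeff_sub, sub_eq_zero] at hcoeff
  calc φ F = φ' F := (if_pos hFc).symm
    _ = ofKoszul W (toKoszul W φ') F := (ofKoszul_toKoszul hFW φ').symm
    _ = ofKoszul W (koszulDiff 𝕜 g) F := by rw [ofKoszul, hcoeff, ofKoszul]
    _ = coboundary 𝕜 (ofKoszul W g) F := ofKoszul_koszulDiff hFW g

lemma mem_deletion_iff {T F : Finset U} : F ∈ deletion Γ T ↔ F ∈ Γ ∧ F ⊆ Tᶜ := by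
  rw [subset_compl_iff_disjoint_left]
  rfl

-- A cycle that is not a boundary is detected by a cocycle, and cocycles are coboundaries.
theorem KoszulExactFrom.exactAt_deletion (hP : KoszulExactFrom r (SRideal 𝕜 Γ))
    (hΓ : IsComplex Γ) (hr : r ≤ e + 1) (T : Finset U) : ExactAt 𝕜 (deletion Γ T) (e + 1) := by
  intro ζ hζ hζ0
  by_contra hcon
  obtain ⟨ℓ, hℓζ, hℓ⟩ := Submodule.exists_le_ker_of_notMem
    (p := (faceChains 𝕜 (deletion Γ T) (e + 2)).map (bdryMap 𝕜)) hcon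
  set φ : Finset U → 𝕜 := fun F ↦ ℓ (Pi.single F 1) with hφ
  have hℓφ : ∀ x : Finset U → 𝕜, ℓ x = ∑ F, x F * φ F := fun x ↦ by
    conv_lhs => rw [pi_eq_sum_univ' x]
    simp [hφ]
  obtain ⟨ψ, hψ⟩ := hP.exists_eq_coboundary hΓ hr (W := Tᶜ) (φ := φ) fun H hH hHT hHc ↦ by
    have hsingle : Pi.single H (1 : 𝕜) ∈ faceChains 𝕜 (deletion Γ T) (e + 2) := fun G hG ↦ by
      obtain rfl : G = H := by_contra fun h ↦ hG (Pi.single_eq_of_ne h _)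
      exact ⟨mem_deletion_iff.mpr ⟨hH, hHT⟩, hHc⟩
    have hker : ℓ (bdryMap 𝕜 (Pi.single H 1)) = 0 := hℓ ⟨_, hsingle, rfl⟩
    simp only [hℓφ, bdryMap_apply, ← sum_mul_coboundary] at hker
    simpa [Pi.single_apply] using hker
  have hζφ : ∀ F, ζ F * φ F = ζ F * coboundary 𝕜 ψ F := fun F ↦ by
    by_cases hF : ζ F = 0
    · rw [hF, zero_mul, zero_mul]
    · obtain ⟨hFΓ, hFc⟩ := hζ F hF
      obtain ⟨hFΓ, hFT⟩ := mem_deletion_iff.mp hFΓ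
      rw [hψ F hFΓ hFT hFc]
  refine hℓζ ?_
  rw [hℓφ, sum_congr rfl fun F _ ↦ hζφ F, sum_mul_coboundary]
  refine sum_eq_zero fun G _ ↦ ?_
  rw [← bdryMap_apply, hζ0, Pi.zero_apply, zero_mul]

end Duality

end StanleyReisner

/-! ### Lefschetz sequences and passage to ideals generated in low degree -/

section LefschetzSequences

open MvPolynomial

attribute [local instance] MvPolynomial.gradedAlgebra

/-- The ideal `K + (u 0, …, u (s - 1))`. -/
def addForms {A : Type*} [CommRing A] (K : Ideal A) (u : ℕ → A) (s : ℕ) : Ideal A :=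
  K ⊔ Ideal.span (u '' Set.Iio s)

section AddForms

variable {A : Type*} [CommRing A] {I J : Ideal A} {u : ℕ → A}

lemma addForms_zero (K : Ideal A) (u : ℕ → A) : addForms K u 0 = K := by
  simp [addForms]

lemma addForms_succ (K : Ideal A) (u : ℕ → A) (s : ℕ) :
    addForms K u (s + 1) = addForms K u s ⊔ Ideal.span {u s} := by
  rw [addForms, addForms, ← Order.succ_eq_add_one, Order.Iio_succ_eq_insert,
    Set.image_insert_eq, Ideal.span_insert, sup_assoc, sup_comm (Ideal.span {u s})]

lemma addForms_mono (hJI : J ≤ I) (u : ℕ → A) (s : ℕ) : addForms J u s ≤ addForms I u s :=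
  sup_le_sup_right hJI _

lemma le_addForms (K : Ideal A) (u : ℕ → A) (s : ℕ) : K ≤ addForms K u s := le_sup_left

end AddForms

variable {R : Type*} [CommRing R] {U : Type*} {I J : Ideal (MvPolynomial U R)}
  {u : ℕ → MvPolynomial U R} {d r m : ℕ}

/-- Every form of degree at most `m` in `I` lies in `J`. -/
def IsLEUpTo (m : ℕ) (I J : Ideal (MvPolynomial U R)) : Prop :=
  ∀ n ≤ m, ∀ f : MvPolynomial U R, f.IsHomogeneous n → f ∈ I → f ∈ J

lemma isHomogeneous_addForms (hI : I.IsHomogeneous (homogeneousSubmodule U R))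
    (hu : ∀ s, (u s).IsHomogeneous 1) (s : ℕ) :
    (addForms I u s).IsHomogeneous (homogeneousSubmodule U R) :=
  hI.sup (Ideal.homogeneous_span _ _ (by rintro _ ⟨i, -, rfl⟩; exact ⟨1, hu i⟩))

lemma IsLEUpTo.addForms (h : IsLEUpTo m I J)
    (hI : I.IsHomogeneous (homogeneousSubmodule U R)) (hu : ∀ s, (u s).IsHomogeneous 1) (s : ℕ) :
    IsLEUpTo m (addForms I u s) (addForms J u s) := by
  induction s with
  | zero => rwa [addForms_zero, addForms_zero]
  | succ s ih =>
    rintro (_ | e) hn f hf hfI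
    · rw [addForms_succ] at hfI ⊢
      exact Ideal.mem_sup_left (ih 0 hn f hf
        (mem_of_mem_sup_span_of_isHomogeneous_zero (isHomogeneous_addForms hI hu s) (hu s) hfI hf))
    · rw [addForms_succ] at hfI ⊢
      obtain ⟨ξ, hξ, hfξ⟩ := exists_sub_mul_mem_of_mem_sup_span (isHomogeneous_addForms hI hu s)
        (hu s) hfI hf
      have hfξJ := ih (e + 1) hn _ (hf.sub (add_comm 1 e ▸ (hu s).mul hξ)) hfξ
      rw [← sub_add_cancel f (u s * ξ)]
      exact add_mem (Ideal.mem_sup_left hfξJ)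
        (Ideal.mem_sup_right (Ideal.mul_mem_right _ _ (Ideal.mem_span_singleton_self _)))

lemma mem_addForms_of_mem_addForms_succ (hI : I.IsHomogeneous (homogeneousSubmodule U R))
    (hJ : J.IsHomogeneous (homogeneousSubmodule U R)) (hJI : J ≤ I)
    (hu : ∀ s, (u s).IsHomogeneous 1) {e s : ℕ} (hIJ : IsLEUpTo e I J)
    (hinj : IsMulInjectiveAt (addForms I u s) (u s) e) {f : MvPolynomial U R}
    (hf : f.IsHomogeneous (e + 1)) (hfI : f ∈ I) (hfJ : f ∈ addForms J u (s + 1)) :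
    f ∈ addForms J u s := by
  rw [addForms_succ] at hfJ
  obtain ⟨ξ, hξ, hfξ⟩ := exists_sub_mul_mem_of_mem_sup_span (isHomogeneous_addForms hJ hu s)
    (hu s) hfJ hf
  have hmul : u s * ξ ∈ addForms I u s := by
    rw [← sub_sub_cancel f (u s * ξ)]
    exact sub_mem (le_addForms I u s hfI) (addForms_mono hJI u s hfξ)
  have hξJ := hIJ.addForms hI hu s e le_rfl ξ hξ (hinj ξ hξ hmul)
  rw [← sub_add_cancel f (u s * ξ)]
  exact add_mem hfξ (Ideal.mul_mem_left _ _ hξJ)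

/-- Linear forms `u 0, …, u d` of which the first `d` form a regular sequence modulo `I`, while
`u d` behaves like a Lefschetz element on the quotient by them: multiplication by it is injective
in degrees at most `d - r` and surjective onto degree `r`. -/
structure IsLefschetzSequence (I : Ideal (MvPolynomial U R)) (u : ℕ → MvPolynomial U R)
    (d r : ℕ) : Prop where
  isHomogeneous : ∀ s, (u s).IsHomogeneous 1
  regular : ∀ s < d, ∀ g, u s * g ∈ addForms I u s → g ∈ addForms I u s
  isMulInjectiveAt : ∀ n ≤ d - r, IsMulInjectiveAt (addForms I u d) (u d) n
  mem_of_isHomogeneous : ∀ f, f.IsHomogeneous r → f ∈ addForms I u (d + 1)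

lemma IsLefschetzSequence.isMulInjectiveAt_of_le (h : IsLefschetzSequence I u d r) {s n : ℕ}
    (hs : s ≤ d) (hn : n ≤ d - r) : IsMulInjectiveAt (addForms I u s) (u s) n := by
  rcases hs.lt_or_eq with hs | rfl
  exacts [fun g _ ↦ h.regular s hs g, h.isMulInjectiveAt n hn]

lemma IsLefschetzSequence.mem_of_mem_addForms (h : IsLefschetzSequence I u d r)
    (hI : I.IsHomogeneous (homogeneousSubmodule U R))
    (hJ : J.IsHomogeneous (homogeneousSubmodule U R)) (hJI : J ≤ I) {e : ℕ} (he : e ≤ d - r)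
    (hIJ : IsLEUpTo e I J) {f : MvPolynomial U R} (hf : f.IsHomogeneous (e + 1)) (hfI : f ∈ I) :
    f ∈ addForms J u (d + 1) → f ∈ J := by
  suffices ∀ s ≤ d + 1, f ∈ addForms J u s → f ∈ J from this _ le_rfl
  intro s
  induction s with
  | zero => exact fun _ hfJ ↦ by rwa [addForms_zero] at hfJ
  | succ s ih =>
    exact fun hs hfJ ↦ ih (Nat.le_of_succ_le hs) (mem_addForms_of_mem_addForms_succ hI hJ hJI
      h.isHomogeneous hIJ (h.isMulInjectiveAt_of_le (Nat.le_of_succ_le_succ hs) he) hf hfI hfJ)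

lemma degree_eq_of_coeff_ne_zero {f : MvPolynomial U R} {n : ℕ} (hf : f.IsHomogeneous n)
    {m : U →₀ ℕ} (hm : coeff m f ≠ 0) : m.degree = n :=
  (DFunLike.congr_fun (Finsupp.degree_eq_weight_one (R := ℕ)) m).trans (hf hm)

lemma mem_of_isHomogeneous_of_le (hJ : ∀ f : MvPolynomial U R, f.IsHomogeneous r → f ∈ J)
    {e : ℕ} (he : r ≤ e) : ∀ f : MvPolynomial U R, f.IsHomogeneous e → f ∈ J := by
  induction e, he using Nat.le_induction with
  | base => exact hJ
  | succ e _ ih =>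
    intro f hf
    rw [f.as_sum]
    refine sum_mem fun m hm ↦ ?_
    have hdeg : m.degree = e + 1 := degree_eq_of_coeff_ne_zero hf (mem_support_iff.mp hm)
    obtain ⟨v, hv⟩ : ∃ v, m v ≠ 0 := by
      by_contra! h
      rw [Finsupp.ext (g := 0) h, map_zero] at hdeg
      exact e.succ_ne_zero hdeg.symm
    have hm' : Finsupp.single v 1 + (m - Finsupp.single v 1) = m :=
      add_tsub_cancel_of_le (Finsupp.single_le_iff.mpr (Nat.one_le_iff_ne_zero.mpr hv))
    have hdeg' : (m - Finsupp.single v 1).degree = e := by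
      rw [← hm', map_add, Finsupp.degree_single, add_comm] at hdeg
      exact Nat.succ_injective hdeg
    rw [← hm', ← one_mul (coeff _ f), ← monomial_mul]
    exact Ideal.mul_mem_left _ _ (ih _ (isHomogeneous_monomial _ hdeg'))

lemma IsLefschetzSequence.mem_addForms_of_isHomogeneous (h : IsLefschetzSequence I u d r)
    (hI : I.IsHomogeneous (homogeneousSubmodule U R)) (hIJ : IsLEUpTo r I J) {e : ℕ}
    (he : r ≤ e) : ∀ f : MvPolynomial U R, f.IsHomogeneous e → f ∈ addForms J u (d + 1) :=
  mem_of_isHomogeneous_of_le (fun f hf ↦ hIJ.addForms hI h.isHomogeneous (d + 1) r le_rfl f hf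
    (h.mem_of_isHomogeneous f hf)) he

theorem IsLefschetzSequence.isLEUpTo (h : IsLefschetzSequence I u d r)
    (hI : I.IsHomogeneous (homogeneousSubmodule U R))
    (hJ : J.IsHomogeneous (homogeneousSubmodule U R)) (hJI : J ≤ I) (hIJ : IsLEUpTo r I J) :
    IsLEUpTo (d - r + 1) I J := by
  intro n
  induction n using Nat.strong_induction_on with
  | _ n ih =>
    intro hn f hf hfI
    rcases le_or_gt n r with hnr | hrn
    · exact hIJ n hnr f hf hfI
    · obtain ⟨e, rfl⟩ := Nat.exists_eq_add_of_le' (Nat.one_le_of_lt hrn)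
      exact h.mem_of_mem_addForms hI hJ hJI (Nat.le_of_succ_le_succ hn)
        (fun k hk ↦ ih k (Nat.lt_succ_of_le hk) (by omega)) hf hfI
        (h.mem_addForms_of_isHomogeneous hI hIJ hrn.le f hf)

theorem IsLefschetzSequence.koszulExactFrom {𝕜 : Type*} [Field 𝕜] [CharZero 𝕜] {U : Type*}
    [Fintype U] [LinearOrder U] {I J : Ideal (MvPolynomial U 𝕜)} {u : ℕ → MvPolynomial U 𝕜}
    (h : IsLefschetzSequence I u d r) (hr : 1 ≤ r) (hrd : 2 * r ≤ d)
    (hI : I.IsHomogeneous (homogeneousSubmodule U 𝕜)) (hJ : IsGeneratedByFormsLE r J)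
    (hJI : J ≤ I) (hIJ : IsLEUpTo r I J) :
    KoszulExactFrom r J := by
  rw [← addForms_zero J u] at hJ ⊢
  refine koszulExactFrom_of_isMulInjectiveAt (K := addForms J u) hr
    (fun s _ ↦ h.isHomogeneous s) hJ (fun s _ ↦ addForms_succ J u s) (fun s hs n hn m hm hum ↦ ?_)
    fun e ↦ h.mem_addForms_of_isHomogeneous hI hIJ
  exact hIJ.addForms hI h.isHomogeneous s n hn m hm <|
    h.isMulInjectiveAt_of_le (Nat.le_of_lt_succ hs) (by omega) m hm (addForms_mono hJI u s hum)

end LefschetzSequences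

section Skeleton

open MvPolynomial

attribute [local instance] MvPolynomial.gradedAlgebra

section Complex

variable {U : Type*} {Δ : Set (Finset U)}

lemma isComplex_skc (Δ : Set (Finset U)) (i : ℕ) : IsComplex (skc Δ i) :=
  fun _ hF _ hG H hH ↦ hF H (hH.trans hG)

lemma IsComplex.subset_skc (hΔ : IsComplex Δ) (i : ℕ) : Δ ⊆ skc Δ i :=
  fun F hF G hG _ ↦ hΔ F hF G hG

end Complex

variable {𝕜 : Type*} [Field 𝕜] {U : Type*} {Γ Δ : Set (Finset U)} {r d : ℕ}

lemma prod_X_isHomogeneous (F : Finset U) :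
    (∏ v ∈ F, (X v : MvPolynomial U 𝕜)).IsHomogeneous #F := by
  rw [prod_X_eq_monomial]
  exact isHomogeneous_monomial _ (degree_sqfreeExp F)

lemma SRideal_isHomogeneous (Γ : Set (Finset U)) :
    (SRideal 𝕜 Γ).IsHomogeneous (homogeneousSubmodule U 𝕜) :=
  Ideal.homogeneous_span _ _ (by rintro _ ⟨F, -, rfl⟩; exact ⟨#F, prod_X_isHomogeneous F⟩)

lemma SRideal_anti (h : Δ ⊆ Γ) : SRideal 𝕜 Γ ≤ SRideal 𝕜 Δ :=
  Ideal.span_mono fun _ ⟨F, hF, hm⟩ ↦ ⟨F, fun hFΔ ↦ hF (h hFΔ), hm⟩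

lemma card_support_le_degree (m : U →₀ ℕ) : #m.support ≤ m.degree := by
  rw [← degree_sqfreeExp]
  exact Finsupp.degree_mono (sqfreeExp_le_iff.mpr le_rfl)

lemma IsComplex.isLEUpTo_SRideal_skc (hΔ : IsComplex Δ) (i : ℕ) :
    IsLEUpTo (i + 1) (SRideal 𝕜 Δ) (SRideal 𝕜 (skc Δ i)) := by
  intro n hn f hf hfI
  refine (isComplex_skc Δ i).mem_SRideal_iff.mpr fun m hm hmΓ ↦ ?_
  refine hΔ.mem_SRideal_iff.mp hfI m hm (hmΓ _ le_rfl ?_)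
  exact (card_support_le_degree m).trans ((degree_eq_of_coeff_ne_zero hf hm).trans_le hn)

lemma isGeneratedByFormsLE_SRideal_skc (Δ : Set (Finset U)) (i : ℕ) :
    IsGeneratedByFormsLE (i + 1) (SRideal 𝕜 (skc Δ i)) := by
  classical
  refine ⟨{m | ∃ F : Finset U, #F ≤ i + 1 ∧ F ∉ Δ ∧ m = ∏ v ∈ F, X v},
    le_antisymm (Ideal.span_le.mpr ?_) (Ideal.span_mono ?_), ?_⟩
  · rintro _ ⟨F, hF, rfl⟩
    simp only [skc, Set.mem_ofPred_eq, not_forall] at hF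
    obtain ⟨G, hGF, hG, hGΔ⟩ := hF
    rw [← prod_sdiff hGF]
    exact Ideal.mul_mem_left _ _ (Ideal.subset_span ⟨G, hG, hGΔ, rfl⟩)
  · rintro _ ⟨F, hFc, hF, rfl⟩
    exact ⟨F, fun h ↦ hF (h F le_rfl hFc), rfl⟩
  · rintro _ ⟨F, hFc, -, rfl⟩
    exact ⟨#F, hFc, prod_X_isHomogeneous F⟩

variable {u : ℕ → MvPolynomial U 𝕜}

theorem IsLefschetzSequence.mem_of_mem_skc (h : IsLefschetzSequence (SRideal 𝕜 Δ) u d r)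
    (hΔ : IsComplex Δ) (hr : 1 ≤ r) {F : Finset U} (hF : F ∈ skc Δ (r - 1))
    (hFc : #F ≤ d - r + 1) : F ∈ Δ := by
  obtain ⟨i, rfl⟩ := Nat.exists_eq_add_of_le' hr
  classical
  by_contra hFΔ
  have hmem := h.isLEUpTo (SRideal_isHomogeneous Δ) (SRideal_isHomogeneous _)
    (SRideal_anti (hΔ.subset_skc i)) (hΔ.isLEUpTo_SRideal_skc i) #F hFc _
    (prod_X_isHomogeneous F) (Ideal.subset_span ⟨F, hFΔ, rfl⟩)
  have hcoeff := (isComplex_skc Δ i).coeff_sqfreeExp_eq_zero hmem hF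
  rw [prod_X_eq_monomial, coeff_monomial, if_pos rfl] at hcoeff
  exact one_ne_zero hcoeff

theorem IsLefschetzSequence.exactAt_deletion_skc [CharZero 𝕜] [Fintype U] [LinearOrder U]
    (h : IsLefschetzSequence (SRideal 𝕜 Δ) u d r) (hΔ : IsComplex Δ) (hr : 1 ≤ r)
    (hrd : 2 * r ≤ d) (T : Finset U) {c : ℕ} (hc : r ≤ c) :
    ExactAt 𝕜 (deletion (skc Δ (r - 1)) T) c := by
  obtain ⟨i, rfl⟩ := Nat.exists_eq_add_of_le' hr
  obtain ⟨e, rfl⟩ := Nat.exists_eq_add_of_le' (hr.trans hc)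
  exact (h.koszulExactFrom hr hrd (SRideal_isHomogeneous Δ) (isGeneratedByFormsLE_SRideal_skc Δ i)
    (SRideal_anti (hΔ.subset_skc i)) (hΔ.isLEUpTo_SRideal_skc i)).exactAt_deletion
      (isComplex_skc Δ i) hc T

end Skeleton

/-! ### The Dehn–Sommerville relations -/

section EulerCharacteristic

open Module

section LinearAlgebra

variable {𝕜 M N : Type*} [Field 𝕜] [AddCommGroup M] [Module 𝕜 M] [AddCommGroup N] [Module 𝕜 N]

lemma finrank_map_add_finrank_inf_ker (f : M →ₗ[𝕜] N) (p : Submodule 𝕜 M)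
    [FiniteDimensional 𝕜 p] :
    finrank 𝕜 (p.map f) + finrank 𝕜 (p ⊓ LinearMap.ker f : Submodule 𝕜 M) = finrank 𝕜 p := by
  rw [← LinearMap.finrank_range_add_finrank_ker (f.domRestrict p), LinearMap.range_domRestrict,
    LinearMap.ker_domRestrict, ← Submodule.map_comap_subtype, Submodule.finrank_map_subtype_eq]

end LinearAlgebra

variable {𝕜 : Type*} [Field 𝕜] {U : Type*}

lemma finrank_chainsOn [Finite U] (A : Set (Finset U)) :
    finrank 𝕜 (chainsOn 𝕜 A) = A.ncard := by
  classical
  have := Fintype.ofFinite U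
  have hker : chainsOn 𝕜 A =
      ⨅ F ∈ Aᶜ, LinearMap.ker (LinearMap.proj F : (Finset U → 𝕜) →ₗ[𝕜] 𝕜) := by
    ext f
    simp only [Submodule.mem_iInf, LinearMap.mem_ker, LinearMap.proj_apply, Set.mem_compl_iff]
    exact forall_congr' fun F ↦ not_imp_comm
  rw [hker, (LinearMap.iInfKerProjEquiv 𝕜 (fun _ ↦ 𝕜) disjoint_compl_right
    (Set.union_compl_self A).ge).finrank_eq, finrank_fintype_fun_eq_card,
    ← Nat.card_eq_fintype_card, Nat.card_coe_set_eq]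

variable [Fintype U] [LinearOrder U] {A : Set (Finset U)}

lemma IsComplex.finrank_redCycles (hA : IsComplex A) (c : ℕ) :
    finrank 𝕜 (redCycles 𝕜 A c) = finrank 𝕜 (redH 𝕜 A c) + finrank 𝕜 (redBdries 𝕜 A c) := by
  have hle : redBdries 𝕜 A c ≤ redCycles 𝕜 A c := by
    rintro _ ⟨y, hy, rfl⟩
    exact ⟨hA.bdryMap_mem_faceChains hy, bdryMap_bdryMap y⟩
  rw [← Submodule.finrank_quotient_add_finrank
    ((redBdries 𝕜 A c).comap (redCycles 𝕜 A c).subtype)]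
  congr 1
  rw [← Submodule.finrank_map_subtype_eq, Submodule.map_comap_subtype, inf_eq_right.mpr hle]

lemma numFacesCard_succ_eq_finrank (A : Set (Finset U)) (c : ℕ) :
    numFacesCard A (c + 1) =
      finrank 𝕜 (redBdries 𝕜 A c) + finrank 𝕜 (redCycles 𝕜 A (c + 1)) := by
  rw [numFacesCard, ← finrank_chainsOn (𝕜 := 𝕜), ← finrank_map_add_finrank_inf_ker (bdryMap 𝕜)]
  rfl

lemma numFacesCard_zero_eq_finrank (A : Set (Finset U)) :
    numFacesCard A 0 = finrank 𝕜 (redCycles 𝕜 A 0) := by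
  have heq : redCycles 𝕜 A 0 = chainsOn 𝕜 {F | F ∈ A ∧ #F = 0} := by
    refine inf_eq_left.mpr fun f hf ↦ funext fun G ↦ sum_eq_zero fun v _ ↦ ?_
    have hzero : f (insert v G) = 0 := by_contra fun h ↦
      insert_ne_empty v G (card_eq_zero.mp (hf _ h).2)
    rw [hzero, mul_zero]
  rw [numFacesCard, heq, finrank_chainsOn]

lemma IsComplex.sum_neg_one_pow_mul_numFacesCard (hA : IsComplex A) (m : ℕ) :
    ∑ c ∈ range (m + 1), (-1 : ℤ) ^ c * numFacesCard A c =
      ∑ c ∈ range (m + 1), (-1 : ℤ) ^ c * finrank 𝕜 (redH 𝕜 A c) +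
        (-1 : ℤ) ^ m * finrank 𝕜 (redBdries 𝕜 A m) := by
  induction m with
  | zero =>
    rw [sum_range_one, sum_range_one, numFacesCard_zero_eq_finrank (𝕜 := 𝕜), hA.finrank_redCycles]
    push_cast
    ring
  | succ m ih =>
    rw [sum_range_succ, ih, sum_range_succ _ (m + 1), numFacesCard_succ_eq_finrank (𝕜 := 𝕜),
      hA.finrank_redCycles]
    push_cast
    ring

end EulerCharacteristic

section FaceSums

variable {U : Type*} [Fintype U]

/-- The faces of `A`, as a finite set. -/
noncomputable def faceFinset (A : Set (Finset U)) : Finset (Finset U) := A.toFinite.toFinset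

lemma mem_faceFinset {A : Set (Finset U)} {F : Finset U} : F ∈ faceFinset A ↔ F ∈ A :=
  A.toFinite.mem_toFinset

lemma numFacesCard_eq_card_filter (A : Set (Finset U)) (c : ℕ) :
    numFacesCard A c = #{F ∈ faceFinset A | #F = c} := by
  rw [numFacesCard, ← Set.ncard_coe_finset]
  congr 1
  ext F
  simp [mem_faceFinset]

lemma sum_faceFinset {R : Type*} [CommRing R] (A : Set (Finset U)) (g : ℕ → R) {m : ℕ}
    (hA : ∀ F ∈ A, #F ≤ m) :
    ∑ F ∈ faceFinset A, g #F = ∑ c ∈ range (m + 1), g c * numFacesCard A c := by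
  rw [← sum_fiberwise_of_maps_to (t := range (m + 1)) (g := card) fun F hF ↦
    mem_range_succ_iff.mpr (hA F (mem_faceFinset.mp hF))]
  refine sum_congr rfl fun c _ ↦ ?_
  rw [sum_congr rfl fun F hF ↦ congrArg g (mem_filter.mp hF).2, sum_const, nsmul_eq_mul, mul_comm,
    numFacesCard_eq_card_filter]

variable [LinearOrder U] {𝕜 : Type*} [Field 𝕜] {Δ : Set (Finset U)} {n : ℕ}

lemma IsHomologySphere.sum_link (h : IsHomologySphere 𝕜 Δ n) {F : Finset U} (hF : F ∈ Δ) :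
    ∑ G ∈ faceFinset (link Δ F), (-1 : ℤ) ^ #G = (-1) ^ (n + 1 - #F) := by
  obtain ⟨hΔ, hcard, -, hlink⟩ := h
  have hL : ∀ G ∈ link Δ F, #G ≤ n + 1 - #F := fun G hG ↦ card_le_of_mem_link hcard hG
  have hbdries : redBdries 𝕜 (link Δ F) (n + 1 - #F) = ⊥ := by
    refine eq_bot_iff.mpr ?_
    rintro _ ⟨y, hy, rfl⟩
    rw [eq_zero_of_mem_faceChains_of_card_lt hL (Nat.lt_succ_self _) hy, map_zero]
    exact zero_mem _
  rw [sum_faceFinset _ (fun c ↦ (-1 : ℤ) ^ c) hL,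
    (hΔ.link F).sum_neg_one_pow_mul_numFacesCard (𝕜 := 𝕜), hbdries, finrank_bot, Nat.cast_zero,
    mul_zero, add_zero, sum_eq_single (n + 1 - #F)]
  · rw [hlink F hF, if_pos (Nat.sub_add_cancel (hcard F hF)), Nat.cast_one, mul_one]
  · intro c _ hc
    rw [hlink F hF, if_neg fun h ↦ hc (by omega), Nat.cast_zero, mul_zero]
  · exact fun h ↦ absurd (self_mem_range_succ _) h

lemma IsHomologySphere.sum_superset (h : IsHomologySphere 𝕜 Δ n) {F : Finset U} (hF : F ∈ Δ) :
    ∑ G ∈ faceFinset Δ with F ⊆ G, (-1 : ℤ) ^ (n + 1 - #G) = 1 := by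
  have hsign : ∀ G ∈ link Δ F,
      (-1 : ℤ) ^ (n + 1 - #(F ∪ G)) = (-1) ^ (n + 1 - #F) * (-1) ^ #G := by
    intro G hG
    have hc : #G ≤ n + 1 - #F := card_le_of_mem_link h.2.1 hG
    rw [card_union_of_disjoint hG.1, ← Nat.sub_sub, ← Nat.sub_add_cancel hc, pow_add, mul_assoc,
      ← mul_pow, Nat.add_sub_cancel]
    simp
  calc ∑ G ∈ faceFinset Δ with F ⊆ G, (-1 : ℤ) ^ (n + 1 - #G)
      = ∑ G ∈ faceFinset (link Δ F), (-1 : ℤ) ^ (n + 1 - #(F ∪ G)) := by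
        refine sum_bij' (fun G _ ↦ G \ F) (fun G _ ↦ F ∪ G) (fun G hG ↦ ?_) (fun G hG ↦ ?_)
          (fun G hG ↦ union_sdiff_of_subset (mem_filter.mp hG).2)
          (fun G hG ↦ union_sdiff_cancel_left (mem_faceFinset.mp hG).1)
          fun G hG ↦ by rw [union_sdiff_of_subset (mem_filter.mp hG).2]
        · obtain ⟨hGΔ, hFG⟩ := mem_filter.mp hG
          refine mem_faceFinset.mpr ⟨disjoint_sdiff, ?_⟩
          rwa [union_sdiff_of_subset hFG, ← mem_faceFinset]
        · exact mem_filter.mpr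
            ⟨mem_faceFinset.mpr (mem_faceFinset.mp hG).2, subset_union_left⟩
    _ = (-1) ^ (n + 1 - #F) * ∑ G ∈ faceFinset (link Δ F), (-1 : ℤ) ^ #G := by
        rw [mul_sum]
        exact sum_congr rfl fun G hG ↦ hsign G (mem_faceFinset.mp hG)
    _ = 1 := by rw [h.sum_link hF, ← mul_pow, neg_one_mul, neg_neg, one_pow]

end FaceSums

section DehnSommerville

open Polynomial

lemma coeff_X_sub_one_pow (m k : ℕ) :
    ((X - 1 : ℤ[X]) ^ m).coeff k = (-1) ^ (m - k) * m.choose k := by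
  simpa [sub_eq_add_neg] using coeff_X_add_C_pow (-1 : ℤ) m k

lemma coeff_one_sub_X_pow (m k : ℕ) :
    ((1 - X : ℤ[X]) ^ m).coeff k = (-1) ^ k * m.choose k := by
  rw [← neg_sub, neg_pow, ← C_1, ← C_neg, ← C_pow, coeff_C_mul, C_1, coeff_X_sub_one_pow,
    ← mul_assoc, ← pow_add]
  rcases le_or_gt k m with hk | hk
  · rw [show m + (m - k) = 2 * (m - k) + k by omega, pow_add, pow_mul, neg_one_sq, one_pow,
      one_mul]
  · rw [Nat.choose_eq_zero_of_lt hk, Nat.cast_zero, mul_zero, mul_zero]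

variable {U : Type*} [Fintype U]

/-- The `h`-polynomial of a `(d - 1)`-dimensional complex, with coefficients `hVec Δ d`. -/
noncomputable def hPolynomial (Δ : Set (Finset U)) (d : ℕ) : ℤ[X] :=
  ∑ F ∈ faceFinset Δ, X ^ #F * (1 - X) ^ (d - #F)

lemma coeff_hPolynomial (Δ : Set (Finset U)) (d i : ℕ) :
    (hPolynomial Δ d).coeff i = hVec Δ d i := by
  have hcoeff : ∀ F : Finset U, ((X : ℤ[X]) ^ #F * (1 - X) ^ (d - #F)).coeff i =
      if #F ≤ i then (-1 : ℤ) ^ (i - #F) * (d - #F).choose (i - #F) else 0 := fun F ↦ by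
    rw [coeff_X_pow_mul', coeff_one_sub_X_pow]
  have hsub : range (i + 1) ⊆ range (i + Fintype.card U + 1) :=
    range_subset_range.mpr (by omega)
  rw [hPolynomial, finsetSum_coeff, sum_congr rfl fun F _ ↦ hcoeff F,
    sum_faceFinset Δ (fun c ↦ if c ≤ i then (-1 : ℤ) ^ (i - c) * (d - c).choose (i - c) else 0)
      (fun F _ ↦ (card_le_univ F).trans (Nat.le_add_left _ i)), hVec, ← sum_subset hsub]
  · exact sum_congr rfl fun j hj ↦ by rw [if_pos (mem_range_succ_iff.mp hj)]
  · intro j _ hj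
    rw [if_neg fun h ↦ hj (mem_range_succ_iff.mpr h), zero_mul]

variable [LinearOrder U] {𝕜 : Type*} [Field 𝕜] {Δ : Set (Finset U)} {n : ℕ}

lemma IsHomologySphere.pow_mul_pow_eq_sum (h : IsHomologySphere 𝕜 Δ n) {F : Finset U}
    (hF : F ∈ Δ) : (X : ℤ[X]) ^ #F * (1 - X) ^ (n + 1 - #F) =
      ∑ G ∈ faceFinset Δ with F ⊆ G,
        X ^ #F * (1 - X) ^ (#G - #F) * (X - 1) ^ (n + 1 - #G) := by
  have hone : (1 : ℤ[X]) = ∑ G ∈ faceFinset Δ with F ⊆ G, (-1) ^ (n + 1 - #G) := by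
    simpa using (congrArg (C : ℤ → ℤ[X]) (h.sum_superset hF)).symm
  refine ((mul_one _).symm.trans (congrArg _ hone)).trans ?_
  rw [mul_sum]
  refine sum_congr rfl fun G hG ↦ ?_
  obtain ⟨hGΔ, hFG⟩ := mem_filter.mp hG
  have hFc := card_le_card hFG
  have hGc := h.2.1 G (mem_faceFinset.mp hGΔ)
  rw [show n + 1 - #F = (#G - #F) + (n + 1 - #G) by omega, pow_add, ← neg_sub 1 X,
    neg_pow (1 - X)]
  ring

-- Expand each term of `hPolynomial` by `pow_mul_pow_eq_sum` and sum over `F ⊆ G` first.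
lemma IsHomologySphere.hPolynomial_eq (h : IsHomologySphere 𝕜 Δ n) :
    hPolynomial Δ (n + 1) = ∑ G ∈ faceFinset Δ, (X - 1 : ℤ[X]) ^ (n + 1 - #G) := by
  have hpowerset : ∀ G ∈ faceFinset Δ, {F ∈ faceFinset Δ | F ⊆ G} = G.powerset := by
    intro G hG
    ext F
    rw [mem_filter, mem_faceFinset, mem_powerset, and_iff_right_iff_imp]
    exact h.1 G (mem_faceFinset.mp hG) F
  rw [hPolynomial, sum_congr rfl fun F hF ↦ h.pow_mul_pow_eq_sum (mem_faceFinset.mp hF)]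
  simp only [sum_filter]
  rw [sum_comm]
  refine sum_congr rfl fun G hG ↦ ?_
  rw [← sum_filter, ← sum_mul, hpowerset G hG, sum_pow_mul_eq_add_pow, add_sub_cancel, one_pow,
    one_mul]

theorem IsHomologySphere.hVec_sub (h : IsHomologySphere 𝕜 Δ n) {i : ℕ} (hi : i ≤ n + 1) :
    hVec Δ (n + 1) (n + 1 - i) = hVec Δ (n + 1) i := by
  conv_rhs => rw [← coeff_hPolynomial, h.hPolynomial_eq, finsetSum_coeff]
  rw [← coeff_hPolynomial, hPolynomial, finsetSum_coeff]
  refine sum_congr rfl fun G hG ↦ ?_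
  have hGc := h.2.1 G (mem_faceFinset.mp hG)
  rw [coeff_X_pow_mul', coeff_one_sub_X_pow, coeff_X_sub_one_pow]
  split_ifs with hc
  · rw [show n + 1 - i - #G = n + 1 - #G - i by omega, Nat.choose_symm (by omega)]
  · rw [Nat.choose_eq_zero_of_lt (by omega), Nat.cast_zero, mul_zero]

end DehnSommerville

/-! ### Hilbert series -/

section HilbertFunction

open MvPolynomial Module

attribute [local instance] MvPolynomial.gradedAlgebra

variable {𝕜 : Type*} [Field 𝕜] {U : Type*}

lemma mem_quotPiece {K : Ideal (MvPolynomial U 𝕜)} {n : ℕ} {x : MvPolynomial U 𝕜 ⧸ K} :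
    x ∈ quotPiece 𝕜 K n ↔ ∃ f : MvPolynomial U 𝕜, f.IsHomogeneous n ∧ Ideal.Quotient.mk K f = x :=
  Iff.rfl

instance finiteDimensional_quotPiece [Finite U] (K : Ideal (MvPolynomial U 𝕜)) (n : ℕ) :
    FiniteDimensional 𝕜 (quotPiece 𝕜 K n) :=
  Module.Finite.iff_fg.mpr ((homogeneousSubmodule_fg U 𝕜 n).map _)

lemma map_factor_quotPiece {K L : Ideal (MvPolynomial U 𝕜)} (hKL : K ≤ L) (n : ℕ) :
    (quotPiece 𝕜 K n).map (Ideal.Quotient.factorₐ 𝕜 hKL).toLinearMap = quotPiece 𝕜 L n := by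
  rw [quotPiece, ← Submodule.map_comp]
  rfl

lemma hilb_add_finrank_inf_ker_factor [Finite U] {K L : Ideal (MvPolynomial U 𝕜)} (hKL : K ≤ L)
    (n : ℕ) :
    hilb 𝕜 L n + finrank 𝕜 (quotPiece 𝕜 K n ⊓
      LinearMap.ker (Ideal.Quotient.factorₐ 𝕜 hKL).toLinearMap :
        Submodule 𝕜 (MvPolynomial U 𝕜 ⧸ K)) = hilb 𝕜 K n := by
  rw [hilb, hilb, ← map_factor_quotPiece hKL, finrank_map_add_finrank_inf_ker]

/-- Multiplication by the class of `u` on the quotient of the polynomial ring by `K`. -/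
noncomputable def mulQuot (K : Ideal (MvPolynomial U 𝕜)) (u : MvPolynomial U 𝕜) :
    (MvPolynomial U 𝕜 ⧸ K) →ₗ[𝕜] (MvPolynomial U 𝕜 ⧸ K) :=
  LinearMap.mulLeft 𝕜 (Ideal.Quotient.mk K u)

variable {K : Ideal (MvPolynomial U 𝕜)} {u : MvPolynomial U 𝕜} {n : ℕ}

lemma mulQuot_mk (f : MvPolynomial U 𝕜) :
    mulQuot K u (Ideal.Quotient.mk K f) = Ideal.Quotient.mk K (u * f) :=
  (map_mul _ _ _).symm

lemma map_mulQuot_quotPiece_le (hu : u.IsHomogeneous 1) (n : ℕ) :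
    (quotPiece 𝕜 K n).map (mulQuot K u) ≤ quotPiece 𝕜 K (n + 1) := by
  rintro _ ⟨_, ⟨f, hf, rfl⟩, rfl⟩
  exact mem_quotPiece.mpr ⟨u * f, add_comm 1 n ▸ hu.mul hf, (mulQuot_mk f).symm⟩

lemma mem_map_mulQuot_of_mem_sup_span (hK : K.IsHomogeneous (homogeneousSubmodule U 𝕜))
    (hu : u.IsHomogeneous 1) {f : MvPolynomial U 𝕜} (hf : f.IsHomogeneous (n + 1))
    (hfK : f ∈ K ⊔ Ideal.span {u}) :
    Ideal.Quotient.mk K f ∈ (quotPiece 𝕜 K n).map (mulQuot K u) := by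
  obtain ⟨ξ, hξ, hfξ⟩ := exists_sub_mul_mem_of_mem_sup_span hK hu hfK hf
  exact ⟨_, mem_quotPiece.mpr ⟨ξ, hξ, rfl⟩, (mulQuot_mk ξ).trans (Ideal.Quotient.eq.mpr hfξ).symm⟩

lemma isMulInjectiveAt_iff :
    IsMulInjectiveAt K u n ↔ quotPiece 𝕜 K n ⊓ LinearMap.ker (mulQuot K u) = ⊥ := by
  rw [Submodule.eq_bot_iff]
  refine ⟨?_, fun h f hf hmul ↦ ?_⟩
  · rintro h _ ⟨⟨f, hf, rfl⟩, hker⟩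
    exact Ideal.Quotient.eq_zero_iff_mem.mpr
      (h f hf (Ideal.Quotient.eq_zero_iff_mem.mp ((mulQuot_mk f).symm.trans hker)))
  · exact Ideal.Quotient.eq_zero_iff_mem.mp (h _ ⟨mem_quotPiece.mpr ⟨f, hf, rfl⟩,
      (mulQuot_mk f).trans (Ideal.Quotient.eq_zero_iff_mem.mpr hmul)⟩)

lemma IsMulInjectiveAt.finrank_map_mulQuot [Finite U] (h : IsMulInjectiveAt K u n) :
    finrank 𝕜 ((quotPiece 𝕜 K n).map (mulQuot K u)) = hilb 𝕜 K n := by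
  rw [hilb, ← finrank_map_add_finrank_inf_ker (mulQuot K u) (quotPiece 𝕜 K n),
    isMulInjectiveAt_iff.mp h, finrank_bot, add_zero]

lemma quotPiece_inf_ker_factor (hK : K.IsHomogeneous (homogeneousSubmodule U 𝕜))
    (hu : u.IsHomogeneous 1) (n : ℕ) :
    quotPiece 𝕜 K (n + 1) ⊓ LinearMap.ker (Ideal.Quotient.factorₐ 𝕜
      (le_sup_left : K ≤ K ⊔ Ideal.span {u})).toLinearMap =
        (quotPiece 𝕜 K n).map (mulQuot K u) := by
  refine le_antisymm ?_ (le_inf (map_mulQuot_quotPiece_le hu n) ?_)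
  · rintro _ ⟨⟨f, hf, rfl⟩, hker⟩
    exact mem_map_mulQuot_of_mem_sup_span hK hu hf (Ideal.Quotient.eq_zero_iff_mem.mp hker)
  · rintro _ ⟨_, ⟨f, -, rfl⟩, rfl⟩
    exact Ideal.Quotient.eq_zero_iff_mem.mpr
      (Ideal.mem_sup_right (Ideal.mul_mem_right f _ (Ideal.mem_span_singleton_self u)))

lemma IsMulInjectiveAt.hilb_add_hilb [Finite U] (h : IsMulInjectiveAt K u n)
    (hK : K.IsHomogeneous (homogeneousSubmodule U 𝕜)) (hu : u.IsHomogeneous 1) :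
    hilb 𝕜 (K ⊔ Ideal.span {u}) (n + 1) + hilb 𝕜 K n = hilb 𝕜 K (n + 1) := by
  rw [← h.finrank_map_mulQuot, ← quotPiece_inf_ker_factor hK hu, hilb_add_finrank_inf_ker_factor]

lemma hilb_sup_span_singleton_zero [Finite U] (hK : K.IsHomogeneous (homogeneousSubmodule U 𝕜))
    (hu : u.IsHomogeneous 1) : hilb 𝕜 (K ⊔ Ideal.span {u}) 0 = hilb 𝕜 K 0 := by
  have hker : quotPiece 𝕜 K 0 ⊓ LinearMap.ker (Ideal.Quotient.factorₐ 𝕜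
      (le_sup_left : K ≤ K ⊔ Ideal.span {u})).toLinearMap = ⊥ := by
    rw [Submodule.eq_bot_iff]
    rintro _ ⟨⟨f, hf, rfl⟩, hker⟩
    exact Ideal.Quotient.eq_zero_iff_mem.mpr (mem_of_mem_sup_span_of_isHomogeneous_zero hK hu
      (Ideal.Quotient.eq_zero_iff_mem.mp hker) hf)
  rw [← hilb_add_finrank_inf_ker_factor (le_sup_left : K ≤ K ⊔ Ideal.span {u}), hker, finrank_bot,
    add_zero]

end HilbertFunction

section FaceRingHilbertFunction

open MvPolynomial Module

variable {𝕜 : Type*} [Field 𝕜] {U : Type*} {Δ : Set (Finset U)}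

-- The monomials supported on faces of `Δ` form a basis of the face ring.
lemma IsComplex.map_mkₐ_restrictSupport (hΔ : IsComplex Δ) (n : ℕ) :
    (restrictSupport 𝕜 {m | m.degree = n ∧ m.support ∈ Δ}).map
      (Ideal.Quotient.mkₐ 𝕜 (SRideal 𝕜 Δ)).toLinearMap = quotPiece 𝕜 (SRideal 𝕜 Δ) n := by
  rw [quotPiece]
  have hspan : homogeneousSubmodule U 𝕜 n = restrictSupport 𝕜 {m | m.degree = n} :=
    homogeneousSubmodule_eq_finsupp_supported U 𝕜 n
  refine le_antisymm (Submodule.map_mono (hspan ▸ restrictSupport_mono _ fun m hm ↦ hm.1)) ?_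
  rw [hspan, restrictSupport_eq_span, Submodule.map_span, Submodule.span_le]
  rintro _ ⟨_, ⟨m, hm, rfl⟩, rfl⟩
  by_cases hmΔ : m.support ∈ Δ
  · exact ⟨_, (monomial_mem_restrictSupport 𝕜).mpr (Or.inl ⟨hm, hmΔ⟩), rfl⟩
  · have hmem : monomial m (1 : 𝕜) ∈ SRideal 𝕜 Δ := hΔ.mem_SRideal_iff.mpr fun m' hm' ↦ by
      classical
      obtain ⟨rfl, -⟩ := ite_ne_right_iff.mp (coeff_monomial m' m (1 : 𝕜) ▸ hm')
      exact hmΔ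
    exact ⟨0, zero_mem _, (Ideal.Quotient.eq_zero_iff_mem.mpr hmem).symm ▸ map_zero _⟩

lemma IsComplex.hilb_SRideal [Finite U] (hΔ : IsComplex Δ) (n : ℕ) :
    hilb 𝕜 (SRideal 𝕜 Δ) n = {m : U →₀ ℕ | m.degree = n ∧ m.support ∈ Δ}.ncard := by
  set S := {m : U →₀ ℕ | m.degree = n ∧ m.support ∈ Δ}
  have : Finite S := (Finsupp.finite_of_degree_le n).subset fun m hm ↦ hm.1.le
  have : FiniteDimensional 𝕜 (restrictSupport 𝕜 S) :=
    Module.Finite.of_basis (basisRestrictSupport 𝕜 S)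
  have hker : restrictSupport 𝕜 S ⊓
      LinearMap.ker (Ideal.Quotient.mkₐ 𝕜 (SRideal 𝕜 Δ)).toLinearMap = ⊥ := by
    rw [Submodule.eq_bot_iff]
    rintro f ⟨hfS, hf⟩
    ext m
    by_contra hm
    exact hΔ.mem_SRideal_iff.mp (Ideal.Quotient.eq_zero_iff_mem.mp hf) m hm
      (hfS (mem_support_iff.mpr hm)).2
  have hfinrank := finrank_map_add_finrank_inf_ker
    (Ideal.Quotient.mkₐ 𝕜 (SRideal 𝕜 Δ)).toLinearMap (restrictSupport 𝕜 S)
  rwa [hker, finrank_bot, add_zero, hΔ.map_mkₐ_restrictSupport,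
    finrank_eq_nat_card_basis (basisRestrictSupport 𝕜 S), Nat.card_coe_set_eq] at hfinrank

end FaceRingHilbertFunction

section HilbertSeries

open PowerSeries

attribute [local instance] MvPolynomial.gradedAlgebra

variable {𝕜 : Type*} [Field 𝕜] {U : Type*}

/-- The Hilbert series of the quotient of the polynomial ring by `K`. -/
noncomputable def hilbertSeries (K : Ideal (MvPolynomial U 𝕜)) : ℤ⟦X⟧ :=
  PowerSeries.mk fun n ↦ (hilb 𝕜 K n : ℤ)

lemma hilbertSeries_sup_span_singleton [Finite U] {K : Ideal (MvPolynomial U 𝕜)}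
    (hK : K.IsHomogeneous (MvPolynomial.homogeneousSubmodule U 𝕜)) {u : MvPolynomial U 𝕜}
    (hu : u.IsHomogeneous 1) (h : ∀ n, IsMulInjectiveAt K u n) :
    hilbertSeries (K ⊔ Ideal.span {u}) = (1 - X) * hilbertSeries K := by
  ext (_ | n)
  · simp [hilbertSeries, sub_mul, hilb_sup_span_singleton_zero hK hu]
  · rw [sub_mul, one_mul, map_sub, coeff_succ_X_mul]
    simp only [hilbertSeries, coeff_mk, ← (h n).hilb_add_hilb hK hu, Nat.cast_add,
      add_sub_cancel_right]

lemma hilbertSeries_addForms [Finite U] {I : Ideal (MvPolynomial U 𝕜)}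
    (hI : I.IsHomogeneous (MvPolynomial.homogeneousSubmodule U 𝕜)) {u : ℕ → MvPolynomial U 𝕜}
    (hu : ∀ s, (u s).IsHomogeneous 1) {d : ℕ}
    (hreg : ∀ s < d, ∀ g, u s * g ∈ addForms I u s → g ∈ addForms I u s) :
    hilbertSeries (addForms I u d) = (1 - X) ^ d * hilbertSeries I := by
  induction d with
  | zero => rw [addForms_zero, pow_zero, one_mul]
  | succ d ih =>
    rw [addForms_succ, hilbertSeries_sup_span_singleton (isHomogeneous_addForms hI hu d) (hu d)
      fun _ g _ ↦ hreg d d.lt_succ_self g, ih fun s hs ↦ hreg s (hs.trans d.lt_succ_self),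
      pow_succ', mul_assoc]

lemma coeff_X_mul_mk_one_pow_card (F : Finset U) (n : ℕ) :
    coeff n ((X * PowerSeries.mk 1 : ℤ⟦X⟧) ^ #F) =
      {m : U →₀ ℕ | m.degree = n ∧ m.support = F}.ncard := by
  classical
  have hcoeff : ∀ k, coeff k (X * PowerSeries.mk 1 : ℤ⟦X⟧) = if k ≠ 0 then 1 else 0 := by
    rintro (_ | k)
    · simp
    · simp [coeff_succ_X_mul]
  have hset : {m : U →₀ ℕ | m.degree = n ∧ m.support = F} =
      {m ∈ F.finsuppAntidiag n | ∀ v ∈ F, m v ≠ 0} := by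
    ext m
    rw [coe_filter, Set.mem_ofPred_eq, Set.mem_ofPred_eq, mem_finsuppAntidiag]
    refine ⟨?_, fun ⟨⟨hdeg, hsub⟩, hne⟩ ↦ ?_⟩
    · rintro ⟨hdeg, rfl⟩
      exact ⟨⟨hdeg, subset_rfl⟩, fun v ↦ Finsupp.mem_support_iff.mp⟩
    · obtain rfl : m.support = F := hsub.antisymm fun v hv ↦ Finsupp.mem_support_iff.mpr (hne v hv)
      exact ⟨hdeg, rfl⟩
  rw [hset, Set.ncard_coe_finset, ← prod_const, coeff_prod, card_filter, Nat.cast_sum]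
  refine sum_congr rfl fun m _ ↦ ?_
  simp only [hcoeff, prod_ite_zero, prod_const_one, Nat.cast_ite, Nat.cast_one, Nat.cast_zero]

variable {Δ : Set (Finset U)}

lemma IsComplex.hilbertSeries_SRideal [Fintype U] (hΔ : IsComplex Δ) :
    hilbertSeries (SRideal 𝕜 Δ) = ∑ F ∈ faceFinset Δ, (X * PowerSeries.mk 1) ^ #F := by
  classical
  ext n
  have hfin : {m : U →₀ ℕ | m.degree = n}.Finite :=
    (Finsupp.finite_of_degree_le n).subset fun m hm ↦ le_of_eq hm
  have hncard : ∀ (p : (U →₀ ℕ) → Prop) [DecidablePred p],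
      {m : U →₀ ℕ | m.degree = n ∧ p m}.ncard = #{m ∈ hfin.toFinset | p m} := fun p _ ↦ by
    rw [← Set.ncard_coe_finset, coe_filter]
    simp only [hfin.mem_toFinset, Set.mem_ofPred_eq]
  rw [map_sum, sum_congr rfl fun F _ ↦ coeff_X_mul_mk_one_pow_card F n, ← Nat.cast_sum,
    sum_congr rfl fun F _ ↦ hncard fun m ↦ m.support = F, hilbertSeries, coeff_mk,
    hΔ.hilb_SRideal, hncard fun m ↦ m.support ∈ Δ, sum_card_fiberwise_eq_card_filter]
  simp only [mem_faceFinset]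

lemma coe_hPolynomial [Fintype U] {d : ℕ} (hd : ∀ F ∈ Δ, #F ≤ d) :
    (hPolynomial Δ d : ℤ⟦X⟧) = (1 - X) ^ d * ∑ F ∈ faceFinset Δ, (X * PowerSeries.mk 1) ^ #F := by
  rw [hPolynomial, ← Polynomial.coeToPowerSeries.ringHom_apply, map_sum, mul_sum]
  refine sum_congr rfl fun F hF ↦ ?_
  have hF := hd F (mem_faceFinset.mp hF)
  simp only [map_mul, map_pow, map_sub, map_one, Polynomial.coeToPowerSeries.ringHom_apply,
    Polynomial.coe_X]
  calc (X ^ #F * (1 - X) ^ (d - #F) : ℤ⟦X⟧)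
      = (PowerSeries.mk 1 * (1 - X)) ^ #F * (X ^ #F * (1 - X) ^ (d - #F)) := by
        rw [mk_one_mul_one_sub_eq_one, one_pow, one_mul]
    _ = (1 - X) ^ (#F + (d - #F)) * (X * PowerSeries.mk 1) ^ #F := by
        rw [mul_pow, mul_pow, pow_add]
        ring
    _ = (1 - X) ^ d * (X * PowerSeries.mk 1) ^ #F := by rw [Nat.add_sub_cancel' hF]

theorem IsComplex.hilb_addForms_SRideal [Finite U] (hΔ : IsComplex Δ) {d : ℕ}
    (hd : ∀ F ∈ Δ, #F ≤ d) {u : ℕ → MvPolynomial U 𝕜} (hu : ∀ s, (u s).IsHomogeneous 1)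
    (hreg : ∀ s < d, ∀ g, u s * g ∈ addForms (SRideal 𝕜 Δ) u s → g ∈ addForms (SRideal 𝕜 Δ) u s)
    (n : ℕ) : (hilb 𝕜 (addForms (SRideal 𝕜 Δ) u d) n : ℤ) = hVec Δ d n := by
  have := Fintype.ofFinite U
  have hseries : hilbertSeries (addForms (SRideal 𝕜 Δ) u d) = hPolynomial Δ d := by
    rw [hilbertSeries_addForms (SRideal_isHomogeneous Δ) hu hreg, hΔ.hilbertSeries_SRideal,
      coe_hPolynomial hd]
  rw [← coeff_hPolynomial, ← Polynomial.coeff_coe, ← hseries, hilbertSeries, coeff_mk]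

end HilbertSeries

/-! ### The weak Lefschetz property -/

section MulSurjective

open MvPolynomial Module

attribute [local instance] MvPolynomial.gradedAlgebra

variable {𝕜 : Type*} [Field 𝕜] {U : Type*} {K : Ideal (MvPolynomial U 𝕜)} {w : MvPolynomial U 𝕜}
  {n : ℕ}

/-- Multiplication by `w` on the quotient of the polynomial ring by `K` maps degree `n` onto degree
`n + 1`. -/
def IsMulSurjectiveAt (K : Ideal (MvPolynomial U 𝕜)) (w : MvPolynomial U 𝕜) (n : ℕ) : Prop :=
  ∀ f : MvPolynomial U 𝕜, f.IsHomogeneous (n + 1) → f ∈ K ⊔ Ideal.span {w}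

lemma IsMulSurjectiveAt.mono (h : IsMulSurjectiveAt K w n) {m : ℕ} (hnm : n ≤ m) :
    IsMulSurjectiveAt K w m :=
  mem_of_isHomogeneous_of_le h (Nat.succ_le_succ hnm)

lemma isMulSurjectiveAt_iff (hK : K.IsHomogeneous (homogeneousSubmodule U 𝕜))
    (hw : w.IsHomogeneous 1) :
    IsMulSurjectiveAt K w n ↔ quotPiece 𝕜 K (n + 1) ≤ (quotPiece 𝕜 K n).map (mulQuot K w) := by
  refine ⟨?_, fun h f hf ↦ ?_⟩
  · rintro h _ ⟨f, hf, rfl⟩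
    exact mem_map_mulQuot_of_mem_sup_span hK hw hf (h f hf)
  · obtain ⟨_, ⟨g, -, rfl⟩, hfg⟩ := h (mem_quotPiece.mpr ⟨f, hf, rfl⟩)
    rw [← sub_add_cancel f (w * g)]
    exact add_mem (Ideal.mem_sup_left (Ideal.Quotient.eq.mp (hfg.symm.trans (mulQuot_mk g))))
      (Ideal.mem_sup_right (Ideal.mul_mem_right g _ (Ideal.mem_span_singleton_self w)))

variable [Finite U]

lemma IsMulSurjectiveAt.hilb_succ_add_finrank (h : IsMulSurjectiveAt K w n)
    (hK : K.IsHomogeneous (homogeneousSubmodule U 𝕜)) (hw : w.IsHomogeneous 1) :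
    hilb 𝕜 K (n + 1) + finrank 𝕜 (quotPiece 𝕜 K n ⊓ LinearMap.ker (mulQuot K w) :
      Submodule 𝕜 (MvPolynomial U 𝕜 ⧸ K)) = hilb 𝕜 K n := by
  rw [hilb, hilb, ← finrank_map_add_finrank_inf_ker (mulQuot K w) (quotPiece 𝕜 K n),
    ((isMulSurjectiveAt_iff hK hw).mp h).antisymm (map_mulQuot_quotPiece_le hw n)]

lemma IsMulSurjectiveAt.hilb_le_hilb (h : IsMulSurjectiveAt K w n)
    (hK : K.IsHomogeneous (homogeneousSubmodule U 𝕜)) (hw : w.IsHomogeneous 1) {i j : ℕ}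
    (hi : n ≤ i) (hij : i ≤ j) : hilb 𝕜 K j ≤ hilb 𝕜 K i := by
  induction j, hij using Nat.le_induction with
  | base => exact le_rfl
  | succ j hj ih =>
    exact (Nat.le.intro ((h.mono (hi.trans hj)).hilb_succ_add_finrank hK hw)).trans ih

lemma IsMulSurjectiveAt.isMulInjectiveAt (h : IsMulSurjectiveAt K w n)
    (hK : K.IsHomogeneous (homogeneousSubmodule U 𝕜)) (hw : w.IsHomogeneous 1)
    (hilb_eq : hilb 𝕜 K n = hilb 𝕜 K (n + 1)) : IsMulInjectiveAt K w n := by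
  have : FiniteDimensional 𝕜 (quotPiece 𝕜 K n ⊓ LinearMap.ker (mulQuot K w) :
      Submodule 𝕜 (MvPolynomial U 𝕜 ⧸ K)) := Submodule.finiteDimensional_inf_left _ _
  rw [isMulInjectiveAt_iff, ← Submodule.finrank_eq_zero (R := 𝕜)]
  exact Nat.add_eq_left.mp ((h.hilb_succ_add_finrank hK hw).trans hilb_eq)

lemma IsMulInjectiveAt.isMulSurjectiveAt (h : IsMulInjectiveAt K w n)
    (hK : K.IsHomogeneous (homogeneousSubmodule U 𝕜)) (hw : w.IsHomogeneous 1)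
    (hilb_eq : hilb 𝕜 K n = hilb 𝕜 K (n + 1)) : IsMulSurjectiveAt K w n :=
  (isMulSurjectiveAt_iff hK hw).mpr (Submodule.eq_of_le_of_finrank_eq
    (map_mulQuot_quotPiece_le hw n) (h.finrank_map_mulQuot.trans hilb_eq)).ge

-- From degree `n` on the Hilbert function decreases, so by symmetry it is constant on `[n, d - n]`.
lemma IsMulSurjectiveAt.isMulInjectiveAt_of_symmetric (h : IsMulSurjectiveAt K w n)
    (hK : K.IsHomogeneous (homogeneousSubmodule U 𝕜)) (hw : w.IsHomogeneous 1) {d : ℕ}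
    (hsymm : ∀ i ≤ d, hilb 𝕜 K (d - i) = hilb 𝕜 K i) {j : ℕ} (hnj : n ≤ j)
    (hjd : j + 1 ≤ d - n) : IsMulInjectiveAt K w j := by
  refine (h.mono hnj).isMulInjectiveAt hK hw (le_antisymm ?_ ?_)
  · calc hilb 𝕜 K j ≤ hilb 𝕜 K n := h.hilb_le_hilb hK hw le_rfl hnj
      _ = hilb 𝕜 K (d - n) := (hsymm n (by omega)).symm
      _ ≤ hilb 𝕜 K (j + 1) := h.hilb_le_hilb hK hw (hnj.trans j.le_succ) hjd
  · exact h.hilb_le_hilb hK hw hnj j.le_succ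

lemma isMulInjectiveAt_of_hilb_symmetric (hK : K.IsHomogeneous (homogeneousSubmodule U 𝕜))
    (hw : w.IsHomogeneous 1) {d : ℕ} (hsymm : ∀ i ≤ d, hilb 𝕜 K (d - i) = hilb 𝕜 K i)
    (h : IsMulSurjectiveAt K w n) (hn : 2 * n + 2 ≤ d) {j : ℕ}
    (hj : IsMulInjectiveAt K w j ∨ IsMulSurjectiveAt K w j) (hjd : j + 1 ≤ d - n) :
    IsMulInjectiveAt K w j := by
  rcases le_or_gt n j with hnj | hjn
  · exact h.isMulInjectiveAt_of_symmetric hK hw hsymm hnj hjd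
  · exact hj.elim id fun hj ↦ hj.isMulInjectiveAt_of_symmetric hK hw hsymm le_rfl (by omega)

end MulSurjective

section WeakLefschetz

open MvPolynomial

attribute [local instance] MvPolynomial.gradedAlgebra

/-- The sequence `θ 0, …, θ (d - 1), w, w, …`. -/
def extendBy {A : Type*} {d : ℕ} (θ : Fin d → A) (w : A) (s : ℕ) : A :=
  if h : s < d then θ ⟨s, h⟩ else w

lemma extendBy_of_lt {A : Type*} {d : ℕ} (θ : Fin d → A) (w : A) {s : ℕ} (h : s < d) :
    extendBy θ w s = θ ⟨s, h⟩ := dif_pos h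

lemma extendBy_self {A : Type*} {d : ℕ} (θ : Fin d → A) (w : A) : extendBy θ w d = w :=
  dif_neg (lt_irrefl d)

lemma addForms_extendBy {A : Type*} [CommRing A] (I : Ideal A) {d : ℕ} (θ : Fin d → A) (w : A)
    {s : ℕ} (hs : s ≤ d) :
    addForms I (extendBy θ w) s = I ⊔ Ideal.span (θ '' {j | (j : ℕ) < s}) := by
  rw [addForms]
  congr 2
  ext x
  constructor
  · rintro ⟨i, hi, rfl⟩
    exact ⟨⟨i, hi.trans_le hs⟩, hi, (extendBy_of_lt θ w _).symm⟩
  · rintro ⟨j, hj, rfl⟩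
    exact ⟨j, hj, extendBy_of_lt θ w j.isLt⟩

lemma addForms_extendBy_self {A : Type*} [CommRing A] (I : Ideal A) {d : ℕ} (θ : Fin d → A)
    (w : A) : addForms I (extendBy θ w) d = I ⊔ Ideal.span (Set.range θ) := by
  rw [addForms_extendBy I θ w le_rfl, ← Set.image_univ]
  congr 3
  exact Set.eq_univ_of_forall Fin.isLt

variable {𝕜 : Type*} [Field 𝕜] {U : Type*} {I K : Ideal (MvPolynomial U 𝕜)} {d : ℕ}

lemma HasWLP0.exists_isMulInjectiveAt_or_isMulSurjectiveAt (h : HasWLP0 𝕜 K)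
    (hK : K.IsHomogeneous (homogeneousSubmodule U 𝕜)) :
    ∃ w : MvPolynomial U 𝕜, w.IsHomogeneous 1 ∧
      ∀ n, IsMulInjectiveAt K w n ∨ IsMulSurjectiveAt K w n := by
  obtain ⟨w, hw, hwK⟩ := h
  refine ⟨w, hw, fun n ↦ (hwK n).imp (fun hinj f hf hmul ↦ ?_) fun hsurj ↦ ?_⟩
  · refine Ideal.Quotient.eq_zero_iff_mem.mp (hinj _ (mem_quotPiece.mpr ⟨f, hf, rfl⟩) ?_)
    rwa [← map_mul, Ideal.Quotient.eq_zero_iff_mem]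
  · exact (isMulSurjectiveAt_iff hK hw).mpr hsurj

lemma HasWLP.exists_forms (h : HasWLP 𝕜 I d)
    (hI : I.IsHomogeneous (homogeneousSubmodule U 𝕜)) :
    ∃ u : ℕ → MvPolynomial U 𝕜, (∀ s, (u s).IsHomogeneous 1) ∧
      (∀ s < d, ∀ g, u s * g ∈ addForms I u s → g ∈ addForms I u s) ∧
      ∀ n, IsMulInjectiveAt (addForms I u d) (u d) n ∨
        IsMulSurjectiveAt (addForms I u d) (u d) n := by
  obtain ⟨⟨-, hreg⟩, θ, hθ, hθI⟩ := h
  have hspan : (I ⊔ Ideal.span (Set.range θ)).IsHomogeneous (homogeneousSubmodule U 𝕜) :=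
    hI.sup (Ideal.homogeneous_span _ _ (by rintro _ ⟨i, rfl⟩; exact ⟨1, hθ.1 i⟩))
  obtain ⟨w, hw, hwI⟩ := hθI.exists_isMulInjectiveAt_or_isMulSurjectiveAt hspan
  refine ⟨extendBy θ w, fun s ↦ ?_, fun s hs g hg ↦ ?_, ?_⟩
  · rw [extendBy]
    split_ifs
    exacts [hθ.1 _, hw]
  · rw [addForms_extendBy I θ w hs.le] at hg ⊢
    rw [extendBy_of_lt θ w hs] at hg
    exact hreg θ hθ ⟨s, hs⟩ g hg
  · rwa [addForms_extendBy_self, extendBy_self]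

theorem HasWLP.exists_isLefschetzSequence [Fintype U] [LinearOrder U] {Δ : Set (Finset U)} {r : ℕ}
    (hwlp : HasWLP 𝕜 (SRideal 𝕜 Δ) d) (hΔ : IsHomologySphere 𝕜 Δ (d - 1)) (hr : 1 ≤ r)
    (hrd : 2 * r ≤ d) (hh : hVec Δ d (r - 1) = hVec Δ d r) :
    ∃ u, IsLefschetzSequence (SRideal 𝕜 Δ) u d r := by
  obtain ⟨u, hu, hreg, hor⟩ := hwlp.exists_forms (SRideal_isHomogeneous Δ)
  set K := addForms (SRideal 𝕜 Δ) u d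
  have hK := isHomogeneous_addForms (SRideal_isHomogeneous Δ) hu d
  have hd : d - 1 + 1 = d := by omega
  have hhilb : ∀ n, (hilb 𝕜 K n : ℤ) = hVec Δ d n :=
    hΔ.1.hilb_addForms_SRideal (fun F hF ↦ hd ▸ hΔ.2.1 F hF) hu hreg
  have hsymm : ∀ i ≤ d, hilb 𝕜 K (d - i) = hilb 𝕜 K i := fun i hi ↦ by
    have hDS := hΔ.hVec_sub (hi.trans_eq hd.symm)
    rw [hd, ← hhilb, ← hhilb] at hDS
    exact_mod_cast hDS
  have hilb_eq : hilb 𝕜 K (r - 1) = hilb 𝕜 K (r - 1 + 1) := by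
    rw [← hhilb, ← hhilb, ← Nat.sub_add_cancel hr] at hh
    exact_mod_cast hh
  have hsurj : IsMulSurjectiveAt K (u d) (r - 1) :=
    (hor (r - 1)).elim (fun h ↦ h.isMulSurjectiveAt hK (hu d) hilb_eq) id
  refine ⟨u, hu, hreg, fun n hn ↦ ?_, fun f hf ↦ ?_⟩
  · exact isMulInjectiveAt_of_hilb_symmetric hK (hu d) hsymm hsurj (by omega) (hor n) (by omega)
  · rw [addForms_succ]
    exact hsurj f (by rwa [Nat.sub_add_cancel hr])

end WeakLefschetz

/-- Suppose `char 𝕜 = 0` and let `Δ` be a homology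
`(d-1)`-sphere over `𝕜` having the weak Lefschetz property. If
`h_{r-1}(Δ) = h_r(Δ)` for some `r ≤ d/2`, then `Δ(r-1)` is a homology
`d`-ball over `𝕜` whose boundary complex equals `Δ`. -/
theorem skc_is_homology_ball_of_WLP_sphere
    (𝕜 : Type*) [Field 𝕜] [CharZero 𝕜] {V : Type*} [Fintype V] [LinearOrder V]
    (Δ : Set (Finset V)) (d r : ℕ)
    (hsphere : IsHomologySphere 𝕜 Δ (d - 1))
    (hwlp : HasWLP 𝕜 (SRideal 𝕜 Δ) d)
    (hr1 : 1 ≤ r) (hr2 : 2 * r ≤ d)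
    (hh : hVec Δ d (r - 1) = hVec Δ d r) :
    IsHomologyBall 𝕜 (skc Δ (r - 1)) d ∧
    bdryFaces 𝕜 (skc Δ (r - 1)) d = Δ := by
  obtain ⟨u, hu⟩ := hwlp.exists_isLefschetzSequence hsphere hr1 hr2 hh
  have hd : d - 1 + 1 = d := by omega
  have hball : IsBallPair 𝕜 (skc Δ (r - 1)) Δ (d + 1) := by
    rw [← hd]
    refine hsphere.isChainSphere.isBallPair (r := r) (isComplex_skc Δ (r - 1))
      (hsphere.1.subset_skc (r - 1)) (by omega)
      (fun T _ hc ↦ hu.exactAt_deletion_skc hsphere.1 hr1 hr2 T hc) ?_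
    rw [hd]
    exact fun F hF hFc ↦ hu.mem_of_mem_skc hsphere.1 hr1 hF hFc
  exact ⟨hball.isHomologyBall hsphere, hball.bdryFaces_eq⟩
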